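/- arXiv:1312.6023 — 11 statements merged into one kernel-verified Lean document; each statement's English description precedes it below -/
import Mathlib

section
/- Let A be a unital complex Banach algebra and let S = Σ_{i=1}^n M_{a_i,b_i} be an elementary operator on A. Suppose that S also admits a representation S = Σ_{i=1}^m M_{c_i,d_i}, where each c_i lies in span{a_1,…,a_n} and each d_i lies in span{b_1,…,b_n}. Then Σ_{i=1}^n b_i a_i − Σ_{i=1}^m d_i c_i belongs to rad(A). -/
open scoped ENNReal NNReal

/-- The Jacobson radical of a (possibly noncommutative) ring, as the Jacobson
radical of the zero ideal. -/
noncomputable def jacobsonRadical (A : Type*) [Ring A] : Ideal A :=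
  Ideal.jacobson (⊥ : Ideal A)

theorem aux_simple {A X ι : Type*} [Ring A] [AddCommGroup X] [Module A X] [IsSimpleModule A X]
    [Fintype ι] [DecidableEq ι] (u v : ι → A) (h : ∀ x : A, ∑ k, u k * x * v k = 0) (ξ : X) :
    ∑ k, v k • u k • ξ = 0 := by
  let N : Submodule A (ι → X) := Submodule.span A (Set.range fun η : X => fun k => v k • η)
  have hN : ∀ z ∈ N, ∀ x : A, ∑ k, u k • x • z k = 0 := by
    intro z hz
    induction hz using Submodule.span_induction with
    | mem z hz =>
      obtain ⟨η, rfl⟩ := hz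
      intro x
      have := congrArg (fun t : A => t • η) (h x)
      simpa [Finset.sum_smul, mul_smul] using this
    | zero => simp
    | add y z _ _ hy hz => intro x; simp [smul_add, Finset.sum_add_distrib, hy x, hz x]
    | smul r z _ hz => intro x; simpa [mul_smul] using hz (x * r)
  obtain ⟨Q, hQ⟩ := exists_isCompl N
  obtain ⟨p, hp1, hp2⟩ : ∃ p : (ι → X) →ₗ[A] (ι → X), (∀ z ∈ N, p z = 0) ∧
      ∀ z, z - p z ∈ N := by
    refine ⟨Q.subtype ∘ₗ Q.projectionOnto N hQ.symm, ?_, ?_⟩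
    · intro z hz
      have hk : z ∈ LinearMap.ker (Q.projectionOnto N hQ.symm) := by
        rw [Submodule.ker_projectionOnto]; exact hz
      rw [LinearMap.mem_ker] at hk
      simp [hk]
    · intro z
      have hk : z - (Q.subtype ∘ₗ Q.projectionOnto N hQ.symm) z ∈
          LinearMap.ker (Q.projectionOnto N hQ.symm) := by
        rw [LinearMap.mem_ker, map_sub, LinearMap.comp_apply, Submodule.subtype_apply, Submodule.projectionOnto_apply_left, sub_self]
      rw [Submodule.ker_projectionOnto] at hk
      exact hk
  have e1 : ∀ j (ζ : X), ∑ i, u i • p (Pi.single j ζ) i = u j • ζ := by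
    intro j ζ
    have := hN _ (hp2 (Pi.single j ζ)) 1
    simp only [one_smul, Pi.sub_apply, smul_sub, Finset.sum_sub_distrib, sub_eq_zero] at this
    rw [← this, Finset.sum_eq_single j]
    · simp
    · intro b _ hb; simp [Pi.single_eq_of_ne hb]
    · simp
  have e2 : ∀ (η : X) i, ∑ j, p (Pi.single j (v j • η)) i = 0 := by
    intro η i
    have : p (fun k => v k • η) i = 0 := congrFun (hp1 _ (Submodule.subset_span ⟨η, rfl⟩)) i
    rw [← Finset.univ_sum_single (fun k => v k • η), map_sum, Finset.sum_apply] at this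
    exact this
  have comm : ∀ (r : A) j i (ζ : X), r • p (Pi.single j ζ) i = p (Pi.single j (r • ζ)) i := by
    intro r j i ζ
    rw [Pi.single_smul, map_smul, Pi.smul_apply]
  calc ∑ k, v k • u k • ξ = ∑ j, ∑ i, p (Pi.single j (v j • u i • ξ)) i := by
        refine Finset.sum_congr rfl fun j _ => ?_
        rw [← e1 j ξ, Finset.smul_sum]
        simp_rw [comm]
    _ = 0 := by
        rw [Finset.sum_comm]
        exact Finset.sum_eq_zero fun i _ => e2 _ i

/-- **Lemma 2.1.** Let `A` be a unital complex Banach algebra and let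
`S = Σ_{i=1}^n M_{a_i,b_i}` be an elementary operator on `A`.  Suppose that `S`
also admits a representation `S = Σ_{i=1}^m M_{c_i,d_i}` where each `c_i` lies in
`span{a_1,…,a_n}` and each `d_i` lies in `span{b_1,…,b_n}`.  Then
`Σ_{i=1}^n b_i a_i − Σ_{i=1}^m d_i c_i` belongs to `rad A`. -/
theorem elementary_operator_two_representations_sub_mem_radical
    {A : Type*} [NormedRing A] [NormedAlgebra ℂ A] [CompleteSpace A]
    {n m : ℕ} (a b : Fin n → A) (c d : Fin m → A)
    (hc : ∀ i, c i ∈ Submodule.span ℂ (Set.range a))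
    (hd : ∀ i, d i ∈ Submodule.span ℂ (Set.range b))
    (hrep : ∀ x : A, ∑ i, a i * x * b i = ∑ i, c i * x * d i) :
    (∑ i, b i * a i) - (∑ i, d i * c i) ∈ jacobsonRadical A := by
  unfold jacobsonRadical Ideal.jacobson
  rw [Submodule.mem_sInf]
  rintro L ⟨-, hL⟩
  have : IsSimpleModule A (A ⧸ L) := isSimpleModule_iff_isCoatom.mpr hL.out
  have key := aux_simple (A := A) (X := A ⧸ L) (Sum.elim a c) (Sum.elim b (fun i => - d i))
    (by intro x; simp [hrep x]) (Submodule.Quotient.mk 1)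
  rw [← Submodule.Quotient.mk_eq_zero L, ← key]
  simp only [Fintype.sum_sum_type, Sum.elim_inl, Sum.elim_inr, ← Submodule.Quotient.mk_smul,
    smul_eq_mul, mul_one, neg_mul, Finset.sum_neg_distrib, sub_eq_add_neg]
  simp only [← Submodule.mkQ_apply, map_add, map_neg, map_sum, Finset.sum_neg_distrib]
end

section
/- Let T : A → B be a spectrally bounded linear operator from a unital SR-algebra A into a unital complex Banach algebra B. Suppose I is a closed two-sided ideal of A and J is a closed two-sided ideal of B with T(I) ⊆ J. Then the induced linear map T̂ : A/I → B/J defined by T̂(x + I) = Tx + J is spectrally bounded, and its spectral norm satisfies ‖T̂‖_σ ≤ ‖T‖_σ. -/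
open scoped ENNReal NNReal

/-- The quotient of a complex algebra by (the ring congruence of) a two-sided
ideal is again a complex algebra. -/
noncomputable instance ringConQuotientAlgebra {A : Type*} [Ring A] [Algebra ℂ A]
    (c : RingCon A) : Algebra ℂ c.Quotient :=
  RingHom.toAlgebra' (c.mk'.comp (algebraMap ℂ A)) (by
    intro r x
    induction x using Quotient.ind with
    | _ y =>
      show c.mk' _ * c.mk' y = c.mk' y * c.mk' _
      rw [← map_mul, ← map_mul, Algebra.commutes])

/-- A map between complex algebras is spectrally bounded if `r(Tx) ≤ M·r(x)`
for some constant `M ≥ 0` and all `x`. -/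
def SpectrallyBounded {A B : Type*} [Ring A] [Algebra ℂ A] [Ring B] [Algebra ℂ B]
    (T : A → B) : Prop :=
  ∃ M : ℝ≥0, ∀ x : A, spectralRadius ℂ (T x) ≤ (M : ℝ≥0∞) * spectralRadius ℂ x

/-- The spectral norm of an operator: the smallest constant `M ≥ 0` such that
`r(Tx) ≤ M·r(x)` for all `x`. -/
noncomputable def spNorm {A B : Type*} [Ring A] [Algebra ℂ A] [Ring B] [Algebra ℂ B]
    (T : A → B) : ℝ≥0 :=
  sInf {M : ℝ≥0 | ∀ x : A, spectralRadius ℂ (T x) ≤ (M : ℝ≥0∞) * spectralRadius ℂ x}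

/-- A unital Banach algebra is an SR-algebra if the spectral radius formula
holds in every quotient by a closed (two-sided) ideal:
`r(x + I) = inf {r(x + y) : y ∈ I}`. -/
def IsSRAlgebra (A : Type*) [NormedRing A] [NormedAlgebra ℂ A] [CompleteSpace A] : Prop :=
  ∀ I : TwoSidedIdeal A, IsClosed (I : Set A) →
    ∀ x : A, spectralRadius ℂ (I.ringCon.mk' x) = ⨅ y ∈ I, spectralRadius ℂ (x + y)

/-- **Proposition 2.7.** Let `T : A → B` be a spectrally bounded linear operator
from a unital SR-algebra `A` into a unital complex Banach algebra `B`.  Suppose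
`I` is a closed two-sided ideal of `A` and `J` is a closed two-sided ideal of
`B` with `T I ⊆ J`.  Then the induced map `T̂ : A/I → B/J`, `x + I ↦ Tx + J`,
is spectrally bounded with `‖T̂‖_σ ≤ ‖T‖_σ`.  (Since the quotient maps are
surjective, both conclusions are stated via representatives.) -/
theorem induced_map_on_quotients_spectrally_bounded
    {A B : Type*} [NormedRing A] [NormedAlgebra ℂ A] [CompleteSpace A]
    [NormedRing B] [NormedAlgebra ℂ B] [CompleteSpace B]
    (T : A →ₗ[ℂ] B) (hT : SpectrallyBounded T) (hSR : IsSRAlgebra A)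
    (I : TwoSidedIdeal A) (hI : IsClosed (I : Set A))
    (J : TwoSidedIdeal B) (hJ : IsClosed (J : Set B))
    (hTI : ∀ x ∈ I, T x ∈ J) :
    (∃ M : ℝ≥0, ∀ x : A,
        spectralRadius ℂ (J.ringCon.mk' (T x)) ≤
          (M : ℝ≥0∞) * spectralRadius ℂ (I.ringCon.mk' x)) ∧
      sInf {M : ℝ≥0 | ∀ x : A,
          spectralRadius ℂ (J.ringCon.mk' (T x)) ≤
            (M : ℝ≥0∞) * spectralRadius ℂ (I.ringCon.mk' x)} ≤ spNorm T := by
  have key : ∀ M : ℝ≥0, (∀ x : A, spectralRadius ℂ (T x) ≤ (M : ℝ≥0∞) * spectralRadius ℂ x) →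
      ∀ x : A, spectralRadius ℂ (J.ringCon.mk' (T x)) ≤
          (M : ℝ≥0∞) * spectralRadius ℂ (I.ringCon.mk' x) := by
    intro M hM x
    rw [hSR I hI x, iInf_subtype']
    haveI : Nonempty {y // y ∈ I} := ⟨⟨0, I.zero_mem⟩⟩
    rw [ENNReal.mul_iInf (fun h => absurd h ENNReal.coe_ne_top)]
    refine le_iInf fun y => ?_
    have h1 : J.ringCon.mk' (T x) = J.ringCon.mk' (T (x + y)) := by
      have h2 : J.ringCon.mk' (T y) = 0 := by
        have h3 := (TwoSidedIdeal.mem_iff J (T y)).1 (hTI y y.2)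
        exact (RingCon.eq J.ringCon).2 h3
      rw [map_add, map_add, h2, add_zero]
    rw [h1]
    refine le_trans ?_ (hM (x + y))
    let φ : B →ₐ[ℂ] J.ringCon.Quotient :=
      { J.ringCon.mk' with commutes' := fun _ => rfl }
    have hs : spectrum ℂ (J.ringCon.mk' (T (x + y))) ⊆ spectrum ℂ (T (x + y)) :=
      AlgHom.spectrum_apply_subset φ (T (x + y))
    exact biSup_mono hs
  refine ⟨?_, ?_⟩
  · obtain ⟨M, hM⟩ := hT
    exact ⟨M, key M hM⟩
  · exact csInf_le_csInf (OrderBot.bddBelow _) hT (fun M hM => key M hM)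
end

section
/- Let A be a unital C*-algebra and let S = Σ_{i=1}^n M_{a_i,b_i} be an elementary operator on A that is spectrally bounded. Then Σ_{i=1}^n b_i a_i belongs to the centre Z(A) of A. -/
open scoped ENNReal NNReal

lemma aux_eig {n : ℕ} (P : Matrix (Fin n) (Fin n) ℂ) (h : P.trace ≠ 0) :
    ∃ l : ℂ, l ≠ 0 ∧ ∃ v : Fin n → ℂ, v ≠ 0 ∧ P.mulVec v = l • v := by
  have h1 : ∃ l ∈ P.charpoly.roots, l ≠ 0 := by
    by_contra! hc
    exact h (by rw [Matrix.trace_eq_sum_roots_charpoly]; exact Multiset.sum_eq_zero hc)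
  obtain ⟨l, hl, hl0⟩ := h1
  refine ⟨l, hl0, ?_⟩
  have hr := (Polynomial.mem_roots'.1 hl).2
  rw [Polynomial.IsRoot, Matrix.eval_charpoly] at hr
  obtain ⟨v, hv, hv'⟩ := Matrix.exists_mulVec_eq_zero_iff.2 hr
  refine ⟨v, hv, ?_⟩
  rw [Matrix.sub_mulVec, sub_eq_zero] at hv'
  rw [← hv']
  simp [Matrix.scalar_apply, ← Matrix.smul_one_eq_diagonal, Matrix.smul_mulVec]

lemma aux_dens_span {A E : Type*} [Ring A] [Algebra ℂ A] [AddCommGroup E] [Module ℂ E]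
    [Module A E] [IsScalarTower ℂ A E]
    (hd : ∀ (F : E →ₗ[ℂ] E) (s : Finset E), ∃ r : A, ∀ m ∈ s, F m = r • m)
    (F : E →ₗ[ℂ] E) (s : Finset E) :
    ∃ r : A, ∀ m ∈ Submodule.span ℂ (s : Set E), r • m = F m := by
  obtain ⟨r, hr⟩ := hd F s
  refine ⟨r, fun m hm => ?_⟩
  exact LinearMap.eqOn_span (f := Algebra.lsmul ℂ ℂ E r) (g := F)
    (fun x hx => (hr x hx).symm) hm

lemma aux_spec {A E : Type*} [Ring A] [Algebra ℂ A] [AddCommGroup E] [Module ℂ E]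
    [Module A E] [IsScalarTower ℂ A E] (y : A) (l : ℂ) (z : E) (hz : z ≠ 0)
    (h : y • z = l • z) : l ∈ spectrum ℂ y := by
  rw [spectrum.mem_iff]
  intro hu
  have : (algebraMap ℂ A l - y) • z = 0 := by
    rw [sub_smul, algebraMap_smul, h, sub_self]
  exact hz (hu.smul_eq_zero.1 this)

lemma aux_conj {A : Type*} [Ring A] [Algebra ℂ A] (g : Aˣ) (x : A) :
    spectralRadius ℂ ((g : A) * x * ((g⁻¹ : Aˣ) : A)) = spectralRadius ℂ x := by
  simp only [spectralRadius, spectrum.units_conjugate]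

lemma aux_core {A E : Type*} [NormedRing A] [NormedAlgebra ℂ A] [CompleteSpace A]
    [AddCommGroup E] [Module ℂ E] [Module A E] [IsScalarTower ℂ A E]
    (hd : ∀ (F : E →ₗ[ℂ] E) (s : Finset E), ∃ r : A, ∀ m ∈ s, F m = r • m)
    {n : ℕ} (a b : Fin n → A)
    (hS : SpectrallyBounded (fun x : A => ∑ i, a i * x * b i)) (u : E) :
    ¬ LinearIndependent ℂ ![u, (∑ i, b i * a i) • u] := by
  classical
  intro hli
  set c := ∑ i, b i * a i with hc
  have hu0 : u ≠ 0 := hli.ne_zero 0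
  have hcu : c • u ∉ Submodule.span ℂ {u} := by
    rw [LinearIndependent.pair_iff' hu0] at hli
    rw [Submodule.mem_span_singleton]
    rintro ⟨t, ht⟩
    exact hli t ht
  obtain ⟨f, hf, hfu⟩ := Submodule.exists_le_ker_of_notMem hcu
  have hfu : f u = 0 := hfu (Submodule.mem_span_singleton_self u)
  obtain ⟨q, hq⟩ := Module.Projective.exists_dual_eq_one ℂ hu0
  let s : Finset E := insert u
    (Finset.univ.image (fun p : Fin n × Fin n => b p.1 • a p.2 • u))
  set W := Submodule.span ℂ (s : Set E) with hW
  have huW : u ∈ W := Submodule.subset_span (by simp [s])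
  have hbW : ∀ i j, b i • a j • u ∈ W := fun i j => Submodule.subset_span (by
    simp only [s, Finset.coe_insert, Finset.coe_image, Finset.coe_univ, Set.image_univ]
    exact Or.inr ⟨(i, j), rfl⟩)
  obtain ⟨x, hx⟩ := aux_dens_span hd (f.smulRight u) s
  obtain ⟨y, hy⟩ := aux_dens_span hd (q.smulRight u) s
  simp only [LinearMap.smulRight_apply] at hx hy
  -- the unit
  obtain ⟨e, he0, he⟩ : ∃ e : ℝ, 0 < e ∧ ‖-((e : ℂ) • y)‖ < 1 := by
    refine ⟨(‖y‖ + 1)⁻¹, by positivity, ?_⟩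
    rw [norm_neg, norm_smul, Complex.norm_real, norm_inv, Real.norm_of_nonneg (by positivity),
      inv_mul_lt_iff₀ (by positivity)]
    linarith
  let g : Aˣ := Units.oneSub (-((e : ℂ) • y)) he
  have hg : ∀ w ∈ W, (g : A) • w = w + ((e : ℂ) * q w) • u := by
    intro w hw
    simp [g, add_smul, hy w hw, mul_smul]
  have he1 : (1 + (e : ℂ)) ≠ 0 := by
    norm_cast; positivity
  have hgi : ∀ w ∈ W, ((g⁻¹ : Aˣ) : A) • w = w - ((1 + (e : ℂ))⁻¹ * (e * q w)) • u := by
    intro w hw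
    have h1 : (g : A) • (w - ((1 + (e : ℂ))⁻¹ * (e * q w)) • u) = w := by
      rw [hg _ (W.sub_mem hw (W.smul_mem _ huW))]
      rw [map_sub, map_smul, hq, sub_add, ← sub_smul]
      convert sub_zero w
      convert zero_smul ℂ u
      simp only [smul_eq_mul]
      field_simp
      ring
    conv_lhs => rw [← h1]
    rw [← mul_smul, Units.inv_mul, one_smul]
  have key : ∀ k : ℕ, ∃ z : A, spectralRadius ℂ z = spectralRadius ℂ x ∧
      ∀ w ∈ W, z • w = ((1 + (e : ℂ)) ^ k * f w) • u := by
    intro k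
    induction k with
    | zero => exact ⟨x, rfl, fun w hw => by simp [hx w hw]⟩
    | succ k ih =>
      obtain ⟨z, hz, hz'⟩ := ih
      refine ⟨g * z * ((g⁻¹ : Aˣ) : A), by rw [aux_conj, hz], fun w hw => ?_⟩
      rw [mul_smul, hgi w hw, mul_smul, hz' _ (W.sub_mem hw (W.smul_mem _ huW)), map_sub,
        map_smul, hfu, smul_zero, sub_zero, smul_comm, hg u huW, hq, mul_one]
      rw [show u + (e : ℂ) • u = (1 + (e : ℂ)) • u by rw [add_smul, one_smul], ← mul_smul]
      congr 1
      ring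
  let P : Matrix (Fin n) (Fin n) ℂ := Matrix.of fun i j => f (b i • a j • u)
  have hP : P.trace ≠ 0 := by
    have : P.trace = f (c • u) := by
      simp [Matrix.trace, P, hc, Finset.sum_smul, mul_smul]
    rw [this]; exact hf
  obtain ⟨l, hl, v, hv, hPv⟩ := aux_eig P hP
  let z : E := ∑ j, v j • a j • u
  have hbz : ∀ i, b i • z = ∑ j, v j • b i • a j • u := by
    intro i
    simp only [z, Finset.smul_sum]
    exact Finset.sum_congr rfl fun j _ => smul_comm _ _ _
  have hbzW : ∀ i, b i • z ∈ W := by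
    intro i
    rw [hbz]
    exact W.sum_mem fun j _ => W.smul_mem _ (hbW i j)
  have hfz : ∀ i, f (b i • z) = l * v i := by
    intro i
    have := congrFun hPv i
    rw [hbz, map_sum]
    simp only [Matrix.mulVec, dotProduct, P, Matrix.of_apply, Pi.smul_apply, smul_eq_mul] at this
    rw [← this]
    refine Finset.sum_congr rfl fun j _ => ?_
    rw [map_smul, smul_eq_mul, mul_comm]
  have hz0 : z ≠ 0 := by
    intro h0
    apply hv
    ext i
    have := hfz i
    rw [h0, smul_zero, map_zero] at this
    simpa [hl] using this.symm
  obtain ⟨M, hM⟩ := hS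
  have bound : ∀ k : ℕ, (‖(1 + (e : ℂ)) ^ k * l‖₊ : ℝ≥0∞) ≤ M * ‖x‖₊ * ‖(1 : A)‖₊ := by
    intro k
    obtain ⟨w, hw, hw'⟩ := key k
    have hmem : (1 + (e : ℂ)) ^ k * l ∈ spectrum ℂ (∑ i, a i * w * b i) := by
      refine aux_spec _ _ z hz0 ?_
      rw [Finset.sum_smul]
      conv_rhs => simp only [z, Finset.smul_sum]
      refine Finset.sum_congr rfl fun i _ => ?_
      rw [mul_smul, mul_smul]
      rw [hw' _ (hbzW i), hfz, smul_comm, ← mul_smul, mul_assoc]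
    have h1 : (‖(1 + (e : ℂ)) ^ k * l‖₊ : ℝ≥0∞) ≤ spectralRadius ℂ (∑ i, a i * w * b i) := by
      exact le_iSup₂ (f := fun (k : ℂ) (_ : k ∈ spectrum ℂ (∑ i, a i * w * b i)) =>
        (‖k‖₊ : ℝ≥0∞)) _ hmem
    refine h1.trans ((hM w).trans ?_)
    rw [hw, mul_assoc]
    gcongr
    refine iSup₂_le fun t ht => ?_
    have := spectrum.norm_le_norm_mul_of_mem ht
    exact_mod_cast this
  have bound' : ∀ k : ℕ, (1 + e) ^ k * ‖l‖ ≤ M * ‖x‖ * ‖(1 : A)‖ := by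
    intro k
    have h1 := bound k
    have h2 : ‖(1 + (e : ℂ)) ^ k * l‖ ≤ M * ‖x‖ * ‖(1 : A)‖ := by exact_mod_cast h1
    rw [norm_mul, norm_pow] at h2
    have : ‖1 + (e : ℂ)‖ = 1 + e := by
      rw [← Complex.ofReal_one, ← Complex.ofReal_add, Complex.norm_real,
        Real.norm_of_nonneg (by positivity)]
    rwa [this] at h2
  have hl' : 0 < ‖l‖ := norm_pos_iff.2 hl
  obtain ⟨k, hk⟩ := pow_unbounded_of_one_lt (M * ‖x‖ * ‖(1 : A)‖ / ‖l‖) (show 1 < 1 + e by linarith)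
  rw [div_lt_iff₀ hl'] at hk
  exact absurd (bound' k) (not_le.2 hk)

lemma aux_bdd {A : Type*} [NormedRing A] [NormedAlgebra ℂ A] [CompleteSpace A]
    (L : Ideal A) (φ : (A ⧸ L) →ₗ[A] (A ⧸ L)) (x : A ⧸ L) :
    ‖φ x‖ ≤ ‖φ (Submodule.Quotient.mk 1)‖ * ‖x‖ := by
  set w := φ (Submodule.Quotient.mk 1) with hw
  obtain ⟨m, hm⟩ := Submodule.Quotient.mk_surjective L w
  have h1 : ∀ (r : A) (p : A), Submodule.Quotient.mk (p := L) p = w →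
      ‖φ (Submodule.Quotient.mk r)‖ ≤ ‖r‖ * ‖p‖ := by
    intro r p hp
    have : (Submodule.Quotient.mk r : A ⧸ L) = r • Submodule.Quotient.mk 1 := by
      rw [← Submodule.Quotient.mk_smul, smul_eq_mul, mul_one]
    rw [this, map_smul, ← hw, ← hp, ← Submodule.Quotient.mk_smul]
    exact (Submodule.Quotient.norm_mk_le L _).trans (norm_mul_le _ _)
  have h2 : ∀ ε : ℝ, 0 < ε → ‖φ x‖ ≤ (‖x‖ + ε) * (‖w‖ + ε) := by
    intro ε hε
    obtain ⟨r, hr, hr'⟩ := Submodule.Quotient.norm_mk_lt x hε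
    obtain ⟨p, hp, hp'⟩ := Submodule.Quotient.norm_mk_lt w hε
    have := h1 r p hp
    rw [hr] at this
    refine this.trans ?_
    gcongr
  have ht : Filter.Tendsto (fun ε : ℝ => (‖x‖ + ε) * (‖w‖ + ε)) (nhdsWithin 0 (Set.Ioi 0))
      (nhds ((‖x‖ + 0) * (‖w‖ + 0))) := by
    refine Filter.Tendsto.mono_left ?_ nhdsWithin_le_nhds
    exact Continuous.tendsto (by fun_prop) 0
  have := ge_of_tendsto ht (Filter.eventually_of_mem self_mem_nhdsWithin fun ε hε => h2 ε hε)
  simpa [mul_comm] using this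

lemma aux_schur {A : Type*} [NormedRing A] [NormedAlgebra ℂ A] [CompleteSpace A]
    (L : Ideal A) [hL : L.IsMaximal] (φ : (A ⧸ L) →ₗ[A] (A ⧸ L)) :
    ∃ l : ℂ, ∀ x, φ x = l • x := by
  have : IsClosed (L : Set A) := Ideal.IsMaximal.isClosed
  have : IsSimpleModule A (A ⧸ L) := isSimpleModule_iff_isCoatom.2 hL.out
  have : Nontrivial (A ⧸ L) := IsSimpleModule.nontrivial A _
  let T : (A ⧸ L) →L[ℂ] (A ⧸ L) :=
    LinearMap.mkContinuous (φ.restrictScalars ℂ) _ (aux_bdd L φ)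
  obtain ⟨l, hl⟩ := spectrum.nonempty T
  refine ⟨l, ?_⟩
  let ψ : (A ⧸ L) →ₗ[A] (A ⧸ L) := l • LinearMap.id - φ
  rcases LinearMap.bijective_or_eq_zero ψ with h | h
  · exfalso
    apply hl
    change IsUnit _
    rw [ContinuousLinearMap.isUnit_iff_bijective]
    convert h using 1
    ext x
    simp [ψ, T, Algebra.algebraMap_eq_smul_one]
    rfl
  · intro x
    have := LinearMap.congr_fun h x
    simp only [ψ, LinearMap.sub_apply, LinearMap.smul_apply, LinearMap.id_apply,
      LinearMap.zero_apply] at this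
    exact (sub_eq_zero.1 this).symm

lemma aux_density {A : Type*} [NormedRing A] [NormedAlgebra ℂ A] [CompleteSpace A]
    (L : Ideal A) [hL : L.IsMaximal] (F : (A ⧸ L) →ₗ[ℂ] (A ⧸ L)) (s : Finset (A ⧸ L)) :
    ∃ r : A, ∀ m ∈ s, F m = r • m := by
  have : IsSimpleModule A (A ⧸ L) := isSimpleModule_iff_isCoatom.2 hL.out
  let G : Module.End (Module.End A (A ⧸ L)) (A ⧸ L) :=
    { toFun := F
      map_add' := F.map_add
      map_smul' := by
        intro φ x
        obtain ⟨l, hl⟩ := aux_schur L φ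
        simp [Module.End.smul_def, hl] }
  exact jacobson_density (R := A) G s

lemma aux_rad {A : Type*} [CStarAlgebra A] (z : A)
    (hz : ∀ L : Ideal A, L.IsMaximal → z ∈ L) : z = 0 := by
  set h := star z * z with hh
  have hsa : IsSelfAdjoint h := IsSelfAdjoint.star_mul_self z
  have hr := hsa.spectralRadius_eq_nnnorm
  have h0 : spectralRadius ℂ h = 0 := by
    refine le_antisymm (iSup₂_le fun l hl => ?_) zero_le
    by_cases hl0 : l = 0
    · simp [hl0]
    exfalso
    apply hl
    change IsUnit _
    have hre := hsa.mem_spectrum_eq_re hl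
    set y := algebraMap ℂ A l - h with hy
    have hysa : star y = y := by
      rw [hy, star_sub, hsa.star_eq, ← algebraMap_star_comm, hre]
      simp
    have htop : Ideal.span {y} = ⊤ := by
      by_contra hne
      obtain ⟨L, hL, hle⟩ := Ideal.exists_le_maximal _ hne
      have h1 : y ∈ L := hle (Ideal.subset_span rfl)
      have h2 : h ∈ L := L.mul_mem_left _ (hz L hL)
      have h3 : algebraMap ℂ A l ∈ L := by
        have := L.add_mem h1 h2
        simpa [hy] using this
      apply hL.ne_top
      rw [Ideal.eq_top_iff_one]
      have := L.mul_mem_left (algebraMap ℂ A l⁻¹) h3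
      rwa [← map_mul, inv_mul_cancel₀ hl0, map_one] at this
    have h1 : (1 : A) ∈ Ideal.span {y} := by rw [htop]; trivial
    obtain ⟨t, ht⟩ := Ideal.mem_span_singleton'.1 h1
    have ht' : y * star t = 1 := by
      have := congrArg star ht
      rwa [star_mul, hysa, star_one] at this
    have : t = star t := left_inv_eq_right_inv ht ht'
    exact ⟨⟨y, t, by rw [this]; exact ht', ht⟩, rfl⟩
  rw [h0] at hr
  have : ‖h‖₊ = 0 := by exact_mod_cast hr.symm
  rw [nnnorm_eq_zero] at this
  exact CStarRing.star_mul_self_eq_zero_iff z |>.1 this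

/-- **Corollary 2.3.** Let `A` be a unital C*-algebra and let
`S = Σ_{i=1}^n M_{a_i,b_i}` be an elementary operator on `A` that is spectrally
bounded.  Then `Σ_{i=1}^n b_i a_i` belongs to the centre `Z(A)` of `A`. -/
theorem spectrally_bounded_elementary_operator_cstar_sum_mem_center
    {A : Type*} [NormedRing A] [StarRing A] [CStarRing A] [NormedAlgebra ℂ A]
    [StarModule ℂ A] [CompleteSpace A]
    {n : ℕ} (a b : Fin n → A)
    (hS : SpectrallyBounded (fun x : A => ∑ i, a i * x * b i)) :
    (∑ i, b i * a i) ∈ Set.center A := by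
  let : CStarAlgebra A := {}
  rw [Semigroup.mem_center_iff]
  intro x
  set c := ∑ i, b i * a i with hc
  rw [← sub_eq_zero]
  refine aux_rad _ fun L hL => ?_
  have h1 := LinearMap.exists_eq_smul_id_of_forall_notLinearIndependent
    (f := Algebra.lsmul ℂ ℂ (A ⧸ L) c) (fun u => aux_core (aux_density L) a b hS u)
  obtain ⟨t, ht⟩ := h1
  have h2 : ∀ w : A ⧸ L, c • w = t • w := fun w => LinearMap.congr_fun ht w
  rw [← Submodule.Quotient.mk_eq_zero]
  have h3 : (Submodule.Quotient.mk (x * c - c * x) : A ⧸ L)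
      = (x * c - c * x) • Submodule.Quotient.mk 1 := by
    rw [← Submodule.Quotient.mk_smul, smul_eq_mul, mul_one]
  rw [h3, sub_smul, mul_smul, mul_smul, h2, h2, smul_comm, sub_self]
end

section
/- Let A be a unital complex Banach algebra, let u, v ∈ A and set e = vu. The two-sided multiplication M_{u,v} is a homomorphism modulo rad(A) (i.e., u x y v − (u x v)(u y v) ∈ rad(A) for all x, y ∈ A) if and only if e is an idempotent belonging to 𝒵(A) and u(1−e)xv ∈ rad(A) for every x ∈ A. -/
open scoped ENNReal NNReal

/-- The centre modulo the radical: the inverse image of the centre of `A/rad A`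
under the canonical quotient map. -/
def centerModRadical (A : Type*) [Ring A] : Set A :=
  {a : A | ∀ b : A, a * b - b * a ∈ jacobsonRadical A}

theorem jr_mul_left {A : Type*} [Ring A] {a : A} (b : A) (h : a ∈ jacobsonRadical A) :
    b * a ∈ jacobsonRadical A := Ideal.mul_mem_left _ b h

theorem jr_mul_right {A : Type*} [Ring A] {a : A} (b : A) (h : a ∈ jacobsonRadical A) :
    a * b ∈ jacobsonRadical A := by
  unfold jacobsonRadical at *
  rw [Ideal.jacobson_bot] at *
  exact Ideal.mul_mem_right b _ h

theorem jr_semiprime {A : Type*} [Ring A] {a : A}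
    (h : ∀ y : A, a * y * a ∈ jacobsonRadical A) : a ∈ jacobsonRadical A := by
  unfold jacobsonRadical at *
  rw [Ideal.mem_jacobson_iff]
  intro y
  obtain ⟨z, hz⟩ := Ideal.mem_jacobson_iff.1 (h y) (-y)
  refine ⟨z * (1 - y * a), ?_⟩
  convert hz using 1
  noncomm_ring

/-- **Proposition 2.2.** Let `A` be a unital complex Banach algebra, let
`u, v ∈ A` and set `e = vu`.  The two-sided multiplication `M_{u,v}` is a
homomorphism modulo `rad A` (i.e. `u x y v − (u x v)(u y v) ∈ rad A` for all
`x, y ∈ A`) if and only if `e` is an idempotent belonging to `𝒵(A)` and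
`u(1−e)xv ∈ rad A` for every `x ∈ A`. -/
theorem two_sided_multiplication_homomorphism_mod_radical_iff
    {A : Type*} [NormedRing A] [NormedAlgebra ℂ A] [CompleteSpace A]
    (u v : A) (e : A) (he : e = v * u) :
    (∀ x y : A, u * x * y * v - (u * x * v) * (u * y * v) ∈ jacobsonRadical A) ↔
      (e * e - e ∈ jacobsonRadical A ∧ e ∈ centerModRadical A ∧
        ∀ x : A, u * (1 - e) * x * v ∈ jacobsonRadical A) := by
  subst he
  constructor
  · intro H
    have hf : ∀ x : A, v * u * x - v * u * x * (v * u) ∈ jacobsonRadical A := by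
      intro x
      apply jr_semiprime
      intro y
      convert jr_mul_right (u * x * (1 - v * u)) (jr_mul_left v (H x y)) using 1
      noncomm_ring
    have hg : ∀ y : A, y * (v * u) - v * u * y * (v * u) ∈ jacobsonRadical A := by
      intro y
      apply jr_semiprime
      intro x
      convert jr_mul_right u (jr_mul_left ((1 - v * u) * y * v) (H x y)) using 1
      noncomm_ring
    refine ⟨?_, ?_, ?_⟩
    · convert neg_mem (hf 1) using 1
      noncomm_ring
    · intro b
      convert sub_mem (hf b) (hg b) using 1
      noncomm_ring
    · intro x
      convert H 1 x using 1
      noncomm_ring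
  · rintro ⟨-, hc, h3⟩ x y
    convert add_mem (h3 (x * y)) (jr_mul_right (y * v) (jr_mul_left u (hc x))) using 1
    noncomm_ring
end

section
/- Let A be a unital complex Banach algebra and let T_1, …, T_n : A → A be linear maps such that, for each i, either T_i is an algebra homomorphism or (T_i x)² ∈ rad(A) for every x ∈ A. Suppose moreover that (T_i y)(T_j x) ∈ rad(A) for all x, y ∈ A whenever i > j. Then, for all λ_1, …, λ_n ∈ ℂ, the linear map T = Σ_{i=1}^n λ_i T_i is spectrally bounded. -/
open scoped ENNReal NNReal

theorem isUnit_one_sub_of_mem_jac {A : Type*} [Ring A] {r : A}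
    (hr : r ∈ jacobsonRadical A) : IsUnit (1 - r) := by
  have key : ∀ s : A, s ∈ jacobsonRadical A → ∃ z, z * (1 - s) = 1 := by
    intro s hs
    obtain ⟨z, hz⟩ := Ideal.mem_jacobson_iff.1 hs (-1)
    refine ⟨z, ?_⟩
    have h0 : z * -1 * s + z - 1 = 0 := by simpa using hz
    have h1 : z * (1 - s) - 1 = z * -1 * s + z - 1 := by noncomm_ring
    rw [h0] at h1
    exact sub_eq_zero.1 h1
  obtain ⟨z, hz⟩ := key r hr
  obtain ⟨w, hw⟩ := key (-(z * r)) (neg_mem (Ideal.mul_mem_left _ z hr))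
  have hz2 : z = 1 - -(z * r) := by
    have : z - z * r = 1 := by rw [← hz]; noncomm_ring
    rw [sub_neg_eq_add, ← this]; abel
  rw [← hz2] at hw
  have hwr : w = 1 - r := by
    calc w = w * (z * (1 - r)) := by rw [hz, mul_one]
      _ = 1 - r := by rw [← mul_assoc, hw, one_mul]
  rw [hwr] at hw
  exact ⟨⟨1 - r, z, hw, hz⟩, rfl⟩

theorem isUnit_one_sub_add {A : Type*} [Ring A] {a b : A}
    (hab : a * b ∈ jacobsonRadical A) (ha : IsUnit (1 - a)) (hb : IsUnit (1 - b)) :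
    IsUnit (1 - (b + a)) := by
  obtain ⟨u, hu⟩ := ha.mul hb
  have h : 1 - (b + a) = u * (1 - (↑u⁻¹ : A) * (a * b)) := by
    rw [mul_sub, ← mul_assoc, Units.mul_inv, hu]; noncomm_ring
  rw [h]
  exact u.isUnit.mul (isUnit_one_sub_of_mem_jac (Ideal.mul_mem_left _ _ hab))

theorem isUnit_one_sub_sum {A : Type*} [Ring A] : ∀ {n : ℕ} (b : Fin n → A),
    (∀ i j, j < i → b i * b j ∈ jacobsonRadical A) → (∀ i, IsUnit (1 - b i)) →
    IsUnit (1 - ∑ i, b i)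
  | 0, b, _, _ => by simp
  | n + 1, b, h, hu => by
    rw [Fin.sum_univ_castSucc]
    refine isUnit_one_sub_add ?_ (hu _) (isUnit_one_sub_sum _ (fun i j hij => h _ _ ?_)
      (fun i => hu _))
    · rw [Finset.mul_sum]
      exact Ideal.sum_mem _ fun i _ => h _ _ (Fin.castSucc_lt_last i)
    · simpa using hij

theorem isUnit_one_sub_of_sq {A : Type*} [Ring A] {a : A}
    (h : a ^ 2 ∈ jacobsonRadical A) : IsUnit (1 - a) := by
  have h1 := isUnit_one_sub_of_mem_jac h
  have hc : Commute (1 - a) (1 + a) := by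
    show (1 - a) * (1 + a) = (1 + a) * (1 - a)
    noncomm_ring
  have h2 : 1 - a ^ 2 = (1 - a) * (1 + a) := by noncomm_ring
  rw [h2, hc.isUnit_mul_iff] at h1
  exact h1.1

theorem isUnit_one_sub_map {A : Type*} [Ring A] [Algebra ℂ A] (f : A →ₗ[ℂ] A)
    (hf : ∀ x y : A, f (x * y) = f x * f y) {z : A} (hz : IsUnit (1 - z)) :
    IsUnit (1 - f z) := by
  obtain ⟨u, hu⟩ := hz
  obtain ⟨w, hw⟩ : ∃ w : A, (↑u⁻¹ : A) = 1 - w := ⟨1 - ↑u⁻¹, by abel⟩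
  have h1 := u.mul_inv
  have h2 := u.inv_mul
  rw [hu, hw] at h1 h2
  have e1 : z * w - z - w = 0 := by
    have : z * w - z - w = (1 - z) * (1 - w) - 1 := by noncomm_ring
    rw [this, h1, sub_self]
  have e2 : w * z - z - w = 0 := by
    have : w * z - z - w = (1 - w) * (1 - z) - 1 := by noncomm_ring
    rw [this, h2, sub_self]
  have f1 := congrArg f e1
  have f2 := congrArg f e2
  simp only [map_sub, hf, map_zero] at f1 f2
  refine ⟨⟨1 - f z, 1 - f w, ?_, ?_⟩, rfl⟩
  · have : (1 - f z) * (1 - f w) = 1 + (f z * f w - f z - f w) := by noncomm_ring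
    rw [this, f1, add_zero]
  · have : (1 - f w) * (1 - f z) = 1 + (f w * f z - f z - f w) := by noncomm_ring
    rw [this, f2, add_zero]

theorem smul_mem_jac {A : Type*} [Ring A] [Algebra ℂ A] (c : ℂ) {a : A}
    (h : a ∈ jacobsonRadical A) : c • a ∈ jacobsonRadical A := by
  rw [Algebra.smul_def]
  exact Ideal.mul_mem_left _ _ h

theorem mem_spectrum_iff_one_sub {A : Type*} [Ring A] [Algebra ℂ A] {k : ℂ} (hk : k ≠ 0) (a : A) :
    k ∈ spectrum ℂ a ↔ ¬ IsUnit (1 - k⁻¹ • a) := by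
  rw [spectrum.mem_iff, not_iff_not]
  have : algebraMap ℂ A k - a = (Units.mk0 k hk) • (1 - k⁻¹ • a) := by
    rw [Units.smul_mk0, smul_sub, smul_smul, mul_inv_cancel₀ hk, one_smul,
      Algebra.algebraMap_eq_smul_one]
  rw [this, isUnit_smul_iff]

/-- **Proposition 2.4.** Let `A` be a unital complex Banach algebra and let
`T_1, …, T_n : A → A` be linear maps such that, for each `i`, either `T_i` is an
algebra homomorphism or `(T_i x)² ∈ rad A` for every `x ∈ A`.  Suppose moreover
that `(T_i y)(T_j x) ∈ rad A` for all `x, y ∈ A` whenever `i > j`.  Then for all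
`λ_1, …, λ_n ∈ ℂ` the linear map `T = Σ_{i=1}^n λ_i T_i` is spectrally
bounded. -/
theorem sum_of_homomorphisms_and_square_radical_spectrally_bounded
    {A : Type*} [NormedRing A] [NormedAlgebra ℂ A] [CompleteSpace A]
    {n : ℕ} (T : Fin n → A →ₗ[ℂ] A)
    (h₁ : ∀ i : Fin n, (∀ x y : A, T i (x * y) = T i x * T i y) ∨
      (∀ x : A, (T i x) ^ 2 ∈ jacobsonRadical A))
    (h₂ : ∀ i j : Fin n, j < i → ∀ x y : A, (T i y) * (T j x) ∈ jacobsonRadical A)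
    (lam : Fin n → ℂ) :
    SpectrallyBounded (fun x : A => ∑ i, lam i • T i x) := by
  refine ⟨∑ i, ‖lam i‖₊, fun x => ?_⟩
  refine iSup₂_le fun k hk => ?_
  by_cases hk0 : k = 0
  · simp [hk0]
  rw [mem_spectrum_iff_one_sub hk0, Finset.smul_sum] at hk
  obtain ⟨i, hi⟩ : ∃ i, ¬ IsUnit (1 - k⁻¹ • lam i • T i x) := by
    by_contra! hcon
    refine hk (isUnit_one_sub_sum _ (fun i j hij => ?_) hcon)
    simp only [smul_mul_assoc, mul_smul_comm]
    iterate 4 apply smul_mem_jac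
    exact h₂ i j hij x x
  rw [smul_smul, ← map_smul] at hi
  have hx : ¬ IsUnit (1 - (k⁻¹ * lam i) • x) := by
    rcases h₁ i with h | h
    · exact fun hu => hi (isUnit_one_sub_map _ h hu)
    · exact absurd (isUnit_one_sub_of_sq (h _)) hi
  have hl : lam i ≠ 0 := by
    intro h0
    simp [h0] at hx
  have hm : k / lam i ∈ spectrum ℂ x := by
    rw [mem_spectrum_iff_one_sub (div_ne_zero hk0 hl), inv_div, div_eq_inv_mul]
    exact hx
  have hle : ((‖k / lam i‖₊ : ℝ≥0) : ℝ≥0∞) ≤ spectralRadius ℂ x :=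
    le_iSup₂ (f := fun (k : ℂ) (_ : k ∈ spectrum ℂ x) => (‖k‖₊ : ℝ≥0∞)) _ hm
  have hkk : ‖k‖₊ = ‖lam i‖₊ * ‖k / lam i‖₊ := by
    rw [← nnnorm_mul, mul_div_cancel₀ _ hl]
  rw [hkk, ENNReal.coe_mul]
  refine mul_le_mul' ?_ hle
  exact ENNReal.coe_le_coe.2 (Finset.single_le_sum (f := fun i => ‖lam i‖₊) (fun _ _ => zero_le) (Finset.mem_univ i))
end

section
/- Let A be a unital complex Banach algebra and let S be an elementary operator on A that can be written as S = Σ_{i=1}^n M_{u_i,v_i} with u_i, v_i ∈ A such that v_i u_j ∈ rad(A) whenever i > j and v_i u_i ∈ 𝒵(A) for every i. Then S is spectrally bounded. -/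
open scoped ENNReal NNReal

theorem aux_unit_one_add {A : Type*} [Ring A] {j : A} (hj : j ∈ jacobsonRadical A) :
    IsUnit (j + 1) := by
  have key : ∀ j ∈ jacobsonRadical A, ∃ s, s * (j + 1) = 1 := by
    intro j hj
    obtain ⟨s, hs⟩ := Ideal.exists_mul_add_sub_mem_of_mem_jacobson j hj
    exact ⟨s, sub_eq_zero.1 (by simpa using hs)⟩
  obtain ⟨s, hs⟩ := key j hj
  obtain ⟨t, ht⟩ := key (-s * j) (Ideal.mul_mem_left _ _ hj)
  have h1 : -s * j + 1 = s := by
    have : s * j + s = 1 := by simpa [mul_add] using hs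
    rw [← this]; noncomm_ring
  rw [h1] at ht
  have h2 : t = j + 1 := by
    calc t = t * (s * (j + 1)) := by rw [hs, mul_one]
      _ = j + 1 := by rw [← mul_assoc, ht, one_mul]
  rw [h2] at ht
  exact ⟨⟨j + 1, s, ht, hs⟩, rfl⟩

instance aux_twoSided (A : Type*) [Ring A] : (jacobsonRadical A).IsTwoSided := by
  unfold jacobsonRadical; infer_instance

theorem aux_lift {A : Type*} [Ring A] {a : A}
    (h : IsUnit (Ideal.Quotient.mk (jacobsonRadical A) a)) : IsUnit a := by
  have key : ∀ c : A, Ideal.Quotient.mk (jacobsonRadical A) c = 1 → IsUnit c := by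
    intro c hc
    have : c - 1 ∈ jacobsonRadical A := by
      rw [← Ideal.Quotient.eq_zero_iff_mem, map_sub, hc, map_one, sub_self]
    simpa using aux_unit_one_add this
  obtain ⟨b', h1, h2⟩ := isUnit_iff_exists.1 h
  obtain ⟨b, rfl⟩ := Ideal.Quotient.mk_surjective b'
  rw [← map_mul] at h1 h2
  obtain ⟨c, hc, -⟩ := isUnit_iff_exists.1 (key _ h1)
  obtain ⟨d, -, hd⟩ := isUnit_iff_exists.1 (key _ h2)
  exact isUnit_iff_exists_and_exists.2
    ⟨⟨b * c, by rw [← mul_assoc, hc]⟩, ⟨d * b, by rw [mul_assoc, hd]⟩⟩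

theorem aux_swap {R : Type*} [Ring R] (x y : R) (h : IsUnit (1 - x * y)) :
    IsUnit (1 - y * x) := by
  obtain ⟨b, h1, h2⟩ := isUnit_iff_exists.1 h
  refine isUnit_iff_exists.2 ⟨1 + y * b * x, ?_, ?_⟩
  · calc (1 - y * x) * (1 + y * b * x) = 1 - y * x + y * ((1 - x * y) * b) * x := by noncomm_ring
      _ = 1 := by rw [h1]; noncomm_ring
  · calc (1 + y * b * x) * (1 - y * x) = 1 - y * x + y * (b * (1 - x * y)) * x := by noncomm_ring
      _ = 1 := by rw [h2]; noncomm_ring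

theorem aux_prod {R : Type*} [Ring R] : ∀ {n : ℕ} (a : Fin n → R),
    (∀ i j : Fin n, j < i → a i * a j = 0) → (∀ i, IsUnit (1 - a i)) → IsUnit (1 - ∑ i, a i)
  | 0, a, _, _ => by simp
  | n + 1, a, h, hu => by
    have ih := aux_prod (fun i : Fin n => a i.castSucc)
      (fun i j hij => h _ _ (by simpa using hij)) (fun i => hu _)
    have h0 : a (Fin.last n) * ∑ i : Fin n, a i.castSucc = 0 := by
      rw [Finset.mul_sum]
      exact Finset.sum_eq_zero fun i _ => h _ _ (Fin.castSucc_lt_last i)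
    have := (hu (Fin.last n)).mul ih
    rw [Fin.sum_univ_castSucc]
    convert this using 1
    rw [sub_mul, mul_sub (a _), h0]
    noncomm_ring

theorem aux_geom {R : Type*} [Ring R] (w : R) (N : ℕ) (h : IsUnit (1 - w ^ N)) :
    IsUnit (1 - w) := by
  obtain ⟨b, h1, h2⟩ := isUnit_iff_exists.1 h
  refine isUnit_iff_exists_and_exists.2 ⟨⟨(∑ i ∈ Finset.range N, w ^ i) * b, ?_⟩,
    ⟨b * (∑ i ∈ Finset.range N, w ^ i), ?_⟩⟩
  · rw [← mul_assoc, mul_neg_geom_sum, h1]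
  · rw [mul_assoc, geom_sum_mul_neg, h2]

theorem aux_norm {A : Type*} [NormedRing A] [NormedAlgebra ℂ A] [CompleteSpace A]
    (x : A) (M : ℝ≥0) (l : ℂ) (h : (M : ℝ≥0∞) * spectralRadius ℂ x < ‖l‖₊) :
    ∃ N : ℕ, 0 < N ∧ ‖x ^ N‖ * (M : ℝ) ^ N < ‖l‖ ^ N := by
  have ht := ENNReal.Tendsto.const_mul (a := (M : ℝ≥0∞))
    (spectrum.pow_nnnorm_pow_one_div_tendsto_nhds_spectralRadius x) (Or.inr ENNReal.coe_ne_top)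
  obtain ⟨N, hN, hpos⟩ := ((ht.eventually_lt_const h).and (Filter.eventually_gt_atTop 0)).exists
  refine ⟨N, hpos, ?_⟩
  have h3 := ENNReal.pow_lt_pow_left hpos.ne' hN
  rw [mul_pow, ← ENNReal.rpow_natCast (_ ^ _) N, ← ENNReal.rpow_mul,
    one_div_mul_cancel (by exact_mod_cast hpos.ne'), ENNReal.rpow_one] at h3
  rw [mul_comm]
  exact_mod_cast h3

/-- **Corollary 2.5.** Let `A` be a unital complex Banach algebra and let `S` be
an elementary operator on `A` that can be written as `S = Σ_{i=1}^n M_{u_i,v_i}`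
with `v_i u_j ∈ rad A` whenever `i > j` and `v_i u_i ∈ 𝒵(A)` for every `i`.
Then `S` is spectrally bounded. -/
theorem elementary_operator_triangular_form_spectrally_bounded
    {A : Type*} [NormedRing A] [NormedAlgebra ℂ A] [CompleteSpace A]
    {n : ℕ} (u v : Fin n → A)
    (h₁ : ∀ i j : Fin n, j < i → v i * u j ∈ jacobsonRadical A)
    (h₂ : ∀ i : Fin n, v i * u i ∈ centerModRadical A) :
    SpectrallyBounded (fun x : A => ∑ i, u i * x * v i) := by
  set M : ℝ≥0 := ∑ i, ‖v i * u i‖₊ with hM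
  refine ⟨M, fun x => ?_⟩
  refine iSup₂_le fun l hl => ?_
  by_contra hlt
  rw [not_le] at hlt
  refine hl ?_
  have hl0 : l ≠ 0 := by
    rintro rfl
    simp at hlt
  obtain ⟨N, hN, hlN⟩ := aux_norm x M l hlt
  set π := Ideal.Quotient.mk (jacobsonRadical A) with hπ
  set y : A := l⁻¹ • x with hy
  have hS : algebraMap ℂ A l - ∑ i, u i * x * v i
      = (Units.mk0 l hl0) • (1 - ∑ i, u i * y * v i) := by
    rw [Units.smul_def, Units.val_mk0, smul_sub, Finset.smul_sum, Algebra.algebraMap_eq_smul_one]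
    simp [hy, smul_smul, hl0]
  show IsUnit (algebraMap ℂ A l - ∑ i, u i * x * v i)
  rw [hS, isUnit_smul_iff]
  apply aux_lift
  rw [map_sub, map_one, map_sum]
  apply aux_prod
  · intro i j hij
    have h := Ideal.Quotient.eq_zero_iff_mem.2 (h₁ i j hij)
    rw [← map_mul]
    have e : u i * y * v i * (u j * y * v j) = u i * y * (v i * u j) * (y * v j) := by
      noncomm_ring
    rw [e, map_mul, map_mul, h]; simp
  · intro i
    rw [← map_one π, ← map_sub]
    apply IsUnit.map
    rw [mul_assoc]
    apply aux_swap (y * v i) (u i)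
    rw [mul_assoc]
    apply aux_lift
    rw [map_sub, map_one]
    apply aux_geom _ N
    have hc : Commute (π y) (π (v i * u i)) := by
      have := Ideal.Quotient.eq_zero_iff_mem.2 (h₂ i y)
      rw [map_sub, map_mul, map_mul, sub_eq_zero] at this
      exact this.symm
    rw [map_mul, hc.mul_pow, ← map_pow, ← map_pow, ← map_mul, ← map_one π, ← map_sub]
    apply IsUnit.map
    apply isUnit_one_sub_of_norm_lt_one
    have hz : ‖v i * u i‖ ≤ M := by
      have : ‖v i * u i‖₊ ≤ M :=
        Finset.single_le_sum (f := fun i => ‖v i * u i‖₊) (fun _ _ => zero_le) (Finset.mem_univ i)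
      exact_mod_cast this
    have hlp : 0 < ‖l‖ ^ N := pow_pos (norm_pos_iff.2 hl0) N
    calc ‖y ^ N * (v i * u i) ^ N‖ ≤ ‖y ^ N‖ * ‖(v i * u i) ^ N‖ := norm_mul_le _ _
      _ ≤ ‖y ^ N‖ * (M : ℝ) ^ N := by
        gcongr
        exact (norm_pow_le' _ hN).trans (by gcongr)
      _ = (‖l‖ ^ N)⁻¹ * (‖x ^ N‖ * (M : ℝ) ^ N) := by
        rw [hy, smul_pow, norm_smul, norm_pow, norm_inv, inv_pow, mul_assoc]
      _ < (‖l‖ ^ N)⁻¹ * ‖l‖ ^ N := by gcongr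
      _ = 1 := inv_mul_cancel₀ hlp.ne'
end

section
/- Let X be a complex vector space and let V_1, …, V_k be finite-dimensional subspaces of the space L(X) of all linear maps on X. Then there exists a vector ζ ∈ X such that dim{vζ : v ∈ V_i} = lDim V_i for all 1 ≤ i ≤ k. -/
open scoped ENNReal NNReal

/-- The image `{vζ : v ∈ V}` of a space of linear maps under evaluation at `ζ`. -/
noncomputable def evalSubspace {X : Type*} [AddCommGroup X] [Module ℂ X]
    (V : Submodule ℂ (X →ₗ[ℂ] X)) (ζ : X) : Submodule ℂ X :=
  V.map (LinearMap.applyₗ ζ)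

/-- The local dimension `lDim V = max {dim V ζ : ζ ∈ X}` of a finite-dimensional
space `V` of linear maps on `X`. -/
noncomputable def localDim {X : Type*} [AddCommGroup X] [Module ℂ X]
    (V : Submodule ℂ (X →ₗ[ℂ] X)) : ℕ :=
  sSup {n : ℕ | ∃ ζ : X, n = Module.finrank ℂ (evalSubspace V ζ)}

lemma finrank_eval_le {X : Type*} [AddCommGroup X] [Module ℂ X]
    (V : Submodule ℂ (X →ₗ[ℂ] X)) [FiniteDimensional ℂ V] (ζ : X) :
    Module.finrank ℂ (evalSubspace V ζ) ≤ Module.finrank ℂ V :=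
  Submodule.finrank_map_le _ _

lemma le_localDim {X : Type*} [AddCommGroup X] [Module ℂ X]
    (V : Submodule ℂ (X →ₗ[ℂ] X)) [FiniteDimensional ℂ V] (ζ : X) :
    Module.finrank ℂ (evalSubspace V ζ) ≤ localDim V := by
  refine le_csSup ⟨Module.finrank ℂ V, ?_⟩ ⟨ζ, rfl⟩
  rintro n ⟨x, rfl⟩
  exact finrank_eval_le V x

lemma exists_localDim {X : Type*} [AddCommGroup X] [Module ℂ X]
    (V : Submodule ℂ (X →ₗ[ℂ] X)) [FiniteDimensional ℂ V] :
    ∃ ζ : X, localDim V = Module.finrank ℂ (evalSubspace V ζ) := by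
  refine Nat.sSup_mem (s := {n : ℕ | ∃ ζ : X, n = Module.finrank ℂ (evalSubspace V ζ)})
    ⟨_, 0, rfl⟩ ⟨Module.finrank ℂ V, ?_⟩
  rintro n ⟨x, rfl⟩
  exact finrank_eval_le V x

lemma finite_det {r : ℕ} (B : Matrix (Fin r) (Fin r) ℂ) :
    {t : ℂ | (1 + t • B).det = 0}.Finite := by
  have key : ∀ t : ℂ, (Matrix.charpolyRev (-B)).eval t = (1 + t • B).det := by
    intro t
    rw [Matrix.charpolyRev, ← Polynomial.coe_evalRingHom, RingHom.map_det]
    congr 1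
    ext i j
    by_cases h : i = j <;> simp [h] <;> ring
  have h0 : Matrix.charpolyRev (-B) ≠ 0 := by
    intro h
    have := key 0
    simp [h] at this
  refine (Polynomial.finite_setOfPred_isRoot h0).subset ?_
  intro t ht
  simpa [Polynomial.IsRoot, key] using ht

lemma finite_bad {X : Type*} [AddCommGroup X] [Module ℂ X]
    (V : Submodule ℂ (X →ₗ[ℂ] X)) [FiniteDimensional ℂ V] (ζ η : X) :
    {t : ℂ | Module.finrank ℂ (evalSubspace V (ζ + t • η)) <
      Module.finrank ℂ (evalSubspace V ζ)}.Finite := by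
  have fd : ∀ x, FiniteDimensional ℂ (evalSubspace V x) := fun x => by
    unfold evalSubspace; infer_instance
  set r := Module.finrank ℂ (evalSubspace V ζ) with hr
  let b := Module.finBasisOfFinrankEq ℂ (evalSubspace V ζ) hr.symm
  have hb : ∀ i, ∃ v ∈ V, v ζ = b i := fun i => (b i).2
  choose v hvV hv using hb
  obtain ⟨φ, hφ⟩ := LinearMap.exists_extend (b.equivFun : evalSubspace V ζ →ₗ[ℂ] (Fin r → ℂ))
  have hφb : ∀ i, φ (v i ζ) = Pi.single i 1 := by
    intro i
    rw [hv]
    have := LinearMap.congr_fun hφ (b i)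
    simpa [Finsupp.single_eq_pi_single] using this
  let B : Matrix (Fin r) (Fin r) ℂ := Matrix.of fun i => φ (v i η)
  refine (finite_det B).subset ?_
  intro t ht
  by_contra hdet
  have hli : LinearIndependent ℂ (1 + t • B).row :=
    Matrix.linearIndependent_rows_of_det_ne_zero hdet
  have heq : (1 + t • B).row = φ ∘ fun i => v i (ζ + t • η) := by
    funext i j
    simp [Matrix.row, B, hφb, Matrix.one_apply, Pi.single_apply, eq_comm]
  rw [heq] at hli
  have h2 : LinearIndependent ℂ (fun i => v i (ζ + t • η)) := LinearIndependent.of_comp φ hli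
  let w : Fin r → evalSubspace V (ζ + t • η) := fun i => ⟨v i (ζ + t • η), v i, hvV i, rfl⟩
  have h3 : LinearIndependent ℂ w :=
    LinearIndependent.of_comp (evalSubspace V (ζ + t • η)).subtype h2
  have h4 := h3.fintype_card_le_finrank
  simp only [Fintype.card_fin] at h4
  exact absurd ht (not_lt.mpr h4)

/-- **Lemma 2.6.** Let `X` be a complex vector space and let `V_1, …, V_k` be
finite-dimensional subspaces of the space of all linear maps on `X`.  Then there
exists a vector `ζ ∈ X` such that `dim {vζ : v ∈ V_i} = lDim V_i` for all
`1 ≤ i ≤ k`. -/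
theorem exists_common_vector_attaining_local_dimension
    {X : Type*} [AddCommGroup X] [Module ℂ X]
    {k : ℕ} (V : Fin k → Submodule ℂ (X →ₗ[ℂ] X))
    (hV : ∀ i, FiniteDimensional ℂ (V i)) :
    ∃ ζ : X, ∀ i, Module.finrank ℂ (evalSubspace (V i) ζ) = localDim (V i) := by
  have main : ∀ s : Finset (Fin k), ∃ ζ : X, ∀ i ∈ s,
      localDim (V i) ≤ Module.finrank ℂ (evalSubspace (V i) ζ) := by
    intro s
    induction s using Finset.induction_on with
    | empty => exact ⟨0, by simp⟩
    | insert j s hj ih =>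
      obtain ⟨ζ, hζ⟩ := ih
      obtain ⟨η, hη⟩ := exists_localDim (V j)
      have f1 : (⋃ i : Fin k, {t : ℂ | Module.finrank ℂ (evalSubspace (V i) (ζ + t • (η - ζ))) <
          Module.finrank ℂ (evalSubspace (V i) ζ)}).Finite :=
        Set.finite_iUnion fun i => finite_bad (V i) ζ (η - ζ)
      have f2 := (finite_bad (V j) η (ζ - η)).preimage
        (f := fun t : ℂ => 1 - t) (fun a _ b _ h => by simpa using h)
      obtain ⟨t, ht⟩ := (f1.union f2).exists_notMem
      simp only [Set.mem_union, Set.mem_iUnion, Set.mem_ofPred_eq, Set.mem_preimage, not_or,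
        not_exists, not_lt] at ht
      refine ⟨ζ + t • (η - ζ), fun i hi => ?_⟩
      rcases Finset.mem_insert.mp hi with rfl | hi
      · have e : η + (1 - t) • (ζ - η) = ζ + t • (η - ζ) := by module
        rw [hη, ← e]
        exact ht.2
      · exact (hζ i hi).trans (ht.1 i)
  obtain ⟨ζ, hζ⟩ := main Finset.univ
  exact ⟨ζ, fun i => le_antisymm (le_localDim (V i) ζ) (hζ i (Finset.mem_univ i))⟩
end

section
/- Let A be a unital complex Banach algebra and let S = Σ_{i=1}^n M_{a_i,b_i} be an elementary operator on A. If r(Sx) = 0 for every x ∈ A, then Σ_{i=1}^n b_i a_i belongs to rad(A). -/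
lemma aux_schur_s7 {A : Type*} [NormedRing A] [NormedAlgebra ℂ A] [CompleteSpace A]
    (m : Ideal A) [hm : m.IsMaximal] (D : Module.End A (A ⧸ m)) :
    ∃ z : ℂ, ∀ x, D x = z • x := by
  have : IsSimpleModule A (A ⧸ m) := isSimpleModule_iff_isCoatom.mpr hm.out
  have : Nontrivial (A ⧸ m) := IsSimpleModule.nontrivial A _
  obtain ⟨d, hd⟩ := Submodule.Quotient.mk_surjective m (D (Submodule.Quotient.mk 1))
  have hD : ∀ x : A, D (Submodule.Quotient.mk x) = Submodule.Quotient.mk (x * d) := by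
    intro x
    have : (Submodule.Quotient.mk x : A ⧸ m) = x • Submodule.Quotient.mk 1 := by
      rw [← Submodule.Quotient.mk_smul]; simp
    rw [this, map_smul, ← hd, ← Submodule.Quotient.mk_smul, smul_eq_mul]
  let L : (A ⧸ m) →ₗ[ℂ] (A ⧸ m) := D.restrictScalars ℂ
  let T : (A ⧸ m) →L[ℂ] (A ⧸ m) := L.mkContinuous ‖d‖ (by
    intro x
    refine le_of_forall_pos_le_add fun ε hε => ?_
    have hpos : 0 < ε / (‖d‖ + 1) := by positivity
    obtain ⟨y, rfl, hy⟩ := Submodule.Quotient.norm_mk_lt x hpos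
    change ‖D _‖ ≤ _
    rw [hD]
    refine (Submodule.Quotient.norm_mk_le m _).trans ((norm_mul_le _ _).trans ?_)
    have h1 : ‖y‖ * ‖d‖ ≤ (‖(Submodule.Quotient.mk y : A ⧸ m)‖ + ε / (‖d‖ + 1)) * ‖d‖ := by gcongr
    have h2 : ε / (‖d‖ + 1) * ‖d‖ ≤ ε := by
      rw [div_mul_eq_mul_div, div_le_iff₀ (by positivity)]
      nlinarith [norm_nonneg d]
    linarith)
  obtain ⟨z, hz⟩ := spectrum.nonempty T
  refine ⟨z, ?_⟩
  let E : Module.End A (A ⧸ m) := 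
    { toFun := fun x => z • x - D x
      map_add' := by intro x y; simp; abel
      map_smul' := by
        intro r x
        have h5 : z • r • x = r • z • x := by
          obtain ⟨y, rfl⟩ := Submodule.Quotient.mk_surjective m x
          simp only [← Submodule.Quotient.mk_smul]
          congr 1
          exact (mul_smul_comm z r y).symm
        change z • r • x - D (r • x) = r • (z • x - D x)
        rw [map_smul, h5, smul_sub] }
  rcases LinearMap.bijective_or_eq_zero E with h | h
  · exfalso
    apply hz
    have hfun : ⇑(algebraMap ℂ ((A ⧸ m) →L[ℂ] (A ⧸ m)) z - T) = ⇑E := by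
      ext x; rfl
    rw [spectrum.mem_resolventSet_iff, ContinuousLinearMap.isUnit_iff_bijective, hfun]
    exact h
  · intro x
    have := LinearMap.congr_fun h x
    exact (sub_eq_zero.mp this).symm

lemma aux_main {A X : Type*} [Ring A] [Algebra ℂ A] [AddCommGroup X] [Module A X] [Module ℂ X]
    [IsScalarTower ℂ A X] [IsSimpleModule A X]
    (hE : ∀ D : Module.End A X, ∃ z : ℂ, ∀ x, D x = z • x)
    {n : ℕ} (a b : Fin n → A)
    (hS : ∀ (x : A) (z : ℂ), z ≠ 0 → IsUnit (algebraMap ℂ A z - ∑ i, a i * x * b i)) (y : X) :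
    (∑ i, b i * a i) • y = 0 := by
  classical
  by_contra hne
  obtain ⟨f, hf⟩ : ∃ f : X →ₗ[ℂ] ℂ, f ((∑ i, b i * a i) • y) ≠ 0 := by
    by_contra! h
    exact hne ((Module.forall_dual_apply_eq_zero_iff ℂ _).mp h)
  let g : Module.End (Module.End A X) X :=
    { toFun := fun w => f w • y
      map_add' := by intro u v; simp [add_smul]
      map_smul' := by
        intro D w
        obtain ⟨z, hz⟩ := hE D
        simp [hz, smul_smul] }
  obtain ⟨x, hx⟩ := jacobson_density g
    (Finset.univ.image fun p : Fin n × Fin n => b p.1 • a p.2 • y)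
  have hx' : ∀ i j, x • b i • a j • y = f (b i • a j • y) • y := by
    intro i j
    exact (hx _ (Finset.mem_image.mpr ⟨(i, j), Finset.mem_univ _, rfl⟩)).symm
  let M : Matrix (Fin n) (Fin n) ℂ := Matrix.of fun i j => f (b i • a j • y)
  have hcomm : ∀ (c : A) (z : ℂ) (w : X), c • z • w = z • c • w := by
    intro c z w
    rw [← algebraMap_smul A z w, ← algebraMap_smul A z (c • w), smul_smul, smul_smul,
      Algebra.commutes]
  have hroot : ∀ z ∈ M.charpoly.roots, z = 0 := by
    intro z hz
    by_contra hz0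
    have h1 : Module.End.HasEigenvalue (Matrix.toLin' M) z := by
      rw [Module.End.hasEigenvalue_iff_isRoot_charpoly]
      simpa using Polynomial.isRoot_of_mem_roots hz
    obtain ⟨t, ht⟩ := h1.exists_hasEigenvector
    have hMt : M.mulVec t = z • t := by simpa using ht.apply_eq_smul
    have hMi : ∀ i, ∑ j, f (b i • a j • y) * t j = z * t i := fun i => by
      simpa [M, Matrix.mulVec, dotProduct] using congrFun hMt i
    set w : X := ∑ j, t j • a j • y with hw
    have hbw : ∀ i, f (b i • w) = z * t i := by
      intro i
      rw [← hMi, hw, Finset.smul_sum, map_sum]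
      refine Finset.sum_congr rfl fun j _ => ?_
      rw [hcomm, map_smul, smul_eq_mul, mul_comm]
    have hSw : (∑ i, a i * x * b i) • w = z • w := by
      have h3 : ∀ i, x • b i • w = (z * t i) • y := by
        intro i
        rw [← hMi, hw, Finset.smul_sum, Finset.smul_sum, Finset.sum_smul]
        refine Finset.sum_congr rfl fun j _ => ?_
        rw [hcomm, hcomm, hx', smul_smul, mul_comm]
      rw [Finset.sum_smul]
      conv_rhs => rw [hw, Finset.smul_sum]
      refine Finset.sum_congr rfl fun i _ => ?_
      rw [mul_smul, mul_smul, h3, hcomm, smul_smul]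
    have hw0 : w = 0 := by
      have h4 : (algebraMap ℂ A z - ∑ i, a i * x * b i) • w = 0 := by
        rw [sub_smul, hSw, algebraMap_smul, sub_self]
      exact (hS x z hz0).smul_eq_zero.mp h4
    apply ht.2
    ext i
    have := hbw i
    rw [hw0, smul_zero, map_zero] at this
    simpa [hz0] using this.symm
  have htr : M.trace = 0 := by
    rw [Matrix.trace_eq_sum_roots_charpoly]
    exact Multiset.sum_eq_zero hroot
  apply hf
  rw [← htr, Finset.sum_smul, map_sum]
  simp [Matrix.trace, M, mul_smul]



open scoped ENNReal NNReal

/-- **Proposition 3.1.** Let `A` be a unital complex Banach algebra and let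
`S = Σ_{i=1}^n M_{a_i,b_i}` be an elementary operator on `A`.  If `r(Sx) = 0`
for every `x ∈ A`, then `Σ_{i=1}^n b_i a_i` belongs to `rad A`. -/
theorem spectrally_infinitesimal_elementary_operator_sum_mem_radical
    {A : Type*} [NormedRing A] [NormedAlgebra ℂ A] [CompleteSpace A]
    {n : ℕ} (a b : Fin n → A)
    (hS : ∀ x : A, spectralRadius ℂ (∑ i, a i * x * b i) = 0) :
    (∑ i, b i * a i) ∈ jacobsonRadical A := by
  rw [jacobsonRadical, Ideal.jacobson, Submodule.mem_sInf]
  rintro m ⟨-, hm⟩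
  have : IsSimpleModule A (A ⧸ m) := isSimpleModule_iff_isCoatom.mpr hm.out
  have h := aux_main (X := A ⧸ m) (aux_schur_s7 m) a b (by
    intro x z hz
    by_contra hu
    have hmem : z ∈ spectrum ℂ (∑ i, a i * x * b i) := hu
    have hle : (‖z‖₊ : ℝ≥0∞) ≤ spectralRadius ℂ (∑ i, a i * x * b i) :=
      le_iSup₂ (f := fun (k : ℂ) (_ : k ∈ spectrum ℂ (∑ i, a i * x * b i)) => (‖k‖₊ : ℝ≥0∞)) z hmem
    rw [hS x] at hle
    simp [hz] at hle) (Submodule.Quotient.mk 1)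
  rw [← Submodule.Quotient.mk_smul, smul_eq_mul, mul_one, Submodule.Quotient.mk_eq_zero] at h
  exact h
end

section
/- Let A be a unital complex Banach algebra, let S = Σ_{i=1}^n M_{a_i,b_i} be a spectrally bounded elementary operator on A, and let ρ be an irreducible representation of A on a complex Banach space E. Then for every ζ ∈ E and every x ∈ A satisfying ρ(x)ρ(b_i a_j)ζ ∈ ℂζ for all 1 ≤ i, j ≤ n and ρ(x)ζ = 0, the operator Σ_{i=1}^n ρ(a_i)ρ(x)ρ(b_i) maps the finite-dimensional subspace span{ρ(a_1)ζ, …, ρ(a_n)ζ} into itself and its restriction to this subspace is nilpotent. -/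
open scoped ENNReal NNReal

theorem aux_exp {E : Type*} [NormedAddCommGroup E] [NormedSpace ℂ E] [CompleteSpace E]
    (y : E →L[ℂ] E) (l : ℂ) (v : E) (h : y v = l • v) :
    (NormedSpace.exp y) v = Complex.exp l • v := by
  have h1 := NormedSpace.exp_series_hasSum_exp' (𝕂 := ℂ) y
  have h2 := h1.mapL (ContinuousLinearMap.apply ℂ E v)
  have h3 := (NormedSpace.exp_series_hasSum_exp' (𝕂 := ℂ) l).smul_const v
  have hp : ∀ n : ℕ, (y ^ n) v = l ^ n • v := by
    intro n
    induction n with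
    | zero => simp
    | succ k ih => rw [pow_succ', ContinuousLinearMap.mul_apply, ih, map_smul, h, smul_smul,
        ← pow_succ]
  rw [Complex.exp_eq_exp_ℂ]
  refine HasSum.unique ?_ h3
  convert h2 using 2 with n
  · simp [hp, smul_smul]
  · rfl

theorem aux_schur_s9 {A : Type*} [NormedRing A] [NormedAlgebra ℂ A] [CompleteSpace A]
    {E : Type*} [NormedAddCommGroup E] [NormedSpace ℂ E] [CompleteSpace E]
    (ρ : A →ₐ[ℂ] (E →L[ℂ] E)) (hρcont : Continuous ρ)
    (hρirr : ∀ ζ : E, ζ ≠ 0 → ∀ η : E, ∃ y : A, ρ y ζ = η)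
    (ζ : E) (hζ : ζ ≠ 0) (D : E →+ E) (hD : ∀ y v, D (ρ y v) = ρ y (D v)) :
    ∃ l : ℂ, ∀ v, D v = l • v := by
  have hsc : ∀ (c : ℂ) v, D (c • v) = c • D v := by
    intro c v
    have := hD (algebraMap ℂ A c) v
    simpa [AlgHom.commutes, Algebra.algebraMap_eq_smul_one] using this
  let ρL : A →L[ℂ] (E →L[ℂ] E) := ⟨ρ.toLinearMap, hρcont⟩
  let ev : A →L[ℂ] E := (ContinuousLinearMap.apply ℂ E ζ).comp ρL
  have hev : ∀ y, ev y = ρ y ζ := fun y => rfl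
  obtain ⟨C, hC, hpre⟩ := ev.exists_preimage_norm_le (fun η => hρirr ζ hζ η)
  let DL : E →ₗ[ℂ] E := { toFun := D, map_add' := D.map_add, map_smul' := hsc }
  let Dc : E →L[ℂ] E := DL.mkContinuous (‖ρL‖ * C * ‖D ζ‖) (by
    intro η
    obtain ⟨y, hy, hn⟩ := hpre η
    have : DL η = ρL y (D ζ) := by
      rw [← hy, hev]; exact hD y ζ
    rw [this]
    calc ‖ρL y (D ζ)‖ ≤ ‖ρL y‖ * ‖D ζ‖ := (ρL y).le_opNorm _
      _ ≤ (‖ρL‖ * ‖y‖) * ‖D ζ‖ := by gcongr; exact ρL.le_opNorm _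
      _ ≤ (‖ρL‖ * (C * ‖η‖)) * ‖D ζ‖ := by gcongr
      _ = _ := by ring)
  have hDc : ∀ v, Dc v = D v := fun v => rfl
  haveI : Nontrivial E := ⟨ζ, 0, hζ⟩
  obtain ⟨l, hl⟩ := spectrum.nonempty Dc
  refine ⟨l, ?_⟩
  by_contra hne
  push Not at hne
  obtain ⟨v0, hv0⟩ := hne
  rw [spectrum.mem_iff] at hl
  apply hl
  set F : E →L[ℂ] E := algebraMap ℂ (E →L[ℂ] E) l - Dc with hF
  have hFv : ∀ v, F v = l • v - D v := by
    intro v; simp [hF, Algebra.algebraMap_eq_smul_one, hDc]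
  have hcomm : ∀ y v, F (ρ y v) = ρ y (F v) := by
    intro y v; rw [hFv, hFv, hD, map_sub, map_smul]
  have hF0 : F v0 ≠ 0 := by
    rw [hFv]; exact sub_ne_zero.2 (Ne.symm hv0)
  have hinj : Function.Injective F := by
    rw [injective_iff_map_eq_zero]
    intro v hv
    by_contra hvn
    obtain ⟨y, hy⟩ := hρirr v hvn v0
    apply hF0
    rw [← hy, hcomm, hv, map_zero]
  have hsurj : Function.Surjective F := by
    intro η
    obtain ⟨y, hy⟩ := hρirr _ hF0 η
    exact ⟨ρ y v0, by rw [hcomm, hy]⟩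
  exact ContinuousLinearMap.isUnit_iff_bijective.2 ⟨hinj, hsurj⟩

theorem aux_density_s9 {A : Type*} [NormedRing A] [NormedAlgebra ℂ A] [CompleteSpace A]
    {E : Type*} [NormedAddCommGroup E] [NormedSpace ℂ E] [CompleteSpace E]
    (ρ : A →ₐ[ℂ] (E →L[ℂ] E)) (hρcont : Continuous ρ)
    (hρirr : ∀ ζ : E, ζ ≠ 0 → ∀ η : E, ∃ y : A, ρ y ζ = η)
    (ζ : E) (hζ : ζ ≠ 0) (f : E →ₗ[ℂ] E) (s : Finset E) :
    ∃ y : A, ∀ m ∈ s, ρ y m = f m := by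
  letI : Module A E := Module.compHom E (ρ : A →+* (E →L[ℂ] E))
  have hsm : ∀ (y : A) (v : E), y • v = ρ y v := fun y v => rfl
  haveI : Nontrivial E := ⟨ζ, 0, hζ⟩
  haveI : IsSimpleModule A E := by
    rw [isSimpleModule_iff_toSpanSingleton_surjective]
    exact ⟨inferInstance, fun v hv η => hρirr v hv η⟩
  have key : ∀ D : Module.End A E, ∃ l : ℂ, ∀ v, D v = l • v := fun D =>
    aux_schur_s9 ρ hρcont hρirr ζ hζ D.toAddMonoidHom (fun y v => D.map_smul y v)
  let g : Module.End (Module.End A E) E :=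
    { toFun := f
      map_add' := f.map_add
      map_smul' := by
        intro D v
        obtain ⟨l, hl⟩ := key D
        simp [Module.End.smul_def, hl] }
  obtain ⟨r, hr⟩ := jacobson_density (R := A) g s
  exact ⟨r, fun m hm => (hr m hm).symm⟩

theorem aux_nilp {V : Type*} [AddCommGroup V] [Module ℂ V] [FiniteDimensional ℂ V]
    (T : Module.End ℂ V) (h : ∀ μ : ℂ, T.HasEigenvalue μ → μ = 0) : IsNilpotent T := by
  have h1 := Module.End.iSup_maxGenEigenspace_eq_top T
  have h2 : T.maxGenEigenspace 0 = ⊤ := by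
    rw [eq_top_iff, ← h1]
    refine iSup_le fun μ => ?_
    by_cases hμ : μ = 0
    · rw [hμ]
    · have : ¬ T.HasEigenvalue μ := fun hh => hμ (h μ hh)
      have hb : T.maxGenEigenspace μ = ⊥ := by
        by_contra hne
        apply this
        have hk : T.HasUnifEigenvalue μ ⊤ := hne
        exact hk.lt (by simp)
      rw [hb]; exact bot_le
  rw [Module.End.maxGenEigenspace_eq_genEigenspace_finrank] at h2
  refine ⟨Module.finrank ℂ V, ?_⟩
  ext v
  have : v ∈ T.genEigenspace 0 (Module.finrank ℂ V) := h2 ▸ Submodule.mem_top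
  simpa [Module.End.mem_genEigenspace_nat] using this

/-- **Lemma 3.3.** Let `A` be a unital complex Banach algebra, let
`S = Σ_{i=1}^n M_{a_i,b_i}` be a spectrally bounded elementary operator on `A`,
and let `ρ` be an irreducible representation of `A` on a complex Banach
space `E`.  Then for every `ζ ∈ E` and every `x ∈ A` satisfying
`ρ(x)ρ(b_i a_j)ζ ∈ ℂζ` for all `i, j` and `ρ(x)ζ = 0`, the operator
`Σ_{i=1}^n ρ(a_i)ρ(x)ρ(b_i)` leaves the finite-dimensional subspace
`span{ρ(a_1)ζ, …, ρ(a_n)ζ}` invariant and its restriction to this subspace is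
nilpotent. -/
theorem spectrally_bounded_elementary_operator_local_nilpotency
    {A : Type*} [NormedRing A] [NormedAlgebra ℂ A] [CompleteSpace A]
    {E : Type*} [NormedAddCommGroup E] [NormedSpace ℂ E] [CompleteSpace E]
    {n : ℕ} (a b : Fin n → A)
    (hS : SpectrallyBounded (fun x : A => ∑ i, a i * x * b i))
    (ρ : A →ₐ[ℂ] (E →L[ℂ] E)) (hρcont : Continuous ρ)
    (hρirr : ∀ ζ : E, ζ ≠ 0 → ∀ η : E, ∃ y : A, ρ y ζ = η)
    (ζ : E) (x : A)
    (hx : ∀ i j : Fin n, ∃ c : ℂ, ρ x (ρ (b i * a j) ζ) = c • ζ)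
    (hxζ : ρ x ζ = 0) :
    (∀ w ∈ Submodule.span ℂ (Set.range fun i => ρ (a i) ζ),
        (∑ i, ρ (a i) * ρ x * ρ (b i)) w ∈
          Submodule.span ℂ (Set.range fun i => ρ (a i) ζ)) ∧
      ∃ k : ℕ, ∀ w ∈ Submodule.span ℂ (Set.range fun i => ρ (a i) ζ),
        ((∑ i, ρ (a i) * ρ x * ρ (b i)) ^ k) w = 0 := by
  set W := Submodule.span ℂ (Set.range fun i => ρ (a i) ζ) with hW
  set T : E →L[ℂ] E := ∑ i, ρ (a i) * ρ x * ρ (b i) with hT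
  have hTj : ∀ j, T (ρ (a j) ζ) = ∑ i, ρ (a i) (ρ x (ρ (b i * a j) ζ)) := by
    intro j; simp [hT, ContinuousLinearMap.sum_apply]
  have hinv : ∀ w ∈ W, T w ∈ W := by
    have : W ≤ W.comap (T : E →ₗ[ℂ] E) := by
      rw [hW, Submodule.span_le]
      rintro _ ⟨j, rfl⟩
      change T (ρ (a j) ζ) ∈ W
      rw [hTj]
      refine Submodule.sum_mem _ fun i _ => ?_
      obtain ⟨c, hc⟩ := hx i j
      rw [hc, map_smul]
      exact W.smul_mem _ (Submodule.subset_span ⟨i, rfl⟩)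
    exact this
  refine ⟨hinv, ?_⟩
  by_cases hζ : ζ = 0
  · refine ⟨0, fun w hw => ?_⟩
    have : W ≤ ⊥ := by
      rw [hW, Submodule.span_le]; rintro _ ⟨j, rfl⟩; simp [hζ]
    simpa using this hw
  obtain ⟨M, hM⟩ := hS
  -- the scaling trick
  have hscale : ∀ s : ℝ, ∃ u : Aˣ, ∀ w ∈ W,
      ρ (∑ i, a i * (u * x * ((u⁻¹ : Aˣ) : A)) * b i) w = Complex.exp s • T w := by
    intro s
    obtain ⟨φ, hφ⟩ := Module.Projective.exists_dual_ne_zero ℂ hζ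
    let f : E →ₗ[ℂ] E := (φ ζ)⁻¹ • φ.smulRight ζ
    have hf : ∀ v, f v = ((φ ζ)⁻¹ * φ v) • ζ := by intro v; simp [f, smul_smul]
    classical
    obtain ⟨y, hy⟩ := aux_density_s9 ρ hρcont hρirr ζ hζ f
      (insert ζ (Finset.univ.image fun p : Fin n × Fin n => ρ (b p.1 * a p.2) ζ))
    have hyζ : ρ y ζ = ζ := by
      rw [hy ζ (by simp), hf, inv_mul_cancel₀ hφ, one_smul]
    letI : NormedAlgebra ℚ A := NormedAlgebra.restrictScalars ℚ ℂ A
    letI : NormedAlgebra ℚ (E →L[ℂ] E) := NormedAlgebra.restrictScalars ℚ ℂ (E →L[ℂ] E)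
    let u : Aˣ := ⟨NormedSpace.exp ((s : ℂ) • y), NormedSpace.exp (-((s : ℂ) • y)),
      by rw [← NormedSpace.exp_add_of_commute (Commute.neg_right (Commute.refl _))]; simp,
      by rw [← NormedSpace.exp_add_of_commute (Commute.neg_left (Commute.refl _))]; simp⟩
    have hu : ρ (u : A) = NormedSpace.exp ((s : ℂ) • ρ y) := by
      change ρ (NormedSpace.exp ((s : ℂ) • y)) = _
      rw [NormedSpace.map_exp ρ hρcont, map_smul]
    have hu' : ρ ((u⁻¹ : Aˣ) : A) = NormedSpace.exp (-((s : ℂ) • ρ y)) := by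
      change ρ (NormedSpace.exp (-((s : ℂ) • y))) = _
      rw [NormedSpace.map_exp ρ hρcont, map_neg, map_smul]
    have huζ : ρ (u : A) ζ = Complex.exp s • ζ := by
      rw [hu]; exact aux_exp _ _ _ (by simp [hyζ])
    have huζ' : ρ ((u⁻¹ : Aˣ) : A) ζ = Complex.exp (-s) • ζ := by
      rw [hu']; exact aux_exp _ _ _ (by simp [hyζ])
    have hmain : ∀ i j, ρ (u * x * ((u⁻¹ : Aˣ) : A)) (ρ (b i * a j) ζ)
        = Complex.exp s • ρ x (ρ (b i * a j) ζ) := by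
      intro i j
      set v := ρ (b i * a j) ζ with hv
      obtain ⟨c, hc⟩ := hx i j
      rw [← hv] at hc
      set d := (φ ζ)⁻¹ * φ v with hd
      have hyv : ρ y v = d • ζ := by
        rw [hy v (by
          refine Finset.mem_insert_of_mem (Finset.mem_image.2 ⟨(i, j), by simp, rfl⟩)), hf]
      have h1 : ρ ((u⁻¹ : Aˣ) : A) (v - d • ζ) = v - d • ζ := by
        rw [hu', aux_exp _ 0 _ (by simp [hyζ, hyv])]; simp
      have h2 : ρ ((u⁻¹ : Aˣ) : A) v = (v - d • ζ) + (d * Complex.exp (-s)) • ζ := by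
        rw [← h1, map_sub, map_smul, huζ', smul_smul]; abel
      rw [map_mul, map_mul, ContinuousLinearMap.mul_apply, ContinuousLinearMap.mul_apply, h2,
        map_add, map_sub, map_smul, map_smul, hxζ, hc]
      simp only [smul_zero, sub_zero, add_zero, map_smul, huζ]
      rw [smul_comm]
    refine ⟨u, ?_⟩
    have hle : W ≤ LinearMap.eqLocus
        ((ρ (∑ i, a i * (u * x * ((u⁻¹ : Aˣ) : A)) * b i) : E →L[ℂ] E) : E →ₗ[ℂ] E)
        ((Complex.exp s • T : E →L[ℂ] E) : E →ₗ[ℂ] E) := by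
      rw [hW, Submodule.span_le]
      rintro _ ⟨j, rfl⟩
      change ρ (∑ i, a i * (u * x * ((u⁻¹ : Aˣ) : A)) * b i) (ρ (a j) ζ)
        = Complex.exp s • T (ρ (a j) ζ)
      rw [hTj, Finset.smul_sum, map_sum, ContinuousLinearMap.sum_apply]
      refine Finset.sum_congr rfl fun i _ => ?_
      rw [← map_smul, ← hmain]
      simp only [map_mul, ContinuousLinearMap.mul_apply]
    exact fun w hw => hle hw
  have hfin : ∃ R : ℝ, 0 ≤ R ∧ spectralRadius ℂ x ≤ ENNReal.ofReal R := by
    refine ⟨‖x‖ * ‖(1 : A)‖, by positivity, ?_⟩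
    refine iSup₂_le fun k hk => ?_
    change ‖k‖ₑ ≤ _; rw [← ofReal_norm]
    exact ENNReal.ofReal_le_ofReal (spectrum.norm_le_norm_mul_of_mem hk)
  obtain ⟨R, hR0, hR⟩ := hfin
  have heig : ∀ (μ : ℂ) (w : E), w ∈ W → w ≠ 0 → T w = μ • w → μ = 0 := by
    intro μ w hw hw0 hTw
    have hbound : ∀ s : ℝ, Real.exp s * ‖μ‖ ≤ M * R := by
      intro s
      obtain ⟨u, hu⟩ := hscale s
      set z := u * x * ((u⁻¹ : Aˣ) : A) with hz
      have hmem : Complex.exp s * μ ∈ spectrum ℂ (∑ i, a i * z * b i) := by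
        apply AlgHom.spectrum_apply_subset ρ
        rw [spectrum.mem_iff]
        intro hun
        apply hw0
        have hb := (ContinuousLinearMap.isUnit_iff_bijective.1 hun).1
        apply hb
        rw [map_zero, ContinuousLinearMap.sub_apply, hu w hw, hTw]
        simp [Algebra.algebraMap_eq_smul_one, smul_smul]
      have hrad : spectralRadius ℂ z = spectralRadius ℂ x := by
        unfold spectralRadius
        rw [hz, spectrum.units_conjugate]
      have h1 : ENNReal.ofReal ‖Complex.exp s * μ‖ ≤ spectralRadius ℂ (∑ i, a i * z * b i) := by
        rw [ofReal_norm]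
        exact le_iSup₂ (f := fun (k : ℂ) (_ : k ∈ spectrum ℂ (∑ i, a i * z * b i)) =>
          (‖k‖₊ : ENNReal)) _ hmem
      have h2 := h1.trans (hM z)
      rw [hrad] at h2
      have h3 := h2.trans (mul_le_mul_right hR (M : ENNReal))
      rw [← ENNReal.ofReal_coe_nnreal, ← ENNReal.ofReal_mul (by positivity),
        ENNReal.ofReal_le_ofReal_iff (by positivity), norm_mul, Complex.norm_exp] at h3
      simpa using h3
    by_contra hμ
    have hpos : 0 < ‖μ‖ := norm_pos_iff.2 hμ
    have h1 := hbound ((M * R + 1) / ‖μ‖)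
    have h2 := Real.add_one_le_exp ((M * R + 1) / ‖μ‖)
    have h3 : ((M * R + 1) / ‖μ‖) * ‖μ‖ = M * R + 1 := by field_simp
    nlinarith
  haveI : FiniteDimensional ℂ W := FiniteDimensional.span_of_finite ℂ (Set.finite_range _)
  let TW : Module.End ℂ W := (T : E →ₗ[ℂ] E).restrict hinv
  obtain ⟨k, hk⟩ := aux_nilp TW (by
    intro μ hμ
    obtain ⟨w, hw⟩ := hμ.exists_hasEigenvector
    refine heig μ w w.2 (fun h => hw.2 (Subtype.ext h)) ?_
    exact congrArg Subtype.val hw.apply_eq_smul)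
  refine ⟨k, fun w hw => ?_⟩
  have hpow : ∀ (m : ℕ) (v : W), ((TW ^ m) v : E) = (T ^ m) v := by
    intro m
    induction m with
    | zero => intro v; simp
    | succ m ih =>
      intro v
      rw [pow_succ, pow_succ, Module.End.mul_apply, ih, ContinuousLinearMap.mul_apply]
      rfl
  rw [← hpow k ⟨w, hw⟩, hk]; simp
end

section
/- Let A be a unital complex Banach algebra, let S = M_{a,b} + M_{c,d} be a spectrally bounded elementary operator on A of length 2, and set S* = M_{b,a} + M_{d,c}. Let ρ be an irreducible representation of A on a complex Banach space E. If dim E ≠ 2, then the induced map S_ρ* S_ρ on ρ(A) is a scalar multiple of the identity map, i.e. there is μ ∈ ℂ with S_ρ*(S_ρ(z)) = μ·z for all z ∈ ρ(A). If dim E = 2, then either S_ρ* S_ρ is a scalar multiple of the identity map or there is μ ∈ ℂ with S_ρ*(S_ρ(z)) = μ·Tr(z)·I for all z ∈ ρ(A). In either case, the commutator [S*(S(x)), x] lies in rad(A) for every x ∈ A. -/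
open scoped ENNReal NNReal

section analytic
variable {A : Type*} [NormedRing A] [NormedAlgebra ℂ A] [CompleteSpace A]
    {E : Type*} [NormedAddCommGroup E] [NormedSpace ℂ E] [CompleteSpace E]

/-- The commutant of an irreducible representation is scalar. -/
theorem commutant_scalar [Nontrivial E] (ρ : A →ₐ[ℂ] (E →L[ℂ] E)) (hρcont : Continuous ρ)
    (hρirr : ∀ ζ : E, ζ ≠ 0 → ∀ η : E, ∃ y : A, ρ y ζ = η)
    (T : E →ₗ[ℂ] E) (hT : ∀ (y : A) (v : E), T (ρ y v) = ρ y (T v)) :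
    ∃ z : ℂ, ∀ v, T v = z • v := by
  obtain ⟨ζ, hζ⟩ := exists_ne (0 : E)
  -- orbit map
  let π : A →L[ℂ] E := (ContinuousLinearMap.apply ℂ E ζ).comp ⟨ρ.toLinearMap, hρcont⟩
  have hπ : ∀ y, π y = ρ y ζ := fun y => rfl
  have hsurj : Function.Surjective π := fun η => hρirr ζ hζ η
  obtain ⟨C, hC, hpre⟩ := π.exists_preimage_norm_le hsurj
  obtain ⟨t, ht⟩ := hρirr ζ hζ (T ζ)
  let R : A →L[ℂ] E := (ContinuousLinearMap.apply ℂ E (T ζ)).comp ⟨ρ.toLinearMap, hρcont⟩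
  have hR : ∀ y, R y = ρ y (T ζ) := fun y => rfl
  have hbd : ∀ v, ‖T v‖ ≤ (‖R‖ * C) * ‖v‖ := by
    intro v
    obtain ⟨y, hy, hyn⟩ := hpre v
    rw [← hy, hπ, hT, ← hR, mul_assoc]
    refine (R.le_opNorm y).trans ?_
    gcongr
    rw [← hπ, hy]; exact hyn
  let T' : E →L[ℂ] E := T.mkContinuous _ hbd
  have hT'v : ∀ v, T' v = T v := fun v => rfl
  obtain ⟨z, hz⟩ := spectrum.nonempty T'
  refine ⟨z, ?_⟩
  by_contra hne
  push Not at hne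
  obtain ⟨w, hw⟩ := hne
  apply hz
  let D : E →L[ℂ] E := algebraMap ℂ (E →L[ℂ] E) z - T'
  have hD : ∀ v, D v = z • v - T v := fun v => by
    simp [D, hT'v, Algebra.algebraMap_eq_smul_one]
  have hDc : ∀ y v, D (ρ y v) = ρ y (D v) := fun y v => by
    simp [hD, hT, map_sub]
  have hDw : D w ≠ 0 := by
    rw [hD]; intro h; exact hw (sub_eq_zero.mp h).symm
  have hinj : LinearMap.ker (D : E →ₗ[ℂ] E) = ⊥ := by
    rw [LinearMap.ker_eq_bot']
    intro v hv
    by_contra hv0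
    obtain ⟨y, hy⟩ := hρirr v hv0 w
    apply hDw
    rw [← hy, hDc]
    have : D v = 0 := hv
    rw [this, map_zero]
  have hran : LinearMap.range (D : E →ₗ[ℂ] E) = ⊤ := by
    rw [LinearMap.range_eq_top]
    intro η
    obtain ⟨y, hy⟩ := hρirr (D w) hDw η
    exact ⟨ρ y w, by simpa [hDc] using hy⟩
  let e := ContinuousLinearEquiv.ofBijective D hinj hran
  have he : (e : E →L[ℂ] E) = D := by ext v; rfl
  show IsUnit D
  rw [← he]
  exact ((ContinuousLinearEquiv.unitsEquiv ℂ E).symm e).isUnit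

theorem density [Nontrivial E] (ρ : A →ₐ[ℂ] (E →L[ℂ] E)) (hρcont : Continuous ρ)
    (hρirr : ∀ ζ : E, ζ ≠ 0 → ∀ η : E, ∃ y : A, ρ y ζ = η)
    (φ : E →ₗ[ℂ] E) (s : Finset E) : ∃ y : A, ∀ v ∈ s, ρ y v = φ v := by
  let _ : Module A E := Module.compHom E (ρ.toRingHom : A →+* (E →L[ℂ] E))
  have hsm : ∀ (y : A) (v : E), y • v = ρ y v := fun y v => rfl
  have _ : IsSimpleModule A E := by
    rw [isSimpleModule_iff_toSpanSingleton_surjective]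
    refine ⟨inferInstance, fun v hv w => ?_⟩
    obtain ⟨y, hy⟩ := hρirr v hv w
    exact ⟨y, by simpa [hsm] using hy⟩
  have hsc : ∀ T : Module.End A E, ∃ z : ℂ, ∀ v, T v = z • v := by
    intro T
    have hT : ∀ (y : A) (v : E), T (ρ y v) = ρ y (T v) := fun y v => by
      rw [← hsm, map_smul, hsm]
    refine commutant_scalar ρ hρcont hρirr ⟨⟨T, map_add T⟩, ?_⟩ hT
    intro z v
    have := hT (algebraMap ℂ A z) v
    simpa [Algebra.algebraMap_eq_smul_one] using this
  let f : Module.End (Module.End A E) E := ⟨⟨φ, map_add φ⟩, by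
    intro T v
    obtain ⟨z, hz⟩ := hsc T
    simp [hz]⟩
  obtain ⟨y, hy⟩ := jacobson_density f s
  exact ⟨y, fun v hv => (hy v hv).symm⟩

theorem exp_eigen (T : E →L[ℂ] E) (v : E) (k : ℂ) (h : T v = k • v) :
    NormedSpace.exp T v = Complex.exp k • v := by
  have h1 := NormedSpace.exp_series_hasSum_exp' (𝕂 := ℂ) T
  have h2 := h1.mapL (ContinuousLinearMap.apply ℂ E v)
  have h3 := (NormedSpace.exp_series_hasSum_exp' (𝕂 := ℂ) k).smul_const v
  have hp : ∀ n : ℕ, (T ^ n) v = k ^ n • v := by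
    intro n
    induction n with
    | zero => simp
    | succ n ih => rw [pow_succ', mul_apply_eq_comp, ih, map_smul, h, smul_smul, pow_succ]
  have h4 := h2.unique (a₂ := NormedSpace.exp k • v) (by
    convert h3 using 2 with n
    simp [hp, smul_smul])
  rw [Complex.exp_eq_exp_ℂ]
  simpa using h4


theorem spectralRadius_le_mul (x : A) : spectralRadius ℂ x ≤ ((‖x‖₊ * ‖(1 : A)‖₊ : ℝ≥0) : ℝ≥0∞) := by
  refine iSup₂_le fun k hk => ?_
  have := spectrum.norm_le_norm_mul_of_mem hk
  exact_mod_cast this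

theorem spectralRadius_conj (u : Aˣ) (x : A) :
    spectralRadius ℂ ((u : A) * x * ((u⁻¹ : Aˣ) : A)) = spectralRadius ℂ x := by
  unfold spectralRadius
  rw [spectrum.units_conjugate]

theorem eigen_mem_spectrum (ρ : A →ₐ[ℂ] (E →L[ℂ] E)) (x : A) (v : E) (hv : v ≠ 0) (μ : ℂ)
    (h : ρ x v = μ • v) : μ ∈ spectrum ℂ x := by
  intro hu
  have h1 : IsUnit (ρ (algebraMap ℂ A μ - x)) := hu.map ρ
  obtain ⟨w, hw⟩ := h1
  have h2 : ρ (algebraMap ℂ A μ - x) v = 0 := by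
    simp [h, Algebra.algebraMap_eq_smul_one]
  apply hv
  have h3 : ((w⁻¹ : (E →L[ℂ] E)ˣ) : E →L[ℂ] E) ((w : E →L[ℂ] E) v) = v := by
    rw [← mul_apply_eq_comp, Units.inv_mul]; rfl
  rw [hw, h2, map_zero] at h3
  exact h3.symm

/-- The algebraic consequence of spectral boundedness used below. -/
def KProp {E : Type*} [AddCommGroup E] [Module ℂ E] (a b c d : E →ₗ[ℂ] E) : Prop :=
  ∀ N H : E →ₗ[ℂ] E, (∀ v, H (N v) = N (H v) + N v) →
    (∀ w, ∃ w0 w1 w2, w = w0 + w1 + w2 ∧ H w0 = 0 ∧ H w1 = w1 ∧ H w2 = (2 : ℂ) • w2) →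
    ∀ (v : E) (μ : ℂ), v ≠ 0 → a (N (b v)) + c (N (d v)) = μ • v → μ = 0

theorem kprop_of_bounded (a b c d : A)
    (hS : SpectrallyBounded (fun x : A => a * x * b + c * x * d))
    (ρ : A →ₐ[ℂ] (E →L[ℂ] E)) (hρcont : Continuous ρ)
    (hρirr : ∀ ζ : E, ζ ≠ 0 → ∀ η : E, ∃ y : A, ρ y ζ = η) :
    KProp (ρ a).toLinearMap (ρ b).toLinearMap (ρ c).toLinearMap (ρ d).toLinearMap := by
  classical
  intro N H hNH hdec v μ hv hev
  have : Nontrivial E := ⟨v, 0, hv⟩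
  obtain ⟨M, hM⟩ := hS
  let _ : NormedAlgebra ℚ A := NormedAlgebra.restrictScalars ℚ ℂ A
  let _ : NormedAlgebra ℚ (E →L[ℂ] E) := NormedAlgebra.restrictScalars ℚ ℂ (E →L[ℂ] E)
  obtain ⟨p0, p1, p2, hp, hp0, hp1, hp2⟩ := hdec (ρ b v)
  obtain ⟨q0, q1, q2, hq, hq0, hq1, hq2⟩ := hdec (ρ d v)
  let s : Finset E := {p0, p1, p2, q0, q1, q2, N p0, N p1, N p2, N q0, N q1, N q2}
  obtain ⟨y, hy⟩ := density ρ hρcont hρirr H s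
  obtain ⟨x, hx⟩ := density ρ hρcont hρirr N s
  have key : ∀ t : ℝ, ‖Complex.exp t * μ‖ ≤ M * (‖x‖ * ‖(1 : A)‖) := by
    intro t
    have hexp : ∀ (t : ℂ) (w : E) (k : ℂ), ρ y w = k • w →
        ρ (NormedSpace.exp (t • y)) w = Complex.exp (t * k) • w := by
      intro t w k hw
      rw [NormedSpace.map_exp ρ hρcont, map_smul]
      apply exp_eigen
      simp [hw, smul_smul]
    obtain ⟨u, hu⟩ := NormedSpace.isUnit_exp ((t : ℂ) • y)
    have hui : ((u⁻¹ : Aˣ) : A) = NormedSpace.exp ((-t : ℂ) • y) := by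
      apply Units.inv_eq_of_mul_eq_one_right
      rw [hu, ← NormedSpace.exp_add_of_commute (by simp), ← add_smul]
      simp
    set z : A := (u : A) * x * ((u⁻¹ : Aˣ) : A) with hz
    have hzw : ∀ (w : E) (k : ℂ), w ∈ s → N w ∈ s → H w = k • w → ρ z w = Complex.exp t • N w := by
      intro w k hw hNw hk
      have h1 : ρ y w = k • w := by rw [hy w hw, hk]
      have h2 : ρ y (N w) = (k + 1) • N w := by
        rw [hy _ hNw, hNH, hk, map_smul, add_smul, one_smul]
      rw [hz, map_mul, map_mul, mul_apply_eq_comp, mul_apply_eq_comp, hui, hu,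
        hexp _ _ _ h1, map_smul, hx w hw, map_smul, hexp _ _ _ h2, smul_smul, ← Complex.exp_add]
      congr 2; ring
    have hzb : ρ z (ρ b v) = Complex.exp t • N (ρ b v) := by
      rw [hp, map_add, map_add, hzw p0 0 (by simp [s]) (by simp [s]) (by simp [hp0]),
        hzw p1 1 (by simp [s]) (by simp [s]) (by simp [hp1]),
        hzw p2 2 (by simp [s]) (by simp [s]) hp2]
      simp
    have hzd : ρ z (ρ d v) = Complex.exp t • N (ρ d v) := by
      rw [hq, map_add, map_add, hzw q0 0 (by simp [s]) (by simp [s]) (by simp [hq0]),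
        hzw q1 1 (by simp [s]) (by simp [s]) (by simp [hq1]),
        hzw q2 2 (by simp [s]) (by simp [s]) hq2]
      simp
    have hsp : Complex.exp t * μ ∈ spectrum ℂ (a * z * b + c * z * d) := by
      apply eigen_mem_spectrum ρ _ v hv
      simp only [map_add, map_mul, ContinuousLinearMap.add_apply, mul_apply_eq_comp, hzb, hzd,
        map_smul]
      rw [← smul_add, mul_smul, ← hev]
      rfl
    have h1 : (‖Complex.exp t * μ‖₊ : ℝ≥0∞) ≤ spectralRadius ℂ (a * z * b + c * z * d) :=
      le_iSup₂ (f := fun k (_ : k ∈ spectrum ℂ (a * z * b + c * z * d)) => (‖k‖₊ : ℝ≥0∞)) _ hsp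
    have h2 := h1.trans (hM z)
    rw [hz, spectralRadius_conj] at h2
    have h3 := h2.trans (mul_le_mul_right (spectralRadius_le_mul x) (M : ℝ≥0∞))
    exact_mod_cast h3
  by_contra hμ
  have hμ' : 0 < ‖μ‖ := norm_pos_iff.mpr hμ
  set B := M * (‖x‖ * ‖(1 : A)‖) with hB
  have h1 := key (B / ‖μ‖)
  rw [norm_mul, Complex.norm_exp, Complex.ofReal_re] at h1
  have h2 := Real.add_one_le_exp (B / ‖μ‖)
  have h3 : (B / ‖μ‖ + 1) * ‖μ‖ ≤ B := (mul_le_mul_of_nonneg_right h2 hμ'.le).trans h1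
  rw [add_mul, div_mul_cancel₀ _ hμ'.ne'] at h3
  linarith

end analytic

section linalg

theorem matrix_trace_zero {n : Type*} [Fintype n] [DecidableEq n] (G : Matrix n n ℂ)
    (h : ∀ (x : n → ℂ) (μ : ℂ), x ≠ 0 → G.mulVec x = μ • x → μ = 0) : G.trace = 0 := by
  rw [Matrix.trace_eq_sum_roots_charpoly]
  apply Multiset.sum_eq_zero
  intro μ hμ
  have h1 : G.charpoly.IsRoot μ := Polynomial.isRoot_of_mem_roots hμ
  have h2 : (Matrix.scalar n μ - G).det = 0 := by
    rw [← Matrix.eval_charpoly]; exact h1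
  obtain ⟨x, hx, hx2⟩ := Matrix.exists_mulVec_eq_zero_iff.mpr h2
  apply h x μ hx
  rw [Matrix.sub_mulVec, sub_eq_zero] at hx2
  rw [← hx2]
  ext i
  simp [Matrix.scalar_apply, Matrix.mulVec_diagonal]

theorem matrix_trace_sq_zero {n : Type*} [Fintype n] [DecidableEq n] (G : Matrix n n ℂ)
    (h : ∀ (x : n → ℂ) (μ : ℂ), x ≠ 0 → G.mulVec x = μ • x → μ = 0) : (G * G).trace = 0 := by
  apply matrix_trace_zero
  intro x ν hx hν
  obtain ⟨w, hw⟩ := IsAlgClosed.exists_pow_nat_eq ν (n := 2) (by norm_num)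
  rw [← Matrix.mulVec_mulVec] at hν
  have hw0 : w = 0 := by
    by_cases hy : G.mulVec x + w • x = 0
    · have := h x (-w) hx (by rw [neg_smul]; exact eq_neg_of_add_eq_zero_left hy)
      simpa using this
    · apply h _ w hy
      rw [Matrix.mulVec_add, Matrix.mulVec_smul, hν, ← hw, smul_add, smul_smul, pow_two]
      abel
  rw [← hw, hw0]; simp

variable {E : Type*} [AddCommGroup E] [Module ℂ E]

theorem nil_trace {n : ℕ} (U : Fin n → E) (W : Fin n → (E →ₗ[ℂ] ℂ))
    (h : ∀ (v : E) (μ : ℂ), v ≠ 0 → ∑ i, W i v • U i = μ • v → μ = 0) :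
    (∑ i, W i (U i) = 0) ∧ (∑ i, ∑ j, W i (U j) * W j (U i) = 0) := by
  let G : Matrix (Fin n) (Fin n) ℂ := Matrix.of fun i j => W i (U j)
  have hG : ∀ (x : Fin n → ℂ) (μ : ℂ), x ≠ 0 → G.mulVec x = μ • x → μ = 0 := by
    intro x μ hx hμ
    have hc : ∀ i, W i (∑ j, x j • U j) = μ * x i := by
      intro i
      have := congrFun hμ i
      simp only [Matrix.mulVec, dotProduct, G, Matrix.of_apply, Pi.smul_apply, smul_eq_mul] at this
      rw [← this, map_sum]
      exact Finset.sum_congr rfl fun j _ => by simp [mul_comm]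
    by_cases hv : ∑ j, x j • U j = 0
    · by_contra hμ0
      apply hx
      ext i
      have := hc i
      rw [hv, map_zero] at this
      simpa [hμ0] using this.symm
    · apply h _ μ hv
      simp only [hc, mul_smul, Finset.smul_sum]
  have h1 := matrix_trace_zero G hG
  have h2 := matrix_trace_sq_zero G hG
  constructor
  · simpa [Matrix.trace, G] using h1
  · simpa [Matrix.trace, Matrix.mul_apply, G] using h2

theorem scalar_on (Φ : E →ₗ[ℂ] E) (P : Submodule ℂ E) (h : ∀ v ∈ P, ∃ c : ℂ, Φ v = c • v) :
    ∃ c : ℂ, ∀ v ∈ P, Φ v = c • v := by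
  by_cases hP : ∃ v0 ∈ P, v0 ≠ 0
  · obtain ⟨v0, hv0, hne⟩ := hP
    obtain ⟨c0, hc0⟩ := h v0 hv0
    refine ⟨c0, fun v hv => ?_⟩
    obtain ⟨c, hc⟩ := h v hv
    obtain ⟨c', hc'⟩ := h (v + v0) (P.add_mem hv hv0)
    have h1 : (c' - c) • v = (c0 - c') • v0 := by
      rw [map_add, hc, hc0, smul_add] at hc'
      rw [sub_smul, sub_smul, sub_eq_sub_iff_add_eq_add, ← hc', add_comm]
    by_cases hcc : c' - c = 0
    · rw [hcc, zero_smul] at h1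
      have h2 : c0 - c' = 0 := by
        rcases smul_eq_zero.mp h1.symm with h | h
        · exact h
        · exact absurd h hne
      rw [hc]; congr 1
      linear_combination -hcc - h2
    · have h2 : v = ((c' - c)⁻¹ * (c0 - c')) • v0 := by
        rw [mul_smul, ← h1, smul_smul, inv_mul_cancel₀ hcc, one_smul]
      rw [h2, map_smul, hc0, smul_comm]
  · push Not at hP
    exact ⟨0, fun v hv => by simp [hP v hv]⟩

theorem mem_line {ξ v : E} (h : ∀ f : E →ₗ[ℂ] ℂ, f ξ = 0 → f v = 0) : ∃ c : ℂ, v = c • ξ := by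
  by_contra hne
  have : v ∉ Submodule.span ℂ {ξ} := by
    rw [Submodule.mem_span_singleton]
    rintro ⟨c, hc⟩
    exact hne ⟨c, hc.symm⟩
  obtain ⟨f, hf, hle⟩ := Submodule.exists_le_ker_of_notMem this
  exact hf (h f (hle (Submodule.mem_span_singleton_self ξ)))

theorem dual_line {f g : E →ₗ[ℂ] ℂ} (h : ∀ v, f v = 0 → g v = 0) : ∃ c : ℂ, g = c • f := by
  by_cases hf : f = 0
  · refine ⟨0, ?_⟩
    ext v
    simp [h v (by simp [hf])]
  · obtain ⟨e, he⟩ : ∃ e, f e ≠ 0 := by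
      by_contra hc; push Not at hc; exact hf (LinearMap.ext hc)
    refine ⟨g e / f e, ?_⟩
    ext v
    have := h (v - (f v / f e) • e) (by simp [he])
    simp only [map_sub, map_smul, smul_eq_mul, sub_eq_zero] at this
    rw [this]; simp; ring

theorem iso_dep (x1 y1 z1 x2 y2 z2 : ℂ) (h1 : x1 ^ 2 + y1 * z1 = 0) (h2 : x2 ^ 2 + y2 * z2 = 0)
    (h12 : (x1 + x2) ^ 2 + (y1 + y2) * (z1 + z2) = 0) :
    ∃ s t : ℂ, (s ≠ 0 ∨ t ≠ 0) ∧ s * x1 + t * x2 = 0 ∧ s * y1 + t * y2 = 0 ∧ s * z1 + t * z2 = 0 := by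
  have h3 : 2 * x1 * x2 + y1 * z2 + y2 * z1 = 0 := by linear_combination h12 - h1 - h2
  have e1 : x1 * y2 - x2 * y1 = 0 := by
    apply pow_eq_zero_iff (two_ne_zero) |>.mp
    linear_combination y2 ^ 2 * h1 + y1 ^ 2 * h2 - y1 * y2 * h3
  have e2 : x1 * z2 - x2 * z1 = 0 := by
    apply pow_eq_zero_iff (two_ne_zero) |>.mp
    linear_combination z2 ^ 2 * h1 + z1 ^ 2 * h2 - z1 * z2 * h3
  have e3 : y1 * z2 - y2 * z1 = 0 := by
    apply pow_eq_zero_iff (two_ne_zero) |>.mp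
    linear_combination (y1 * z2 + y2 * z1 - 2 * x1 * x2) * h3 + 4 * x2 ^ 2 * h1 - 4 * y1 * z1 * h2
  by_cases hx : x1 = 0
  · by_cases hy : y1 = 0
    · by_cases hz : z1 = 0
      · exact ⟨1, 0, by simp, by simp [hx], by simp [hy], by simp [hz]⟩
      · exact ⟨-z2, z1, Or.inr hz, by linear_combination -e2, by linear_combination -e3, by ring⟩
    · exact ⟨-y2, y1, Or.inr hy, by linear_combination -e1, by ring, by linear_combination e3⟩
  · exact ⟨-x2, x1, Or.inr hx, by ring, by linear_combination e1, by linear_combination e2⟩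

theorem kprop_rk1 {a b c d : E →ₗ[ℂ] E} (hK : KProp a b c d) (ξ : E) (f : E →ₗ[ℂ] ℂ)
    (hf : f ξ = 0) :
    f (b (a ξ)) + f (d (c ξ)) = 0 ∧
    f (b (a ξ)) * f (b (a ξ)) + f (b (c ξ)) * f (d (a ξ)) + f (d (a ξ)) * f (b (c ξ))
      + f (d (c ξ)) * f (d (c ξ)) = 0 := by
  by_cases hξ : ξ = 0
  · simp [hξ]
  obtain ⟨h, hh⟩ := Module.Projective.exists_dual_eq_one ℂ hξ
  have := nil_trace (n := 2) ![a ξ, c ξ] ![f ∘ₗ b, f ∘ₗ d] (by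
    intro v μ hv hμ
    refine hK (f.smulRight ξ) (h.smulRight ξ) ?_ ?_ v μ hv ?_
    · intro w; simp [hh, hf]
    · intro w
      exact ⟨w - h w • ξ, h w • ξ, 0, by simp, by simp [hh], by simp [hh], by simp⟩
    · simpa [Fin.sum_univ_two] using hμ)
  simp only [Fin.sum_univ_two, Matrix.cons_val_zero, Matrix.cons_val_one, LinearMap.comp_apply] at this
  refine ⟨this.1, ?_⟩
  linear_combination this.2

theorem kprop_rk2 {a b c d : E →ₗ[ℂ] E} (hK : KProp a b c d) (ξ ζ : E) (f g : E →ₗ[ℂ] ℂ)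
    (hf : f ξ = 0) (hfz : f ζ = 0) (hg : g ξ = 0) (hgz : g ζ = 1) :
    g (b (a ζ)) * f (b (a ξ)) + g (d (a ζ)) * f (b (c ξ)) + g (b (c ζ)) * f (d (a ξ))
      + g (d (c ζ)) * f (d (c ξ)) = 0 := by
  by_cases hξ : ξ = 0
  · simp [hξ]
  obtain ⟨h0, hh0⟩ := Module.Projective.exists_dual_eq_one ℂ hξ
  obtain ⟨h, hh, hhz⟩ : ∃ h : E →ₗ[ℂ] ℂ, h ξ = 1 ∧ h ζ = 0 :=
    ⟨h0 - h0 ζ • g, by simp [hh0, hg], by simp [hgz]⟩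
  have := nil_trace (n := 4) ![a ξ, c ξ, a ζ, c ζ] ![g ∘ₗ b, g ∘ₗ d, f ∘ₗ b, f ∘ₗ d] (by
    intro v μ hv hμ
    refine hK (g.smulRight ξ + f.smulRight ζ) ((2 : ℂ) • h.smulRight ξ + g.smulRight ζ) ?_ ?_ v μ hv ?_
    · intro w; simp [hh, hf, hg, hhz, hfz, hgz]; module
    · intro w
      refine ⟨w - h w • ξ - g w • ζ, g w • ζ, h w • ξ, by simp, ?_, ?_, ?_⟩
      · simp [hh, hg, hhz, hgz]
      · simp [hhz, hgz]
      · simp [hh, hg, smul_smul, mul_comm]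
    · rw [← hμ]
      simp [Fin.sum_univ_four]; abel)
  have r1 := (kprop_rk1 hK ξ g hg).2
  have r2 := (kprop_rk1 hK ζ f hfz).2
  have t := this.2
  simp [Fin.sum_univ_four] at t
  linear_combination (1/2) * t - (1/2) * r1 - (1/2) * r2

end linalg

section core3

variable {E : Type*} [AddCommGroup E] [Module ℂ E]

/-- `S^* S` applied to the rank one operator `ξ ⊗ g`. -/
noncomputable def Wop (p q r s : E →ₗ[ℂ] E) (ξ : E) (g : E →ₗ[ℂ] ℂ) : E →ₗ[ℂ] E :=
  (g ∘ₗ p).smulRight (p ξ) + (g ∘ₗ r).smulRight (q ξ) + (g ∘ₗ q).smulRight (r ξ)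
    + (g ∘ₗ s).smulRight (s ξ)

theorem Wop_apply (p q r s : E →ₗ[ℂ] E) (ξ : E) (g : E →ₗ[ℂ] ℂ) (ζ : E) :
    Wop p q r s ξ g ζ = g (p ζ) • p ξ + g (r ζ) • q ξ + g (q ζ) • r ξ + g (s ζ) • s ξ := by
  simp [Wop]

theorem Wop_symm (p q r s : E →ₗ[ℂ] E) (ξ η : E) (f g : E →ₗ[ℂ] ℂ) :
    f (Wop p q r s ξ g η) = g (Wop p q r s η f ξ) := by
  simp [Wop]; ring

theorem span_eq_top_aux {ξ e : E} {f : E →ₗ[ℂ] ℂ} (he : f e ≠ 0)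
    (h : ∀ ζ, f ζ = 0 → ∃ c : ℂ, ζ = c • ξ) : Submodule.span ℂ {ξ, e} = ⊤ := by
  rw [eq_top_iff]
  intro v _
  obtain ⟨c, hc⟩ := h (v - (f v / f e) • e) (by simp [he])
  rw [Submodule.mem_span_pair]
  exact ⟨c, f v / f e, by rw [← hc]; simp⟩

theorem core3 (p q r s : E →ₗ[ℂ] E) (l : ℂ) (hs : ∀ v, s v = l • v - p v)
    (h1 : ∀ (ξ : E) (f : E →ₗ[ℂ] ℂ), f ξ = 0 → f (p ξ) ^ 2 + f (q ξ) * f (r ξ) = 0)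
    (h2 : ∀ (ξ ζ : E) (f g : E →ₗ[ℂ] ℂ), f ξ = 0 → f ζ = 0 → g ξ = 0 → g ζ = 1 →
      f (Wop p q r s ξ g ζ) = 0)
    (hd : ∀ ξ ξ' : E, Submodule.span ℂ {ξ, ξ'} ≠ ⊤) :
    ∃ c : ℂ, ∀ (ξ : E) (g : E →ₗ[ℂ] ℂ) (ζ : E), Wop p q r s ξ g ζ = (c * g ζ) • ξ := by
  -- dimension facts
  have D1 : ∀ ξ ξ' : E, ∃ f : E →ₗ[ℂ] ℂ, f ≠ 0 ∧ f ξ = 0 ∧ f ξ' = 0 := by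
    intro ξ ξ'
    obtain ⟨f, hf, hle⟩ := Submodule.exists_le_ker_of_lt_top _ (lt_top_iff_ne_top.mpr (hd ξ ξ'))
    exact ⟨f, hf, hle (Submodule.subset_span (by simp)), hle (Submodule.subset_span (by simp))⟩
  have Dn : ∀ f : E →ₗ[ℂ] ℂ, f ≠ 0 → ∃ e, f e = 1 := by
    intro f hf
    obtain ⟨e, he⟩ : ∃ e, f e ≠ 0 := by
      by_contra hc; push Not at hc; exact hf (LinearMap.ext hc)
    exact ⟨(f e)⁻¹ • e, by simp [he]⟩
  have D2 : ∀ (f : E →ₗ[ℂ] ℂ) (ξ : E), ∃ ζ, f ζ = 0 ∧ ∀ c : ℂ, ζ ≠ c • ξ := by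
    intro f ξ
    by_contra hc
    push Not at hc
    by_cases hf : f = 0
    · apply hd ξ 0
      rw [eq_top_iff]
      intro v _
      obtain ⟨c, hc'⟩ := hc v (by simp [hf])
      rw [Submodule.mem_span_pair]
      exact ⟨c, 0, by simp [hc']⟩
    · obtain ⟨e, he⟩ := Dn f hf
      exact hd ξ e (span_eq_top_aux (f := f) (by simp [he]) hc)
  have D3 : ∀ ξ : E, ∃ f1 f2 : E →ₗ[ℂ] ℂ, f1 ξ = 0 ∧ f2 ξ = 0 ∧
      ∀ s t : ℂ, s • f1 + t • f2 = 0 → s = 0 ∧ t = 0 := by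
    intro ξ
    obtain ⟨f1, h1, h1ξ, -⟩ := D1 ξ 0
    obtain ⟨e, he⟩ := Dn f1 h1
    obtain ⟨f2, h2, h2ξ, h2e⟩ := D1 ξ e
    refine ⟨f1, f2, h1ξ, h2ξ, fun s t hst => ?_⟩
    have hs0 : s = 0 := by simpa [he, h2e] using LinearMap.congr_fun hst e
    refine ⟨hs0, ?_⟩
    rw [hs0, zero_smul, zero_add] at hst
    exact (smul_eq_zero.mp hst).resolve_right h2
  -- upgrade h2
  have h2' : ∀ (ξ ζ : E) (f g : E →ₗ[ℂ] ℂ), f ξ = 0 → f ζ = 0 → g ξ = 0 →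
      f (Wop p q r s ξ g ζ) = 0 := by
    have aux : ∀ (ξ ζ : E) (f g : E →ₗ[ℂ] ℂ), f ξ = 0 → f ζ = 0 → g ξ = 0 →
        (∀ c : ℂ, ζ ≠ c • ξ) → f (Wop p q r s ξ g ζ) = 0 := by
      intro ξ ζ f g hf hfz hg hind
      obtain ⟨g0, hg0, hg0'⟩ : ∃ g0 : E →ₗ[ℂ] ℂ, g0 ξ = 0 ∧ g0 ζ ≠ 0 := by
        by_contra hc
        push Not at hc
        obtain ⟨c, hc'⟩ := mem_line hc
        exact hind c hc'
      set g1 : E →ₗ[ℂ] ℂ := (g0 ζ)⁻¹ • g0 with hg1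
      have g1ξ : g1 ξ = 0 := by simp [hg1, hg0]
      have g1ζ : g1 ζ = 1 := by simp [hg1, hg0']
      have k1 := h2 ξ ζ f g1 hf hfz g1ξ g1ζ
      have k2 := h2 ξ ζ f (g + (1 - g ζ) • g1) hf hfz (by simp [hg, g1ξ]) (by simp [g1ζ])
      simp only [Wop_apply, map_add, map_smul, LinearMap.add_apply, LinearMap.smul_apply,
        smul_eq_mul] at k1 k2 ⊢
      linear_combination k2 - (1 - g ζ) * k1
    intro ξ ζ f g hf hfz hg
    by_cases hind : ∀ c : ℂ, ζ ≠ c • ξ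
    · exact aux ξ ζ f g hf hfz hg hind
    · push Not at hind
      obtain ⟨c, hc⟩ := hind
      obtain ⟨ζ', hfz', hind'⟩ := D2 f ξ
      have k1 := aux ξ ζ' f g hf hfz' hg hind'
      have k2 := aux ξ (ζ + ζ') f g hf (by simp [hfz, hfz']) hg (by
        intro c' hc'
        apply hind' (c' - c)
        rw [sub_smul, ← hc', hc]; simp)
      rw [map_add, map_add, k1, add_zero] at k2
      exact k2
  -- (A)
  have hA : ∀ (ξ : E) (g : E →ₗ[ℂ] ℂ) (c : ℂ),
      (∀ f : E →ₗ[ℂ] ℂ, f ξ = 0 → ∀ η, f (Wop p q r s ξ g η) = c * f η) → c = 0 := by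
    intro ξ g c hc
    obtain ⟨f1, f2, hf1, hf2, hind⟩ := D3 ξ
    have i1 := h1 ξ f1 hf1
    have i2 := h1 ξ f2 hf2
    have i3 := h1 ξ (f1 + f2) (by simp [hf1, hf2])
    simp only [LinearMap.add_apply] at i3
    obtain ⟨x, y, hxy, e1, e2, e3⟩ := iso_dep _ _ _ _ _ _ i1 i2 i3
    set f := x • f1 + y • f2 with hf
    have hfξ : f ξ = 0 := by simp [hf, hf1, hf2]
    have hfp : f (p ξ) = 0 := by simpa [hf] using e1
    have hfq : f (q ξ) = 0 := by simpa [hf] using e2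
    have hfr : f (r ξ) = 0 := by simpa [hf] using e3
    have hfs : f (s ξ) = 0 := by simp [hs, hfξ, hfp]
    by_contra hc0
    have hf0 : f = 0 := by
      ext η
      have := hc f hfξ η
      rw [Wop_apply] at this
      simp [hfp, hfq, hfr, hfs] at this
      rcases this with h | h
      · exact absurd h hc0
      · simpa using h
    have := hind x y hf0
    rcases hxy with h | h
    · exact h this.1
    · exact h this.2
  -- (B)
  have hB : ∀ (ξ : E) (g : E →ₗ[ℂ] ℂ), g ξ = 0 → ∀ η, ∃ c : ℂ, Wop p q r s ξ g η = c • ξ := by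
    intro ξ g hg
    set T := Wop p q r s ξ g with hT
    obtain ⟨c, hc⟩ := scalar_on (T.dualMap) (LinearMap.ker (Module.Dual.eval ℂ E ξ)) (by
      intro f hf
      have hf' : f ξ = 0 := hf
      apply dual_line (f := f)
      intro v hv
      exact h2' ξ v f g hf' hv hg)
    have hc' : ∀ f : E →ₗ[ℂ] ℂ, f ξ = 0 → ∀ η, f (T η) = c * f η := by
      intro f hf η
      have := LinearMap.congr_fun (hc f hf) η
      simpa using this
    have c0 := hA ξ g c hc'
    intro η
    apply mem_line
    intro f hf
    rw [hc' f hf, c0, zero_mul]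
  -- (C)
  have hC : ∀ (ξ : E) (g : E →ₗ[ℂ] ℂ), g ξ = 0 →
      ∃ c : ℂ, ∀ η, Wop p q r s ξ g η = (c * g η) • ξ := by
    intro ξ g hg
    have k1 : ∀ η, g η = 0 → (∀ c : ℂ, η ≠ c • ξ) → Wop p q r s ξ g η = 0 := by
      intro η hη hind
      obtain ⟨c, hc⟩ := hB ξ g hg η
      obtain ⟨c', hc'⟩ := mem_line (ξ := η) (v := Wop p q r s ξ g η) (by
        intro f hf
        rw [Wop_symm]
        exact h2' η ξ g f hη hg hf)
      by_cases hc0 : c' = 0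
      · rw [hc', hc0, zero_smul]
      · exfalso
        apply hind (c'⁻¹ * c)
        rw [mul_smul, ← hc, hc', smul_smul, inv_mul_cancel₀ hc0, one_smul]
    have k2 : ∀ η, g η = 0 → Wop p q r s ξ g η = 0 := by
      intro η hη
      by_cases hind : ∀ c : ℂ, η ≠ c • ξ
      · exact k1 η hη hind
      · push Not at hind
        obtain ⟨c, hc⟩ := hind
        obtain ⟨ζ, hζ, hind'⟩ := D2 g ξ
        have e1 := k1 ζ hζ hind'
        have e2 := k1 (η + ζ) (by simp [hη, hζ]) (by
          intro c' hc'
          apply hind' (c' - c)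
          rw [sub_smul, ← hc', hc]; simp)
        rw [map_add, e1, add_zero] at e2
        exact e2
    by_cases hg0 : g = 0
    · exact ⟨0, fun η => by simp [hg0, Wop_apply]⟩
    · obtain ⟨e, he⟩ := Dn g hg0
      obtain ⟨c, hc⟩ := hB ξ g hg e
      refine ⟨c, fun η => ?_⟩
      have := k2 (η - g η • e) (by simp [he])
      rw [map_sub, sub_eq_zero] at this
      rw [this, map_smul, hc, smul_smul, mul_comm]
  -- (D)
  have hD1 : ∀ ξ : E, ξ ≠ 0 → ∃ c : ℂ, ∀ g : E →ₗ[ℂ] ℂ, g ξ = 0 →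
      ∀ η, Wop p q r s ξ g η = (c * g η) • ξ := by
    intro ξ hξ
    obtain ⟨h, hh⟩ := Module.Projective.exists_dual_eq_one ℂ hξ
    obtain ⟨c, hc⟩ := scalar_on (h (p ξ) • p.dualMap + h (q ξ) • r.dualMap + h (r ξ) • q.dualMap
      + h (s ξ) • s.dualMap) (LinearMap.ker (Module.Dual.eval ℂ E ξ)) (by
      intro g hg
      obtain ⟨c, hc⟩ := hC ξ g hg
      refine ⟨c, ?_⟩
      ext η
      have := congrArg h (hc η)
      rw [Wop_apply] at this
      simp [hh] at this
      simp
      linear_combination this)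
    refine ⟨c, fun g hg η => ?_⟩
    obtain ⟨c', hc'⟩ := hC ξ g hg
    have e1 := LinearMap.congr_fun (hc g hg) η
    have e2 := congrArg h (hc' η)
    rw [Wop_apply] at e2
    simp [hh] at e1 e2
    rw [hc']
    congr 1
    linear_combination e1 - e2
  have hD2 : ∀ g : E →ₗ[ℂ] ℂ, g ≠ 0 → ∃ c : ℂ, ∀ ξ : E, g ξ = 0 →
      ∀ η, Wop p q r s ξ g η = (c * g η) • ξ := by
    intro g hg
    obtain ⟨e, he⟩ := Dn g hg
    obtain ⟨c, hc⟩ := scalar_on (g (p e) • p + g (r e) • q + g (q e) • r + g (s e) • s)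
      (LinearMap.ker g) (by
      intro ξ hξ
      obtain ⟨c, hc⟩ := hC ξ g hξ
      refine ⟨c, ?_⟩
      have := hc e
      rw [Wop_apply, he, mul_one] at this
      simpa using this)
    refine ⟨c, fun ξ hξ η => ?_⟩
    obtain ⟨c', hc'⟩ := hC ξ g hξ
    have e1 := hc ξ hξ
    have e2 := hc' e
    rw [Wop_apply, he, mul_one] at e2
    have e3 : c' • ξ = c • ξ := by rw [← e1, ← e2]; simp
    rw [hc', mul_comm, mul_smul, e3, smul_smul, mul_comm]
  obtain ⟨c, hc⟩ : ∃ c : ℂ, ∀ (ξ : E) (g : E →ₗ[ℂ] ℂ), g ξ = 0 →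
      ∀ η, Wop p q r s ξ g η = (c * g η) • ξ := by
    by_cases hE : ∃ ξ0 : E, ξ0 ≠ 0
    · obtain ⟨ξ0, hξ0⟩ := hE
      obtain ⟨c, hc⟩ := hD1 ξ0 hξ0
      refine ⟨c, fun ξ g hg η => ?_⟩
      by_cases hξ : ξ = 0
      · simp [hξ, Wop_apply]
      obtain ⟨c1, hc1⟩ := hD1 ξ hξ
      obtain ⟨h, hh, hhξ, hhξ0⟩ := D1 ξ ξ0
      obtain ⟨c2, hc2⟩ := hD2 h hh
      obtain ⟨e, he⟩ := Dn h hh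
      have e1 : c = c2 := by
        have := (hc h hhξ0 e).symm.trans (hc2 ξ0 hhξ0 e)
        rw [he, mul_one, mul_one] at this
        exact smul_left_injective ℂ hξ0 this
      have e2 : c1 = c2 := by
        have := (hc1 h hhξ e).symm.trans (hc2 ξ hhξ e)
        rw [he, mul_one, mul_one] at this
        exact smul_left_injective ℂ hξ this
      rw [hc1 g hg, e2, e1]
    · push Not at hE
      exact ⟨0, fun ξ g _ η => by simp [hE ξ, Wop_apply]⟩
  -- (E)
  refine ⟨c, fun ξ g => ?_⟩
  obtain ⟨m, hm⟩ := scalar_on (Wop p q r s ξ g - (c • g).smulRight ξ) ⊤ (by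
    intro η _
    apply mem_line
    intro f hf
    simp only [LinearMap.sub_apply, map_sub, Wop_symm, hc η f hf ξ, LinearMap.smulRight_apply,
      map_smul, LinearMap.smul_apply, smul_eq_mul]
    ring)
  have m0 := hA ξ g m (by
    intro f hf η
    have := congrArg f (hm η trivial)
    simpa [hf] using this)
  intro η
  have := hm η trivial
  rw [m0, zero_smul, LinearMap.sub_apply, sub_eq_zero] at this
  simpa using this

theorem rank_one_ext (p q r s : E →ₗ[ℂ] E) (c : ℂ)
    (h : ∀ (ξ : E) (g : E →ₗ[ℂ] ℂ) (ζ : E), Wop p q r s ξ g ζ = (c * g ζ) • ξ)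
    (x : E →ₗ[ℂ] E) (ζ : E) :
    p (x (p ζ)) + q (x (r ζ)) + r (x (q ζ)) + s (x (s ζ)) = c • x ζ := by
  classical
  let F : Submodule ℂ E := Submodule.span ℂ (({p ζ, q ζ, r ζ, s ζ, ζ} : Finset E) : Set E)
  let B := Module.finBasis ℂ F
  have hext : ∀ j, ∃ g : E →ₗ[ℂ] ℂ, g.comp F.subtype = B.coord j := fun j =>
    LinearMap.exists_extend _
  choose g hg using hext
  have hx : ∀ w ∈ F, x w = ∑ j, g j w • x (B j) := by
    intro w hw
    have h1 := B.sum_repr ⟨w, hw⟩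
    have h2 := congrArg (fun z : F => x (z : E)) h1
    simp only [Submodule.coe_sum, map_sum, Submodule.coe_smul, map_smul] at h2
    rw [← h2]
    refine Finset.sum_congr rfl fun j _ => ?_
    have := LinearMap.congr_fun (hg j) ⟨w, hw⟩
    simp at this
    rw [this]
  have hm : ∀ w ∈ ({p ζ, q ζ, r ζ, s ζ, ζ} : Finset E), w ∈ F := fun w hw =>
    Submodule.subset_span hw
  rw [hx (p ζ) (hm _ (by simp)), hx (q ζ) (hm _ (by simp)), hx (r ζ) (hm _ (by simp)),
    hx (s ζ) (hm _ (by simp)), hx ζ (hm _ (by simp))]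
  simp only [map_sum, map_smul, ← Finset.sum_add_distrib, Finset.smul_sum]
  refine Finset.sum_congr rfl fun j _ => ?_
  rw [← Wop_apply, h, mul_smul]

end core3

section dim2

/-- Coordinates of `f (T ξ)` for `ξ = (x, y)` and `f = (-y, x)`. -/
def qf (T : Matrix (Fin 2) (Fin 2) ℂ) (x y : ℂ) : ℂ :=
  -y * (T 0 0 * x + T 0 1 * y) + x * (T 1 0 * x + T 1 1 * y)

theorem mat2 (P Q R S B C D : Matrix (Fin 2) (Fin 2) ℂ) (l : ℂ)
    (hP : P = !![B 0 0, 0; B 1 0, 0]) (hR : R = !![D 0 0, 0; D 1 0, 0])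
    (hQ : Q = B * C) (hS : S = D * C) (hl : P + S = l • 1)
    (h1 : ∀ x y : ℂ, qf P x y ^ 2 + qf Q x y * qf R x y = 0) :
    (∃ μ : ℂ, ∀ X : Matrix (Fin 2) (Fin 2) ℂ,
      P * X * P + Q * X * R + R * X * Q + S * X * S = μ • X) ∨
    (∃ μ : ℂ, ∀ X : Matrix (Fin 2) (Fin 2) ℂ,
      P * X * P + Q * X * R + R * X * Q + S * X * S = (μ * X.trace) • 1) := by
  have hS' : S = l • 1 - P := by rw [← hl]; abel
  have s00 := congrFun (congrFun hS 0) 0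
  have s01 := congrFun (congrFun hS 0) 1
  have s10 := congrFun (congrFun hS 1) 0
  have s11 := congrFun (congrFun hS 1) 1
  have q00 := congrFun (congrFun hQ 0) 0
  have q01 := congrFun (congrFun hQ 0) 1
  have q10 := congrFun (congrFun hQ 1) 0
  have q11 := congrFun (congrFun hQ 1) 1
  rw [hS', hP] at s00 s01 s10 s11
  rw [hP, hR] at h1
  simp [Matrix.mul_apply, Fin.sum_univ_two] at s00 s01 s10 s11 q00 q01 q10 q11
  have g1 := h1 1 0
  have g2 := h1 1 1
  have g3 := h1 1 (-1)
  have g4 := h1 1 2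
  have g5 := h1 1 (-2)
  simp [qf] at g1 g2 g3 g4 g5
  clear hQ hS h1
  subst hS' hP hR
  obtain ⟨Q00, hQ00⟩ : ∃ t, t = Q 0 0 := ⟨_, rfl⟩
  obtain ⟨Q01, hQ01⟩ : ∃ t, t = Q 0 1 := ⟨_, rfl⟩
  obtain ⟨Q10, hQ10⟩ : ∃ t, t = Q 1 0 := ⟨_, rfl⟩
  obtain ⟨Q11, hQ11⟩ : ∃ t, t = Q 1 1 := ⟨_, rfl⟩
  have hQe : Q = !![Q00, Q01; Q10, Q11] := by
    rw [hQ00, hQ01, hQ10, hQ11]; exact Matrix.eta_fin_two Q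
  simp only [← hQ00, ← hQ01, ← hQ10, ← hQ11] at *
  clear hQ00 hQ01 hQ10 hQ11 hl
  subst hQe
  generalize B 0 0 = b00, B 0 1 = b01, B 1 0 = b10, B 1 1 = b11, C 0 0 = c00, C 0 1 = c01,
    C 1 0 = c10, C 1 1 = c11, D 0 0 = d00, D 0 1 = d01, D 1 0 = d10, D 1 1 = d11 at *
  have E1 : b10 ^ 2 + d10 * Q10 = 0 := by linear_combination g1
  have E2 : -2 * b10 * b00 + d10 * (Q11 - Q00) - d00 * Q10 = 0 := by
    linear_combination (8/12) * (g2 - g3) - (1/12) * (g4 - g5)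
  have E3 : b00 ^ 2 - d10 * Q01 - d00 * (Q11 - Q00) = 0 := by
    linear_combination -(5/4) * g1 + (16/24) * (g2 + g3) - (1/24) * (g4 + g5)
  have E4 : d00 * Q01 = 0 := by
    linear_combination -(1/6) * (g2 - g3) + (1/12) * (g4 - g5)
  clear g1 g2 g3 g4 g5 B C D
  have key : ∀ (μ : ℂ) (x00 x01 x10 x11 : ℂ), True := fun _ _ _ _ _ => trivial
  by_cases hdet : d00 * b10 - d10 * b00 = 0
  · left
    refine ⟨l ^ 2, fun X => ?_⟩
    by_cases hd : d00 = 0 ∧ d10 = 0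
    · obtain ⟨hd0, hd1⟩ := hd
      have hb1 : b10 = 0 := by
        apply pow_eq_zero_iff (two_ne_zero) |>.mp
        rw [hd1] at E1; linear_combination E1
      have hb0 : b00 = 0 := by
        apply pow_eq_zero_iff (two_ne_zero) |>.mp
        rw [hd1, hd0] at E3; linear_combination E3
      subst hd0 hd1 hb1 hb0
      rw [Matrix.eta_fin_two X]
      ext i j
      fin_cases i <;> fin_cases j <;> simp [Matrix.mul_fin_two, Matrix.one_fin_two] <;> ring
    · obtain ⟨β, hβ0, hβ1⟩ : ∃ β, b00 = β * d00 ∧ b10 = β * d10 := by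
        by_cases hd0 : d00 = 0
        · have hd1 : d10 ≠ 0 := fun h => hd ⟨hd0, h⟩
          refine ⟨b10 / d10, ?_, by field_simp⟩
          field_simp; linear_combination -hdet
        · refine ⟨b00 / d00, by field_simp, ?_⟩
          field_simp; linear_combination hdet
      subst hβ0 hβ1
      obtain ⟨q0, e00, e01, e10, e11⟩ : ∃ q0, Q00 = q0 - β ^ 2 * d00 ∧ Q01 = 0 ∧
          Q10 = - β ^ 2 * d10 ∧ Q11 = q0 := by
        by_cases hd1 : d10 = 0
        · have hd0 : d00 ≠ 0 := fun h => hd ⟨h, hd1⟩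
          subst hd1
          refine ⟨Q11, ?_, ?_, ?_, rfl⟩
          · apply mul_left_cancel₀ hd0; linear_combination E3
          · apply mul_left_cancel₀ hd0; linear_combination E4
          · apply mul_left_cancel₀ hd0; linear_combination -E2
        · have k1 : Q10 = - β ^ 2 * d10 := by
            apply mul_left_cancel₀ hd1; linear_combination E1
          subst k1
          have k2 : Q00 = Q11 - β ^ 2 * d00 := by
            apply mul_left_cancel₀ hd1; linear_combination -E2
          subst k2
          refine ⟨Q11, rfl, ?_, rfl, rfl⟩
          apply mul_left_cancel₀ hd1; linear_combination -E3
      subst e00 e01 e10 e11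
      have hq : Q11 = β * l := by
        have m0 : (b01 - β * d01) * c10 = Q11 - β * l := by linear_combination β * s00 - q00
        have m1 : (b11 - β * d11) * c11 = Q11 - β * l := by linear_combination β * s11 - q11
        have m2 : (b01 - β * d01) * c11 = 0 := by linear_combination β * s01 - q01
        have h2 : (Q11 - β * l) ^ 2 = 0 := by
          rw [pow_two]; nth_rewrite 1 [← m0]; rw [← m1]
          linear_combination c10 * (b11 - β * d11) * m2
        have := pow_eq_zero_iff (two_ne_zero) |>.mp h2
        linear_combination this
      subst hq
      rw [Matrix.eta_fin_two X]
      ext i j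
      fin_cases i <;> fin_cases j <;> simp [Matrix.mul_fin_two, Matrix.one_fin_two] <;> ring
  · right
    have hd0 : d00 = 0 := by
      have : d00 * (d00 * b10 - d10 * b00) ^ 2 = 0 := by
        linear_combination d00 ^ 3 * E1 + d00 ^ 2 * d10 * E2 + d00 * d10 ^ 2 * E3 + d10 ^ 3 * E4
      simpa [hdet] using this
    subst hd0
    have hd1 : d10 ≠ 0 := fun h => hdet (by simp [h])
    have hb0 : b00 ≠ 0 := fun h => hdet (by simp [h])
    have hL : b00 = l ∧ Q11 = b10 * b00 / d10 := by
      by_cases h01 : d01 = 0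
      · subst h01
        have hl : b00 = l := by linear_combination -s00
        refine ⟨hl, ?_⟩
        by_cases h11 : c11 = 0
        · rw [h11] at s11 q11
          rw [q11, hl, s11]; field_simp; ring
        · have k : d10 * b01 - b00 * d11 = 0 := by
            apply (mul_eq_zero.mp _).resolve_left h11
            linear_combination -E3 - d10 * q01 + b00 * s11 + b00 * hl
          field_simp
          linear_combination E2 + d10 * q00 + b00 * (-s10) + c10 * k
      · have h11 : c11 = 0 := by
          apply (mul_eq_zero.mp _).resolve_left h01
          linear_combination -s01
        subst h11
        have k : c01 = b00 / d10 := by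
          field_simp
          apply mul_left_cancel₀ hb0
          linear_combination -E3 - d10 * q01
        refine ⟨?_, ?_⟩
        · rw [s11, k]; field_simp; ring
        · rw [q11, k]; field_simp; ring
    obtain ⟨hbl, hq⟩ := hL
    refine ⟨l ^ 2, fun X => ?_⟩
    subst hbl
    have k1 : Q10 = - b10 ^ 2 / d10 := by field_simp; linear_combination E1
    have k2 : Q00 = - b10 * b00 / d10 := by
      rw [hq] at E2; field_simp; field_simp at E2; linear_combination -E2
    have k3 : Q01 = b00 ^ 2 / d10 := by field_simp; linear_combination -E3
    subst k1 k2 k3 hq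
    rw [Matrix.eta_fin_two X]
    ext i j
    fin_cases i <;> fin_cases j <;>
      simp [Matrix.mul_fin_two, Matrix.one_fin_two, Matrix.trace_fin_two] <;>
      field_simp <;> ring

end dim2

section final_linalg

variable {E : Type*} [AddCommGroup E] [Module ℂ E]

/-- The composition `S^* S` on linear maps. -/
def SS (a b c d x : Module.End ℂ E) : Module.End ℂ E :=
  b * (a * x * b + c * x * d) * a + d * (a * x * b + c * x * d) * c

theorem SS_eq (a b c d x : Module.End ℂ E) :
    SS a b c d x = (b * a) * x * (b * a) + (b * c) * x * (d * a) + (d * a) * x * (b * c)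
      + (d * c) * x * (d * c) := by
  unfold SS; noncomm_ring

theorem SS_mix (a b c d x : Module.End ℂ E) (z : ℂ) :
    SS (c - z • a) d a (b + z • d) x = SS a b c d x := by
  unfold SS
  have : (c - z • a) * x * d + a * x * (b + z • d) = a * x * b + c * x * d := by
    simp only [sub_mul, mul_add, smul_mul_assoc, mul_smul_comm]; abel
  rw [this]
  simp only [mul_sub, add_mul, smul_mul_assoc, mul_smul_comm]; abel

theorem KProp_mix {a b c d : Module.End ℂ E} (h : KProp a b c d) (z : ℂ) :
    KProp (c - z • a) d a (b + z • d) := by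
  intro N H hN hH v μ hv hμ
  refine h N H hN hH v μ hv ?_
  rw [← hμ]
  simp only [LinearMap.sub_apply, LinearMap.add_apply, LinearMap.smul_apply, map_add, map_smul]
  abel

theorem kprop_scalar {a b c d : Module.End ℂ E} (h : KProp a b c d) :
    ∃ l : ℂ, b * a + d * c = l • 1 := by
  obtain ⟨l, hl⟩ := scalar_on (b * a + d * c) ⊤ (by
    intro v _
    apply mem_line
    intro f hf
    simpa using (kprop_rk1 h v f hf).1)
  refine ⟨l, ?_⟩
  ext v
  simpa using hl v trivial

theorem kprop_h1 {a b c d : Module.End ℂ E} (h : KProp a b c d) (ξ : E) (f : E →ₗ[ℂ] ℂ)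
    (hf : f ξ = 0) : f ((b * a) ξ) ^ 2 + f ((b * c) ξ) * f ((d * a) ξ) = 0 := by
  obtain ⟨h1, h2⟩ := kprop_rk1 h ξ f hf
  simp only [Module.End.mul_apply]
  linear_combination (1/2) * h2 + (1/2) * (f (b (a ξ)) - f (d (c ξ))) * h1

theorem big_case {a b c d : Module.End ℂ E} (h : KProp a b c d)
    (hd : ∀ ξ ξ' : E, Submodule.span ℂ {ξ, ξ'} ≠ ⊤) :
    ∃ μ : ℂ, ∀ x : Module.End ℂ E, SS a b c d x = μ • x := by
  obtain ⟨l, hl⟩ := kprop_scalar h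
  obtain ⟨μ, hμ⟩ := core3 (b * a) (b * c) (d * a) (d * c) l (by
      intro v
      have := LinearMap.congr_fun hl v
      simp only [LinearMap.add_apply, LinearMap.smul_apply, Module.End.one_apply] at this
      rw [← this]; abel) (kprop_h1 h) (by
      intro ξ ζ f g h1 h2 h3 h4
      have := kprop_rk2 h ξ ζ f g h1 h2 h3 h4
      rw [Wop_apply]
      simpa using this) hd
  refine ⟨μ, fun x => ?_⟩
  ext ζ
  rw [SS_eq]
  have := rank_one_ext _ _ _ _ μ hμ x ζ
  simpa [Module.End.mul_apply] using this

theorem small_case (a b c d : Module.End ℂ E) [Module.Finite ℂ E] (h : Module.finrank ℂ E ≤ 1) :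
    ∃ μ : ℂ, ∀ x : Module.End ℂ E, SS a b c d x = μ • x := by
  obtain ⟨v, hv⟩ := finrank_le_one_iff.mp h
  have key : ∀ T : Module.End ℂ E, ∃ t : ℂ, T = t • 1 := by
    intro T
    obtain ⟨t, ht⟩ := hv (T v)
    refine ⟨t, ?_⟩
    ext w
    obtain ⟨s, rfl⟩ := hv w
    rw [map_smul, ← ht, LinearMap.smul_apply, Module.End.one_apply, smul_comm]
  obtain ⟨a', rfl⟩ := key a
  obtain ⟨b', rfl⟩ := key b
  obtain ⟨c', rfl⟩ := key c
  obtain ⟨d', rfl⟩ := key d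
  refine ⟨(a' * b' + c' * d') ^ 2, fun x => ?_⟩
  obtain ⟨x', rfl⟩ := key x
  simp only [SS, smul_mul_smul_comm, mul_one, ← add_smul, smul_smul]
  congr 1; ring

theorem dim2_sing {a b c d : Module.End ℂ E} (h2 : Module.finrank ℂ E = 2) (h : KProp a b c d)
    (k : E) (hk : k ≠ 0) (hak : a k = 0) :
    (∃ μ : ℂ, ∀ x : Module.End ℂ E, SS a b c d x = μ • x) ∨
    (∃ μ : ℂ, ∀ x : Module.End ℂ E, SS a b c d x = (μ * LinearMap.trace ℂ E x) • 1) := by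
  obtain ⟨l, hl⟩ := kprop_scalar h
  have hfin : Module.Finite ℂ E := Module.finite_of_finrank_eq_succ h2
  by_cases ha : a = 0
  · left
    refine ⟨l ^ 2, fun x => ?_⟩
    subst ha
    simp only [mul_zero, zero_add] at hl
    rw [SS_eq]
    simp [hl, smul_smul, pow_two]
  obtain ⟨e, he⟩ : ∃ e, a e ≠ 0 := by
    by_contra hc; push Not at hc; exact ha (LinearMap.ext hc)
  have li1 : LinearIndependent ℂ ![e, k] := by
    rw [LinearIndependent.pair_iff]
    intro s t hst
    have := congrArg a hst
    simp [hak, he] at this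
    subst this
    simpa [hk] using hst
  obtain ⟨η', li2⟩ := exists_linearIndependent_pair_of_one_lt_finrank (R := ℂ) (by omega) he
  let v1 := basisOfLinearIndependentOfCardEqFinrank li1 (by simp [h2])
  let v2 := basisOfLinearIndependentOfCardEqFinrank li2 (by simp [h2])
  have v10 : v1 0 = e := by simp [v1]
  have v11 : v1 1 = k := by simp [v1]
  have v20 : v2 0 = a e := by simp [v2]
  have hA : LinearMap.toMatrix v1 v2 a = !![1, 0; 0, 0] := by
    ext i j
    fin_cases j
    · simp only [Fin.zero_eta, LinearMap.toMatrix_apply, v10]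
      rw [← v20]
      fin_cases i <;> simp
    · simp only [Fin.mk_one, LinearMap.toMatrix_apply, v11, hak]
      fin_cases i <;> simp
  have hqf : ∀ (T : Module.End ℂ E) (x y : ℂ),
      qf (LinearMap.toMatrix v1 v1 T) x y
        = ((-y) • v1.coord 0 + x • v1.coord 1) (T (x • v1 0 + y • v1 1)) := by
    intro T x y
    simp [qf, LinearMap.toMatrix_apply]
    ring
  have hm := mat2 (LinearMap.toMatrix v1 v1 (b * a)) (LinearMap.toMatrix v1 v1 (b * c))
    (LinearMap.toMatrix v1 v1 (d * a)) (LinearMap.toMatrix v1 v1 (d * c))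
    (LinearMap.toMatrix v2 v1 b) (LinearMap.toMatrix v1 v2 c) (LinearMap.toMatrix v2 v1 d) l
    (by
      rw [Module.End.mul_eq_comp, LinearMap.toMatrix_comp v1 v2 v1, hA]
      ext i j
      fin_cases i <;> fin_cases j <;> simp [Matrix.mul_apply])
    (by
      rw [Module.End.mul_eq_comp, LinearMap.toMatrix_comp v1 v2 v1, hA]
      ext i j
      fin_cases i <;> fin_cases j <;> simp [Matrix.mul_apply])
    (by rw [Module.End.mul_eq_comp, LinearMap.toMatrix_comp v1 v2 v1])
    (by rw [Module.End.mul_eq_comp, LinearMap.toMatrix_comp v1 v2 v1])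
    (by rw [← map_add, hl, map_smul, LinearMap.toMatrix_one])
    (by
      intro x y
      rw [hqf, hqf, hqf]
      apply kprop_h1 h
      simp
      ring)
  have hSS : ∀ x, LinearMap.toMatrix v1 v1 (SS a b c d x) =
      LinearMap.toMatrix v1 v1 (b * a) * LinearMap.toMatrix v1 v1 x * LinearMap.toMatrix v1 v1 (b * a)
      + LinearMap.toMatrix v1 v1 (b * c) * LinearMap.toMatrix v1 v1 x * LinearMap.toMatrix v1 v1 (d * a)
      + LinearMap.toMatrix v1 v1 (d * a) * LinearMap.toMatrix v1 v1 x * LinearMap.toMatrix v1 v1 (b * c)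
      + LinearMap.toMatrix v1 v1 (d * c) * LinearMap.toMatrix v1 v1 x * LinearMap.toMatrix v1 v1 (d * c) := by
    intro x
    rw [SS_eq]
    simp only [map_add, LinearMap.toMatrix_mul]
  rcases hm with ⟨μ, hμ⟩ | ⟨μ, hμ⟩
  · left
    refine ⟨μ, fun x => ?_⟩
    apply (LinearMap.toMatrix v1 v1).injective
    rw [hSS, hμ, map_smul]
  · right
    refine ⟨μ, fun x => ?_⟩
    apply (LinearMap.toMatrix v1 v1).injective
    rw [hSS, hμ, map_smul, LinearMap.toMatrix_one, LinearMap.trace_eq_matrix_trace ℂ v1]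

theorem dim2_case {a b c d : Module.End ℂ E} (h2 : Module.finrank ℂ E = 2) (h : KProp a b c d) :
    (∃ μ : ℂ, ∀ x : Module.End ℂ E, SS a b c d x = μ • x) ∨
    (∃ μ : ℂ, ∀ x : Module.End ℂ E, SS a b c d x = (μ * LinearMap.trace ℂ E x) • 1) := by
  have hfin : Module.Finite ℂ E := Module.finite_of_finrank_eq_succ h2
  have hnt : Nontrivial E := Module.nontrivial_of_finrank_pos (R := ℂ) (by omega)
  by_cases ha : ∃ k, k ≠ 0 ∧ a k = 0
  · obtain ⟨k, hk, hak⟩ := ha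
    exact dim2_sing h2 h k hk hak
  · have hinj : Function.Injective a := by
      rw [← LinearMap.ker_eq_bot, LinearMap.ker_eq_bot']
      intro m hm
      by_contra hne
      exact ha ⟨m, hne, hm⟩
    let e := LinearEquiv.ofInjectiveEndo a hinj
    obtain ⟨z, hz⟩ := Module.End.exists_eigenvalue (K := ℂ) ((e.symm : E →ₗ[ℂ] E) ∘ₗ c)
    obtain ⟨k, hk⟩ := hz.exists_hasEigenvector
    have hk1 := hk.apply_eq_smul
    have hk2 : c k = z • a k := by
      have := congrArg e hk1
      simpa [e] using this
    have := dim2_sing h2 (KProp_mix h z) k hk.2 (by simp [hk2])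
    simpa only [SS_mix] using this

theorem small_span {ξ ξ' : E} (h : Submodule.span ℂ {ξ, ξ'} = ⊤) :
    Module.Finite ℂ E ∧ Module.finrank ℂ E ≤ 2 := by
  classical
  have hf : Module.Finite ℂ E := ⟨⟨{ξ, ξ'}, by simpa using h⟩⟩
  refine ⟨hf, ?_⟩
  have := finrank_span_finset_le_card (R := ℂ) ({ξ, ξ'} : Finset E)
  rw [Finset.coe_pair] at this
  unfold Set.finrank at this
  rw [h, finrank_top] at this
  exact this.trans Finset.card_le_two

theorem not2_case {a b c d : Module.End ℂ E} (h2 : Module.finrank ℂ E ≠ 2) (h : KProp a b c d) :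
    ∃ μ : ℂ, ∀ x : Module.End ℂ E, SS a b c d x = μ • x := by
  by_cases hd : ∀ ξ ξ' : E, Submodule.span ℂ {ξ, ξ'} ≠ ⊤
  · exact big_case h hd
  · push Not at hd
    obtain ⟨ξ, ξ', hs⟩ := hd
    obtain ⟨hf, hle⟩ := small_span hs
    exact small_case a b c d (by omega)

end final_linalg

section final_rep

variable {A : Type*} [NormedRing A] [NormedAlgebra ℂ A] [CompleteSpace A]

theorem parts12 {E : Type*} [NormedAddCommGroup E] [NormedSpace ℂ E] [CompleteSpace E]
    (a b c d : A)
    (hS : SpectrallyBounded (fun x : A => a * x * b + c * x * d))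
    (ρ : A →ₐ[ℂ] (E →L[ℂ] E)) (hρcont : Continuous ρ)
    (hρirr : ∀ ζ : E, ζ ≠ 0 → ∀ η : E, ∃ y : A, ρ y ζ = η) :
    (Module.finrank ℂ E ≠ 2 →
      ∃ μ : ℂ, ∀ x : A,
        ρ b * (ρ a * ρ x * ρ b + ρ c * ρ x * ρ d) * ρ a +
          ρ d * (ρ a * ρ x * ρ b + ρ c * ρ x * ρ d) * ρ c = μ • ρ x) ∧
    (Module.finrank ℂ E = 2 →
      (∃ μ : ℂ, ∀ x : A,
        ρ b * (ρ a * ρ x * ρ b + ρ c * ρ x * ρ d) * ρ a +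
          ρ d * (ρ a * ρ x * ρ b + ρ c * ρ x * ρ d) * ρ c = μ • ρ x) ∨
      (∃ μ : ℂ, ∀ x : A,
        ρ b * (ρ a * ρ x * ρ b + ρ c * ρ x * ρ d) * ρ a +
          ρ d * (ρ a * ρ x * ρ b + ρ c * ρ x * ρ d) * ρ c =
            (μ * LinearMap.trace ℂ E (ρ x).toLinearMap) • (1 : E →L[ℂ] E))) := by
  have hK := kprop_of_bounded a b c d hS ρ hρcont hρirr
  have conv : ∀ (x : A) (T : E →L[ℂ] E),
      SS (ρ a).toLinearMap (ρ b).toLinearMap (ρ c).toLinearMap (ρ d).toLinearMap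
        (ρ x).toLinearMap = T.toLinearMap →
      ρ b * (ρ a * ρ x * ρ b + ρ c * ρ x * ρ d) * ρ a +
          ρ d * (ρ a * ρ x * ρ b + ρ c * ρ x * ρ d) * ρ c = T := by
    intro x T h
    ext v
    have := LinearMap.congr_fun h v
    exact this
  constructor
  · intro h2
    obtain ⟨μ, hμ⟩ := not2_case h2 hK
    exact ⟨μ, fun x => conv x _ (hμ _)⟩
  · intro h2
    rcases dim2_case h2 hK with ⟨μ, hμ⟩ | ⟨μ, hμ⟩
    · exact Or.inl ⟨μ, fun x => conv x _ (hμ _)⟩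
    · exact Or.inr ⟨μ, fun x => conv x _ (hμ _)⟩

theorem part3_core {E : Type*} [NormedAddCommGroup E] [NormedSpace ℂ E] [CompleteSpace E]
    (a b c d : A)
    (hS : SpectrallyBounded (fun x : A => a * x * b + c * x * d)) (x : A)
    (L : Ideal A) (hL : L.IsMaximal) (π : A →ₗ[ℂ] E) (hker : ∀ z, π z = 0 ↔ z ∈ L)
    (hn : ∀ z, ‖π z‖ ≤ ‖z‖) (hlift : ∀ (v : E) (ε : ℝ), 0 < ε → ∃ z, π z = v ∧ ‖z‖ < ‖v‖ + ε) :
      (b * (a * x * b + c * x * d) * a + d * (a * x * b + c * x * d) * c) * x -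
        x * (b * (a * x * b + c * x * d) * a + d * (a * x * b + c * x * d) * c) ∈ L := by
  have hsurj : ∀ v, ∃ z, π z = v := fun v => (hlift v 1 one_pos).imp fun z hz => hz.1
  choose σ hσ using hsurj
  have hwd : ∀ y z z', π z = π z' → π (y * z) = π (y * z') := by
    intro y z z' h
    rw [← sub_eq_zero, ← map_sub, hker] at h ⊢
    rw [← mul_sub]
    exact L.mul_mem_left y h
  let lin : A → (E →ₗ[ℂ] E) := fun y =>
    { toFun := fun v => π (y * σ v)
      map_add' := fun v w => by
        rw [← map_add, ← mul_add]
        exact hwd _ _ _ (by simp [hσ])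
      map_smul' := fun t v => by
        rw [← map_smul, ← mul_smul_comm]
        exact hwd _ _ _ (by simp [hσ]) }
  have hlin : ∀ y z, lin y (π z) = π (y * z) := fun y z => hwd _ _ _ (by simp [hσ])
  have hbd : ∀ y v, ‖lin y v‖ ≤ ‖y‖ * ‖v‖ := by
    intro y v
    apply le_of_forall_pos_le_add
    intro ε hε
    have hpos : 0 < ‖y‖ + 1 := by positivity
    obtain ⟨z, hz, hzn⟩ := hlift v (ε / (‖y‖ + 1)) (by positivity)
    rw [← hz, hlin, hz]
    calc ‖π (y * z)‖ ≤ ‖y * z‖ := hn _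
      _ ≤ ‖y‖ * ‖z‖ := norm_mul_le _ _
      _ ≤ ‖y‖ * (‖v‖ + ε / (‖y‖ + 1)) := by gcongr
      _ = ‖y‖ * ‖v‖ + (‖y‖ / (‖y‖ + 1)) * ε := by field_simp
      _ ≤ ‖y‖ * ‖v‖ + 1 * ε := by
        gcongr
        rw [div_le_one hpos]; linarith
      _ = ‖y‖ * ‖v‖ + ε := by rw [one_mul]
  let ρ : A →ₐ[ℂ] (E →L[ℂ] E) := AlgHom.ofLinearMap
    { toFun := fun y => (lin y).mkContinuous ‖y‖ (hbd y)
      map_add' := by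
        intro y y'
        ext v
        obtain ⟨z, rfl⟩ : ∃ z, π z = v := ⟨σ v, hσ v⟩
        simp [hlin, add_mul]
      map_smul' := by
        intro t y
        ext v
        obtain ⟨z, rfl⟩ : ∃ z, π z = v := ⟨σ v, hσ v⟩
        simp [hlin] }
    (by
      ext v
      obtain ⟨z, rfl⟩ : ∃ z, π z = v := ⟨σ v, hσ v⟩
      simp [hlin])
    (by
      intro y y'
      ext v
      obtain ⟨z, rfl⟩ : ∃ z, π z = v := ⟨σ v, hσ v⟩
      simp [hlin, mul_assoc])
  have hρ : ∀ y z, ρ y (π z) = π (y * z) := fun y z => hlin y z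
  have hρcont : Continuous ρ := by
    have : ∀ y, ‖ρ y‖ ≤ 1 * ‖y‖ := fun y => by
      rw [one_mul]
      exact LinearMap.mkContinuous_norm_le (lin y) (norm_nonneg y) (hbd y)
    exact AddMonoidHomClass.continuous_of_bound ρ 1 this
  have hρirr : ∀ ζ : E, ζ ≠ 0 → ∀ η : E, ∃ y : A, ρ y ζ = η := by
    intro ζ hζ η
    obtain ⟨z, rfl⟩ : ∃ z, π z = ζ := ⟨σ ζ, hσ ζ⟩
    obtain ⟨w, rfl⟩ : ∃ z, π z = η := ⟨σ η, hσ η⟩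
    have hz : z ∉ L := fun hz => hζ ((hker z).mpr hz)
    have htop : L ⊔ Ideal.span {z} = ⊤ := by
      apply hL.out.2
      rw [left_lt_sup]
      intro hle
      exact hz (hle (Ideal.subset_span rfl))
    have hw : w ∈ L ⊔ Ideal.span {z} := htop ▸ Submodule.mem_top
    obtain ⟨m, hm, n, hn, hmn⟩ := Submodule.mem_sup.mp hw
    obtain ⟨y, hy⟩ := Ideal.mem_span_singleton'.mp hn
    refine ⟨y, ?_⟩
    rw [hρ, hy, ← hmn, map_add, (hker m).mpr hm, zero_add]
  obtain ⟨k1, k2⟩ := parts12 a b c d hS ρ hρcont hρirr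
  have hcomm : ρ ((b * (a * x * b + c * x * d) * a + d * (a * x * b + c * x * d) * c) * x -
        x * (b * (a * x * b + c * x * d) * a + d * (a * x * b + c * x * d) * c)) = 0 := by
    simp only [map_sub, map_add, map_mul]
    by_cases hdim : Module.finrank ℂ E = 2
    · rcases k2 hdim with ⟨μ, hμ⟩ | ⟨μ, hμ⟩
      · rw [hμ, smul_mul_assoc, mul_smul_comm, sub_self]
      · rw [hμ, smul_mul_assoc, mul_smul_comm, one_mul, mul_one, sub_self]
    · obtain ⟨μ, hμ⟩ := k1 hdim
      rw [hμ, smul_mul_assoc, mul_smul_comm, sub_self]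
  have := congrArg (fun T : E →L[ℂ] E => T (π 1)) hcomm
  rw [← hker]
  simp only [hρ, mul_one] at this
  exact this

theorem part3 (a b c d : A)
    (hS : SpectrallyBounded (fun x : A => a * x * b + c * x * d)) (x : A) :
      (b * (a * x * b + c * x * d) * a + d * (a * x * b + c * x * d) * c) * x -
        x * (b * (a * x * b + c * x * d) * a + d * (a * x * b + c * x * d) * c) ∈
          jacobsonRadical A := by
  unfold jacobsonRadical Ideal.jacobson
  rw [Submodule.mem_sInf]
  rintro L ⟨-, hL⟩
  have hcl : IsClosed (L : Set A) := hL.isClosed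
  let M : Submodule ℂ A := L.restrictScalars ℂ
  have hMcl : IsClosed (M : Set A) := hcl
  exact part3_core a b c d hS x L hL M.mkQ (fun z => Submodule.Quotient.mk_eq_zero M)
    (fun z => Submodule.Quotient.norm_mk_le M z)
    (fun v ε hε => Submodule.Quotient.norm_mk_lt v hε)

end final_rep

/-- **Corollary 3.9.** Let `A` be a unital complex Banach algebra, let
`S = M_{a,b} + M_{c,d}` be a spectrally bounded elementary operator on `A` of
length `2`, and set `S* = M_{b,a} + M_{d,c}`.  Let `ρ` be an irreducible
representation of `A` on a complex Banach space `E`.  If `dim E ≠ 2` then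
`S_ρ* S_ρ` is a scalar multiple of the identity map; if `dim E = 2` then either
`S_ρ* S_ρ` is a scalar multiple of the identity map or there is `μ ∈ ℂ` with
`S_ρ*(S_ρ(z)) = μ·Tr(z)·I` for all `z ∈ ρ(A)`.  In either case
`[S*(S(x)), x] ∈ rad A` for every `x ∈ A`. -/
theorem spectrally_bounded_length_two_star_composition
    {A : Type*} [NormedRing A] [NormedAlgebra ℂ A] [CompleteSpace A]
    {E : Type*} [NormedAddCommGroup E] [NormedSpace ℂ E] [CompleteSpace E]
    (a b c d : A)
    (hSlen : ∀ (m : ℕ) (u v : Fin m → A),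
      (∀ x : A, a * x * b + c * x * d = ∑ i, u i * x * v i) → 2 ≤ m)
    (hS : SpectrallyBounded (fun x : A => a * x * b + c * x * d))
    (ρ : A →ₐ[ℂ] (E →L[ℂ] E)) (hρcont : Continuous ρ)
    (hρirr : ∀ ζ : E, ζ ≠ 0 → ∀ η : E, ∃ y : A, ρ y ζ = η) :
    (Module.finrank ℂ E ≠ 2 →
      ∃ μ : ℂ, ∀ x : A,
        ρ b * (ρ a * ρ x * ρ b + ρ c * ρ x * ρ d) * ρ a +
          ρ d * (ρ a * ρ x * ρ b + ρ c * ρ x * ρ d) * ρ c = μ • ρ x) ∧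
    (Module.finrank ℂ E = 2 →
      (∃ μ : ℂ, ∀ x : A,
        ρ b * (ρ a * ρ x * ρ b + ρ c * ρ x * ρ d) * ρ a +
          ρ d * (ρ a * ρ x * ρ b + ρ c * ρ x * ρ d) * ρ c = μ • ρ x) ∨
      (∃ μ : ℂ, ∀ x : A,
        ρ b * (ρ a * ρ x * ρ b + ρ c * ρ x * ρ d) * ρ a +
          ρ d * (ρ a * ρ x * ρ b + ρ c * ρ x * ρ d) * ρ c =
            (μ * LinearMap.trace ℂ E (ρ x).toLinearMap) • (1 : E →L[ℂ] E))) ∧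
    (∀ x : A,
      (b * (a * x * b + c * x * d) * a + d * (a * x * b + c * x * d) * c) * x -
        x * (b * (a * x * b + c * x * d) * a + d * (a * x * b + c * x * d) * c) ∈
          jacobsonRadical A) := by
  obtain ⟨h1, h2⟩ := parts12 a b c d hS ρ hρcont hρirr
  exact ⟨h1, h2, part3 a b c d hS⟩
end

section
/- Let n ≥ 3 and let S = M_{a,b} + M_{c,d} be a spectrally bounded elementary operator of length 2 on the matrix algebra A = M_n(ℂ). Then (Sx)³ = 0 for every x ∈ A, and S* S = 0, where S* = M_{b,a} + M_{d,c}. -/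
open scoped ENNReal NNReal

open Matrix in
lemma aux_nil_of_sr {n : ℕ} (A : Matrix (Fin n) (Fin n) ℂ) (h : spectralRadius ℂ A = 0) :
    IsNilpotent A := by
  have h0 : ∀ k ∈ spectrum ℂ A, k = 0 := by
    intro k hk
    have : (‖k‖₊ : ENNReal) ≤ spectralRadius ℂ A := le_iSup₂_of_le k hk le_rfl
    rw [h] at this
    simpa using this
  have hs := IsAlgClosed.splits A.charpoly
  have hr : ∀ k ∈ A.charpoly.roots, k = 0 := by
    intro k hk
    apply h0
    rw [Matrix.mem_spectrum_iff_isRoot_charpoly]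
    exact (Polynomial.mem_roots'.1 hk).2
  have hr2 := Multiset.eq_replicate_card.2 hr
  have h3 := hs.eq_prod_roots_of_monic A.charpoly_monic
  rw [hr2] at h3
  simp at h3
  refine ⟨Multiset.card A.charpoly.roots, ?_⟩
  have := A.aeval_self_charpoly
  rw [h3] at this
  simpa using this

lemma aux_sr_of_nil {n : ℕ} (A : Matrix (Fin n) (Fin n) ℂ) (h : A * A = 0) :
    spectralRadius ℂ A = 0 := by
  simp only [spectralRadius, ENNReal.iSup_eq_zero]
  intro k hk
  have h1 : k ^ 2 ∈ spectrum ℂ (A ^ 2) := spectrum.pow_mem_pow A 2 hk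
  rw [pow_two A, h] at h1
  by_contra hne
  have hk0 : k ≠ 0 := by simpa using hne
  rw [spectrum.mem_iff] at h1
  apply h1
  rw [sub_zero]
  exact (IsUnit.mk0 (k^2) (pow_ne_zero 2 hk0)).map (algebraMap ℂ _)

open Matrix in
lemma aux_open {n : ℕ} (T : Matrix (Fin n) (Fin n) ℂ) (O : Set (Fin n → ℂ))
    (hO : IsOpen O) (x0 : Fin n → ℂ) (hx0 : x0 ∈ O)
    (h : ∀ x ∈ O, ∀ y : Fin n → ℂ, y ⬝ᵥ x = 0 → y ⬝ᵥ (T *ᵥ x) = 0) :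
    ∃ k : ℂ, T = k • (1 : Matrix (Fin n) (Fin n) ℂ) := by
  have hQ : ∀ x ∈ O, ∀ i j, x i * (T *ᵥ x) j = x j * (T *ᵥ x) i := by
    intro x hx i j
    have := h x hx (Pi.single j (x i) - Pi.single i (x j)) (by
      simp [sub_dotProduct, mul_comm])
    simp only [sub_dotProduct, single_dotProduct] at this
    linear_combination this
  have hall : ∀ u : Fin n → ℂ, ∀ i j, u i * (T *ᵥ u) j = u j * (T *ᵥ u) i := by
    intro u i j
    have c1 : Filter.Tendsto (fun z : ℂ => x0 + z • u) (nhds 0) (nhds x0) := by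
      have : Continuous (fun z : ℂ => x0 + z • u) := by fun_prop
      simpa using this.tendsto 0
    have c2 : Filter.Tendsto (fun z : ℂ => x0 - z • u) (nhds 0) (nhds x0) := by
      have : Continuous (fun z : ℂ => x0 - z • u) := by fun_prop
      simpa using this.tendsto 0
    have e1 := c1.eventually (hO.mem_nhds hx0)
    have e2 := c2.eventually (hO.mem_nhds hx0)
    have e3 : ∀ᶠ z : ℂ in nhdsWithin 0 {0}ᶜ, z ≠ 0 := eventually_mem_nhdsWithin
    obtain ⟨z, ⟨h1, h2⟩, hz⟩ := (((e1.and e2).filter_mono nhdsWithin_le_nhds).and e3).exists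
    have q1 := hQ _ h1 i j
    have q2 := hQ _ h2 i j
    have q0 := hQ _ hx0 i j
    simp only [mulVec_add, mulVec_sub, mulVec_smul, Pi.add_apply, Pi.sub_apply, Pi.smul_apply,
      smul_eq_mul] at q1 q2
    have : z ^ 2 * (u i * (T *ᵥ u) j) = z ^ 2 * (u j * (T *ᵥ u) i) := by
      linear_combination (q1 + q2 - 2 * q0) / 2
    exact mul_left_cancel₀ (pow_ne_zero 2 hz) this
  rcases Nat.eq_zero_or_pos n with rfl | hn
  · exact ⟨0, Subsingleton.elim _ _⟩
  have off : ∀ i j, i ≠ j → T i j = 0 := by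
    intro i j hij
    have := hall (Pi.single j 1) j i
    simpa [hij] using this
  refine ⟨T ⟨0, hn⟩ ⟨0, hn⟩, ?_⟩
  have dg : ∀ i j, T i i = T j j := by
    intro i j
    by_cases hij : i = j
    · rw [hij]
    have := hall (Pi.single i 1 + Pi.single j 1) i j
    simp [mulVec_add, hij, Ne.symm hij, off i j hij, off j i (Ne.symm hij)] at this
    exact this.symm
  ext i j
  by_cases hij : i = j
  · subst hij; simp [dg i ⟨0, hn⟩]
  · simp [hij, off i j hij]

open Matrix in
lemma aux_perp {n : ℕ} (T : Matrix (Fin n) (Fin n) ℂ)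
    (h : ∀ x y : Fin n → ℂ, y ⬝ᵥ x = 0 → y ⬝ᵥ (T *ᵥ x) = 0) :
    ∃ k : ℂ, T = k • (1 : Matrix (Fin n) (Fin n) ℂ) :=
  aux_open T Set.univ isOpen_univ 0 trivial (fun x _ y => h x y)

lemma aux_algebra (S Q R S' Q' R' : ℂ) (h1 : S ^ 2 + Q * R = 0) (h2 : S' ^ 2 + Q' * R' = 0)
    (h3 : (S + S') ^ 2 + (Q + Q') * (R + R') = 0) : S * Q' = S' * Q := by
  have : (S * Q' - S' * Q) ^ 2 = 0 := by
    linear_combination Q' ^ 2 * h1 + Q ^ 2 * h2 - Q * Q' * (h3 - h1 - h2)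
  exact sub_eq_zero.1 (pow_eq_zero_iff (two_ne_zero)|>.1 this)

open Matrix in
lemma aux_dual {n : ℕ} (W : Submodule ℂ (Fin n → ℂ)) (x : Fin n → ℂ) (hx : x ∉ W) :
    ∃ w : Fin n → ℂ, w ⬝ᵥ x ≠ 0 ∧ ∀ y ∈ W, w ⬝ᵥ y = 0 := by
  obtain ⟨f, hf, hW⟩ := Submodule.exists_le_ker_of_notMem hx
  have key : ∀ z : Fin n → ℂ, (fun i => f (Pi.single i 1)) ⬝ᵥ z = f z := by
    intro z
    conv_rhs => rw [← Finset.univ_sum_single z, map_sum]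
    refine Finset.sum_congr rfl fun i _ => ?_
    have : Pi.single i (z i) = z i • (Pi.single i (1 : ℂ) : Fin n → ℂ) := by
      rw [← Pi.single_smul]; simp
    rw [this, map_smul, smul_eq_mul, mul_comm]
  refine ⟨fun i => f (Pi.single i 1), ?_, ?_⟩
  · rw [key]; exact hf
  · intro y hy; rw [key]; exact hW hy

lemma aux_final {n : ℕ} (a b c d : Matrix (Fin n) (Fin n) ℂ)
    (hL : ∀ u v : Matrix (Fin n) (Fin n) ℂ, ¬ ∀ x, a * x * b + c * x * d = u * x * v)
    (hr : ∃ k : ℂ, d * a = k • 1) (hp : ∃ k : ℂ, b * a = k • 1) (hs : ∃ k : ℂ, d * c = k • 1) :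
    d * a = 0 ∧ b * a = 0 ∧ d * c = 0 := by
  have flip : ∀ (x y : Matrix (Fin n) (Fin n) ℂ) (k : ℂ), k ≠ 0 → x * y = k • 1 →
      y * x = k • 1 := by
    intro x y k hk h
    have h1 : (k⁻¹ • x) * y = 1 := by rw [smul_mul_assoc, h, smul_smul, inv_mul_cancel₀ hk, one_smul]
    have h2 := mul_eq_one_comm.1 h1
    rw [mul_smul_comm] at h2
    rw [← h2, smul_smul, mul_inv_cancel₀ hk, one_smul]
  obtain ⟨ρ, hr⟩ := hr
  obtain ⟨p, hp⟩ := hp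
  obtain ⟨s, hs⟩ := hs
  have hρ : ρ = 0 := by
    by_contra h
    have h1 := flip _ _ _ h hr
    have h2 : ρ • c = s • a := by
      have : a * d * c = a * (d * c) := mul_assoc _ _ _
      rw [h1, hs] at this
      simpa using this
    have h3 : c = (ρ⁻¹ * s) • a := by
      rw [mul_smul, ← h2, smul_smul, inv_mul_cancel₀ h, one_smul]
    apply hL a (b + (ρ⁻¹ * s) • d)
    intro x
    rw [h3]
    simp [mul_add]
  subst hρ
  rw [zero_smul] at hr
  have hp0 : p = 0 := by
    by_contra h
    have h1 := flip _ _ _ h hp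
    have h2 : d = 0 := by
      have : d * a * b = d * (a * b) := mul_assoc _ _ _
      rw [h1, hr] at this
      simpa [h, eq_comm] using this
    apply hL a b
    simp [h2]
  have hs0 : s = 0 := by
    by_contra h
    have h1 := flip _ _ _ h hs
    have h2 : a = 0 := by
      have : c * d * a = c * (d * a) := mul_assoc _ _ _
      rw [h1, hr] at this
      simpa [h] using this
    apply hL c d
    simp [h2]
  subst hp0 hs0
  simp [hr, hp, hs]

open Matrix in
lemma aux_main_s15 {n : ℕ} (hn : 3 ≤ n) (s q r : Matrix (Fin n) (Fin n) ℂ)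
    (hq : ¬ ∃ k : ℂ, q = k • (1 : Matrix (Fin n) (Fin n) ℂ))
    (h : ∀ x y : Fin n → ℂ, y ⬝ᵥ x = 0 →
      (y ⬝ᵥ (s *ᵥ x)) ^ 2 + (y ⬝ᵥ (q *ᵥ x)) * (y ⬝ᵥ (r *ᵥ x)) = 0) :
    ∃ t : ℂ, (∃ k : ℂ, s - t • q = k • 1) ∧ (∃ k : ℂ, r + t ^ 2 • q = k • 1) := by
  have hu : ∀ x y y' : Fin n → ℂ, y ⬝ᵥ x = 0 → y' ⬝ᵥ x = 0 →
      (y ⬝ᵥ (s *ᵥ x)) * (y' ⬝ᵥ (q *ᵥ x)) = (y' ⬝ᵥ (s *ᵥ x)) * (y ⬝ᵥ (q *ᵥ x)) := by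
    intro x y y' h1 h2
    apply aux_algebra _ _ _ _ _ _ (h x y h1) (h x y' h2)
    simpa only [add_dotProduct] using h x (y + y') (by rw [add_dotProduct, h1, h2, add_zero])
  have hv : ∀ x x' y : Fin n → ℂ, y ⬝ᵥ x = 0 → y ⬝ᵥ x' = 0 →
      (y ⬝ᵥ (s *ᵥ x)) * (y ⬝ᵥ (q *ᵥ x')) = (y ⬝ᵥ (s *ᵥ x')) * (y ⬝ᵥ (q *ᵥ x)) := by
    intro x x' y h1 h2
    apply aux_algebra _ _ _ _ _ _ (h x y h1) (h x' y h2)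
    simpa only [mulVec_add, dotProduct_add] using
      h (x + x') y (by rw [dotProduct_add, h1, h2, add_zero])
  obtain ⟨u, v, huv, hquv⟩ : ∃ u v : Fin n → ℂ, v ⬝ᵥ u = 0 ∧ v ⬝ᵥ (q *ᵥ u) ≠ 0 := by
    by_contra hcon
    push Not at hcon
    exact hq (aux_perp q hcon)
  have hqu : ∀ k : ℂ, q *ᵥ u ≠ k • u := by
    intro k hk; apply hquv; rw [hk, dotProduct_smul, huv, smul_zero]
  set t : ℂ := (v ⬝ᵥ (s *ᵥ u)) / (v ⬝ᵥ (q *ᵥ u)) with ht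
  have htu : ∀ y, y ⬝ᵥ u = 0 → y ⬝ᵥ (s *ᵥ u) = t * (y ⬝ᵥ (q *ᵥ u)) := by
    intro y hy
    have := hu u y v hy huv
    rw [ht]; field_simp; linear_combination this
  set W := Submodule.span ℂ {u, q *ᵥ u} with hW
  have huW : u ∈ W := Submodule.subset_span (by simp)
  have hquW : q *ᵥ u ∈ W := Submodule.subset_span (by simp)
  obtain ⟨e, he⟩ : ∃ e, e ∉ W := by
    by_contra hcon
    push Not at hcon
    have h1 : W = ⊤ := by ext x; simp [hcon x]
    have h2 : Module.finrank ℂ W ≤ 2 := by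
      have := finrank_span_finset_le_card (R := ℂ) ({u, q *ᵥ u} : Finset (Fin n → ℂ))
      have h3 := Finset.card_le_two (a := u) (b := q *ᵥ u)
      simp only [Finset.coe_insert, Finset.coe_singleton] at this
      exact this.trans h3
    rw [h1, finrank_top, Module.finrank_fin_fun] at h2
    omega
  let O : Set (Fin n → ℂ) :=
    {x | LinearIndependent ℂ ![u, x, q *ᵥ u]} ∩ {x | LinearIndependent ℂ ![u, x, q *ᵥ x]}
  have hOo : IsOpen O := by
    have h0 : IsOpen {f : Fin 3 → (Fin n → ℂ) | LinearIndependent ℂ f} :=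
      isOpen_setOfPred_linearIndependent
    refine IsOpen.inter (h0.preimage (f := fun x => ![u, x, q *ᵥ u]) ?_)
      (h0.preimage (f := fun x => ![u, x, q *ᵥ x]) ?_)
    · refine continuous_pi fun i => ?_
      fin_cases i <;> simp <;> fun_prop
    · refine continuous_pi fun i => ?_
      fin_cases i <;> simp <;> fun_prop
  have li : ∀ x z : Fin n → ℂ, LinearIndependent ℂ ![u, x, z] ↔
      (∀ k : ℂ, x ≠ k • u) ∧ ∀ k l : ℂ, z ≠ k • u + l • x := by
    intro x z
    have hu0 : u ≠ 0 := by
      rintro rfl; simp at hquv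
    have e1 : (![u, x, z] : Fin 3 → (Fin n → ℂ)) = Fin.snoc ![u, x] z := by
      ext i; fin_cases i <;> rfl
    rw [e1, linearIndependent_finSnoc, LinearIndependent.pair_iff' hu0]
    simp only [Matrix.range_cons, Matrix.range_empty, Set.union_empty, Set.singleton_union,
      Submodule.mem_span_pair, not_exists, ne_eq]
    simp only [eq_comm]
  obtain ⟨x0, hx0⟩ : ∃ x, x ∈ O := by
    by_contra hcon
    push Not at hcon
    have key : ∀ x, x ∉ W → ∃ k l : ℂ, q *ᵥ x = k • u + l • x := by
      intro x hx
      by_contra h2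
      push Not at h2
      have h1 : ∀ k : ℂ, x ≠ k • u := by
        rintro k rfl; exact hx (W.smul_mem _ huW)
      refine hcon x ⟨(li _ _).2 ⟨h1, ?_⟩, (li _ _).2 ⟨h1, h2⟩⟩
      intro k l hkl
      by_cases hl : l = 0
      · subst hl; exact hqu k (by simpa using hkl)
      · apply hx
        have : x = l⁻¹ • (q *ᵥ u - k • u) := by
          rw [hkl, add_sub_cancel_left, smul_smul, inv_mul_cancel₀ hl, one_smul]
        rw [this]
        exact W.smul_mem _ (W.sub_mem hquW (W.smul_mem _ huW))
    obtain ⟨k, l, h1⟩ := key e he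
    obtain ⟨k', l', h2⟩ := key (e + u) (fun hh => he (by simpa using W.sub_mem hh huW))
    rw [mulVec_add, h1] at h2
    have h3 : q *ᵥ u = (k' - k + l') • u + (l' - l) • e := by
      have : q *ᵥ u = k' • u + l' • (e + u) - (k • u + l • e) := by rw [← h2]; abel
      rw [this]; module
    by_cases hl : l' - l = 0
    · rw [hl, zero_smul, add_zero] at h3
      exact hqu _ h3
    · apply he
      have : e = (l' - l)⁻¹ • (q *ᵥ u - (k' - k + l') • u) := by
        rw [h3, add_sub_cancel_left, smul_smul, inv_mul_cancel₀ hl, one_smul]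
      rw [this]
      exact W.smul_mem _ (W.sub_mem hquW (W.smul_mem _ huW))
  have hT : ∃ k : ℂ, s - t • q = k • (1 : Matrix (Fin n) (Fin n) ℂ) := by
    apply aux_open _ O hOo x0 hx0
    rintro x ⟨hx1, hx2⟩ y hy
    have hx1 := ((li _ _).1 hx1).2
    have hx2 := ((li _ _).1 hx2).2
    have dual : ∀ z : Fin n → ℂ, (∀ k l : ℂ, z ≠ k • u + l • x) →
        ∃ w : Fin n → ℂ, w ⬝ᵥ z ≠ 0 ∧ w ⬝ᵥ u = 0 ∧ w ⬝ᵥ x = 0 := by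
      intro z hz
      obtain ⟨w, h1, h2⟩ := aux_dual (Submodule.span ℂ {u, x}) z (by
        rw [Submodule.mem_span_pair]
        rintro ⟨k, l, hkl⟩
        exact hz k l hkl.symm)
      exact ⟨w, h1, h2 _ (Submodule.subset_span (by simp)), h2 _ (Submodule.subset_span (by simp))⟩
    obtain ⟨w1, a1, a2, a3⟩ := dual _ hx1
    obtain ⟨w2, b1, b2, b3⟩ := dual _ hx2
    obtain ⟨w, c1, c2, c3, c4⟩ : ∃ w : Fin n → ℂ, w ⬝ᵥ (q *ᵥ u) ≠ 0 ∧ w ⬝ᵥ (q *ᵥ x) ≠ 0 ∧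
        w ⬝ᵥ u = 0 ∧ w ⬝ᵥ x = 0 := by
      by_cases g1 : w1 ⬝ᵥ (q *ᵥ x) = 0
      · by_cases g2 : w2 ⬝ᵥ (q *ᵥ u) = 0
        · exact ⟨w1 + w2, by simp [add_dotProduct, *], by simp [add_dotProduct, *],
            by simp [add_dotProduct, *], by simp [add_dotProduct, *]⟩
        · exact ⟨w2, g2, b1, b2, b3⟩
      · exact ⟨w1, a1, g1, a2, a3⟩
    have d1 := htu w c3
    have d2 := hv u x w c3 c4
    have d3 : w ⬝ᵥ (s *ᵥ x) = t * (w ⬝ᵥ (q *ᵥ x)) := by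
      apply mul_right_cancel₀ c1
      rw [← d2, d1]; ring
    have d4 := hu x y w hy c4
    rw [d3] at d4
    have d5 : y ⬝ᵥ (s *ᵥ x) = t * (y ⬝ᵥ (q *ᵥ x)) := by
      apply mul_right_cancel₀ c2
      rw [d4]; ring
    rw [sub_mulVec, dotProduct_sub, d5, smul_mulVec, dotProduct_smul, smul_eq_mul, sub_self]
  refine ⟨t, hT, ?_⟩
  obtain ⟨k, hk⟩ := hT
  have hsq : ∀ x y : Fin n → ℂ, y ⬝ᵥ x = 0 → y ⬝ᵥ (s *ᵥ x) = t * (y ⬝ᵥ (q *ᵥ x)) := by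
    intro x y hxy
    have : s = t • q + k • 1 := by rw [← hk]; abel
    rw [this]
    simp [add_mulVec, smul_mulVec, hxy]
  have hprod : ∀ x y : Fin n → ℂ, y ⬝ᵥ x = 0 →
      (y ⬝ᵥ (q *ᵥ x)) * (y ⬝ᵥ ((r + t ^ 2 • q) *ᵥ x)) = 0 := by
    intro x y hxy
    have h1 := h x y hxy
    rw [hsq x y hxy] at h1
    simp only [add_mulVec, smul_mulVec, dotProduct_add, dotProduct_smul, smul_eq_mul]
    linear_combination h1
  apply aux_open _ O hOo x0 hx0
  rintro x ⟨-, hx2⟩ y hy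
  have hx2 := ((li _ _).1 hx2).2
  obtain ⟨w, h1, h2⟩ := aux_dual (Submodule.span ℂ {x}) (q *ᵥ x) (by
        rw [Submodule.mem_span_singleton]
        rintro ⟨k, hkl⟩
        exact hx2 0 k (by simp [hkl]))
  have h2 := h2 x (Submodule.subset_span (by simp))
  have e1 := hprod x y hy
  have e2 := hprod x w h2
  have e3 := hprod x (w + y) (by rw [add_dotProduct, h2, hy, add_zero])
  have e4 := (mul_eq_zero.1 e2).resolve_left h1
  rw [add_dotProduct, add_dotProduct, e4] at e3
  have : (w ⬝ᵥ (q *ᵥ x)) * (y ⬝ᵥ ((r + t ^ 2 • q) *ᵥ x)) = 0 := by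
    linear_combination e3 - e1
  exact (mul_eq_zero.1 this).resolve_left h1

lemma aux_concl {n : ℕ} (a b c d : Matrix (Fin n) (Fin n) ℂ)
    (h : d * a = 0 ∧ b * a = 0 ∧ d * c = 0) :
    (∀ x : Matrix (Fin n) (Fin n) ℂ, (a * x * b + c * x * d) ^ 3 = 0) ∧
    (∀ x : Matrix (Fin n) (Fin n) ℂ,
      b * (a * x * b + c * x * d) * a + d * (a * x * b + c * x * d) * c = 0) := by
  obtain ⟨h1, h2, h3⟩ := h
  have k1 : ∀ z, d * (a * z) = 0 := fun z => by rw [← mul_assoc, h1, zero_mul]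
  have k2 : ∀ z, b * (a * z) = 0 := fun z => by rw [← mul_assoc, h2, zero_mul]
  have k3 : ∀ z, d * (c * z) = 0 := fun z => by rw [← mul_assoc, h3, zero_mul]
  constructor <;> intro x <;> simp [pow_succ, mul_add, add_mul, mul_assoc, k1, k2, k3, h1, h2, h3]

open Matrix in
lemma aux_rank_one {n : ℕ} (a b c d : Matrix (Fin n) (Fin n) ℂ)
    (hS : SpectrallyBounded
      (fun x : Matrix (Fin n) (Fin n) ℂ => a * x * b + c * x * d))
    (x y : Fin n → ℂ) (hxy : y ⬝ᵥ x = 0) :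
    y ⬝ᵥ ((b * a + d * c) *ᵥ x) = 0 ∧
    (y ⬝ᵥ ((d * c) *ᵥ x)) ^ 2 + (y ⬝ᵥ ((b * c) *ᵥ x)) * (y ⬝ᵥ ((d * a) *ᵥ x)) = 0 := by
  obtain ⟨M, hM⟩ := hS
  have h1 := hM (vecMulVec x y)
  rw [aux_sr_of_nil (vecMulVec x y) (by rw [vecMulVec_mul_vecMulVec, hxy]; simp), mul_zero] at h1
  have h2 := aux_nil_of_sr _ (le_antisymm h1 bot_le)
  simp only at h2
  have e : ∀ α β : Matrix (Fin n) (Fin n) ℂ, α * vecMulVec x y * β =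
      vecMulVec (α *ᵥ x) (y ᵥ* β) := by
    intro α β; rw [mul_vecMulVec, vecMulVec_mul]
  have t1 := (Matrix.isNilpotent_trace_of_isNilpotent h2).eq_zero
  have t2 := (Matrix.isNilpotent_trace_of_isNilpotent (h2.pow_of_pos two_ne_zero)).eq_zero
  have f : ∀ α β : Matrix (Fin n) (Fin n) ℂ, (α *ᵥ x) ⬝ᵥ (y ᵥ* β) = y ⬝ᵥ ((β * α) *ᵥ x) := by
    intro α β
    rw [dotProduct_comm, ← dotProduct_mulVec, mulVec_mulVec]
  have f' : ∀ α β : Matrix (Fin n) (Fin n) ℂ, (y ᵥ* β) ⬝ᵥ (α *ᵥ x) = y ⬝ᵥ ((β * α) *ᵥ x) := by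
    intro α β
    rw [← dotProduct_mulVec, mulVec_mulVec]
  simp only [e, trace_add, trace_vecMulVec, f] at t1
  simp only [e, pow_two, mul_add, add_mul, vecMulVec_mul_vecMulVec, f', trace_add, trace_smul,
    trace_vecMulVec, f, smul_dotProduct, dotProduct_smul, smul_eq_mul] at t2
  refine ⟨by rw [add_mulVec, dotProduct_add]; exact t1, ?_⟩
  have t3 := eq_neg_of_add_eq_zero_left t1
  rw [t3] at t2
  linear_combination t2 / 2

theorem spectrally_bounded_length_two_matrix_algebra
    {n : ℕ} (hn : 3 ≤ n) (a b c d : Matrix (Fin n) (Fin n) ℂ)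
    (hSlen : ∀ (m : ℕ) (u v : Fin m → Matrix (Fin n) (Fin n) ℂ),
      (∀ x : Matrix (Fin n) (Fin n) ℂ, a * x * b + c * x * d = ∑ i, u i * x * v i) →
        2 ≤ m)
    (hS : SpectrallyBounded
      (fun x : Matrix (Fin n) (Fin n) ℂ => a * x * b + c * x * d)) :
    (∀ x : Matrix (Fin n) (Fin n) ℂ, (a * x * b + c * x * d) ^ 3 = 0) ∧
    (∀ x : Matrix (Fin n) (Fin n) ℂ,
      b * (a * x * b + c * x * d) * a + d * (a * x * b + c * x * d) * c = 0) := by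
  have hL : ∀ u v : Matrix (Fin n) (Fin n) ℂ, ¬ ∀ x, a * x * b + c * x * d = u * x * v := by
    intro u v h
    have := hSlen 1 (fun _ => u) (fun _ => v) (by simpa using h)
    omega
  have h1 := aux_rank_one a b c d hS
  obtain ⟨l, hl⟩ := aux_perp _ (fun x y h => (h1 x y h).1)
  by_cases hq : ∃ k : ℂ, b * c = k • (1 : Matrix (Fin n) (Fin n) ℂ)
  · have hs : ∃ k : ℂ, d * c = k • (1 : Matrix (Fin n) (Fin n) ℂ) := by
      apply aux_perp
      intro x y hxy
      obtain ⟨k, hk⟩ := hq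
      have := (h1 x y hxy).2
      rw [hk] at this
      simpa [Matrix.smul_mulVec, hxy] using this
    have hp : ∃ k : ℂ, b * a = k • (1 : Matrix (Fin n) (Fin n) ℂ) := by
      obtain ⟨k, hk⟩ := hs
      exact ⟨l - k, by rw [sub_smul, ← hl, ← hk]; abel⟩
    have := aux_concl c d a b (aux_final c d a b (fun u v h => hL u v (by
      intro x; rw [← h x, add_comm])) hq hs hp)
    constructor
    · intro x; rw [add_comm]; exact this.1 x
    · intro x; rw [add_comm (a * x * b), add_comm (b * _ * a)]; exact this.2 x
  · obtain ⟨t, ⟨k, hk⟩, ⟨k', hk'⟩⟩ := aux_main_s15 hn (d * c) (b * c) (d * a) hq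
      (fun x y h => (h1 x y h).2)
    have hfun : ∀ x, (a + t • c) * x * b + c * x * (d - t • b) = a * x * b + c * x * d := by
      intro x
      simp [add_mul, mul_sub]
    have hfun' : ∀ x, b * x * (a + t • c) + (d - t • b) * x * c = b * x * a + d * x * c := by
      intro x
      simp [mul_add, sub_mul]
    have hba : b * a = l • 1 - d * c := by rw [← hl]; abel
    have hdc : d * c = k • 1 + t • (b * c) := by rw [← hk]; abel
    have hda : d * a = k' • 1 - t ^ 2 • (b * c) := by rw [← hk']; abel
    have := aux_concl _ _ _ _ (aux_final (a + t • c) b c (d - t • b)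
      (fun u v h => hL u v (by intro x; rw [← h x, hfun]))
      ⟨k' + 2 * t * k - t * l, by
        simp only [mul_add, sub_mul, mul_smul_comm, smul_mul_assoc]
        rw [hba, hda, hdc]; module⟩
      ⟨l - k, by
        simp only [mul_add, mul_smul_comm]
        rw [hba, hdc]; module⟩
      ⟨k, by rw [sub_mul, smul_mul_assoc, hk]⟩)
    simpa only [hfun, hfun'] using this
end
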